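/- arXiv:2510.16649 — 2 statements merged into one kernel-verified Lean document; each statement's English description precedes it below -/
import Mathlib

section
/- Fix an integer m ≥ 1. There exists a constant C_m such that for every nonzero integer d and every B ≥ |d|, the number of homogeneous binary forms f = Σ_{i=0}^{2m} a_i x^i y^{2m−i} with integer coefficients satisfying |a_i| ≤ B for all i, for which the curve d z² = f(x,y) has a point of odd degree, is at most C_m · (1 − 1/(2m))^{|S_d|} · B^{2m+1}, where S_d := {p prime : p divides d and p² does not divide d}. -/
/-!
A prime `p` exactly dividing `d` obstructs points of odd degree on `d z² = f(x,y)` as soon as the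
reduction of `f` modulo `p` has no nontrivial zero over an extension of `𝔽_p` of odd degree: a
number field of odd degree has a place above `p` with odd ramification index and odd residue degree,
and there a primitive value of `f` is a unit while `d w²` has odd valuation
(`not_hasOddDegPoint_of_local`).

For `m ≥ 2` this local condition is enough. Forms that modulo `p` are a nonzero constant times an
irreducible polynomial of degree `2m`, or times a product of two irreducible polynomials of suitable
even degrees, have proportion strictly more than `1/(2m)` once `p` is large (`local_density`), and
the Chinese remainder theorem applies because `∏_{p ∈ S_d} p ≤ |d| ≤ B` (`crt_count`,
`main_ge_two`).

For `m = 1` the irreducible quadratic forms modulo `p` have proportion only about `1/2 - 1/p`, and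
the resulting losses `∏ (1 + 1/p)` are not bounded. They are recovered from primes not dividing `d`.
Let `D = a₁² - 4 a₂ a₀` be the discriminant, and suppose `a₂ ≠ 0`. A point of odd degree forces `D`
to be a square modulo every odd `p ∈ S_d`, and forces `D` not to be exactly divisible by any odd
prime `q` modulo which `a₂ d` is a nonsquare (`disc_isSquare_of_point`, `not_point_of_disc`). With
`a₂` and `a₁` fixed, Brun's sieve (`brun_sieve`) bounds the number of admissible `a₀`; the squares
modulo the `p ∈ S_d` are equidistributed by a Pólya–Vinogradov estimate with modulus `∏ p ≤ B`
(`Tame.sum_class_le`). On average over `a₂`, about half of the primes `q` between a multiple of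
`log B` and `exp ((log B)^(1/4))`, up to constants, are available for sieving, by a mean square
estimate for sums of Jacobi symbols (`sum_jacobi_sq_le`). So the sieve saves a fixed power of
`log B`, whereas `∏ (1 + 1/p)` is smaller than any power of `log B`. Elementary estimates for
`∑ 1/p` make this precise (`card_conics_le`).
-/

noncomputable section

/-- A fixed algebraic closure of `ℚ`. -/
abbrev Qbar : Type := AlgebraicClosure ℚ

/-- The curve `b z² = Σ_{i=0}^{D} a_i x^i y^{D−i}` has a point of odd degree: there are a
number field `K` of odd degree over `ℚ` and `u, v, w ∈ K` with `(u,v) ≠ (0,0)` and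
`f(u,v) = b w²`. -/
def HasOddDegPoint (D : ℕ) (b : ℤ) (a : Fin (D + 1) → ℤ) : Prop :=
  ∃ K : IntermediateField ℚ Qbar, FiniteDimensional ℚ ↥K ∧ Odd (Module.finrank ℚ ↥K) ∧
    ∃ u v w : ↥K, (u, v) ≠ (0, 0) ∧
      (∑ i : Fin (D + 1), (a i : ↥K) * u ^ (i : ℕ) * v ^ (D - (i : ℕ))) = (b : ↥K) * w ^ 2

/-! ### Places of odd degree and the local obstruction -/

open NumberField IsDedekindDomain in
/-- Over a rational prime `p`, a number field of odd degree has a place whose ramification index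
and residue degree are both odd, because `∑ e f` is the degree. -/
lemma exists_odd_place (K : Type) [Field K] [NumberField K] (hK : Odd (Module.finrank ℚ K))
    (p : ℕ) (hp : p.Prime) :
    ∃ v : HeightOneSpectrum (𝓞 K), ∃ e f : ℕ, Odd e ∧ Odd f ∧
      v.valuation K (p : K) = WithZero.exp (-(e : ℤ)) ∧ Nat.card (𝓞 K ⧸ v.asIdeal) = p ^ f := by
  classical
  have hpi : Prime (p : ℤ) := Nat.prime_iff_prime_int.mp hp
  let I : Ideal ℤ := Ideal.span {(p : ℤ)}
  have hI0 : I ≠ ⊥ := by simp [I, hp.ne_zero]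
  have hIp : I.IsPrime := (Ideal.span_singleton_prime hpi.ne_zero).mpr hpi
  have hIm : I.IsMaximal := hIp.isMaximal hI0
  let _ : Fintype (I.primesOver (𝓞 K)) := (IsDedekindDomain.primesOver_finite I (𝓞 K)).fintype
  have hsum := Ideal.sum_ramification_inertia_eq_finrank I (𝓞 K)
  rw [RingOfIntegers.rank] at hsum
  obtain ⟨q, hq⟩ : ∃ q : I.primesOver (𝓞 K),
      Odd (q.1.ramificationIdx ℤ * q.1.inertiaDeg ℤ) := by
    by_contra! h
    have : Even (Module.finrank ℚ K) := by
      rw [← hsum]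
      exact Finset.even_sum _ (fun i _ => by simpa using h i)
    exact (Nat.not_even_iff_odd.mpr hK) this
  have hqp : q.1.IsPrime := q.2.1
  have hql : q.1.LiesOver I := q.2.2
  have hmap : I.map (algebraMap ℤ (𝓞 K)) ≠ ⊥ := by
    simp [I, Ideal.map_span, hp.ne_zero]
  have hq0 : q.1 ≠ ⊥ := ne_bot_of_le_ne_bot hmap (Ideal.map_le_of_le_comap (q.1.over_def I).le)
  obtain ⟨he, hf⟩ := Nat.odd_mul.mp hq
  refine ⟨⟨q.1, hqp, hq0⟩, _, _, he, hf, ?_, ?_⟩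
  · have h1 : ((p : K)) = algebraMap (𝓞 K) K (p : 𝓞 K) := by simp
    rw [h1, HeightOneSpectrum.valuation_of_algebraMap,
      HeightOneSpectrum.intValuation_eq_exp_neg_multiplicity _ (by simp [hp.ne_zero]),
      Ideal.IsDedekindDomain.ramificationIdx_eq_multiplicity I q.1 hmap]
    simp [I, Ideal.map_span]
  · have := Ideal.pow_inertiaDeg p q.1
    rw [this, Ideal.absNorm_apply, Submodule.cardQuot_apply]

open NumberField IsDedekindDomain in
/-- Local obstruction: if `p` exactly divides `b` and the reduction of the form modulo `p` has no
nontrivial zero over any extension of `𝔽_p` of odd degree, then `b z² = f(x, y)` has no point of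
odd degree.  At a place with `e` and `f` odd, a primitive value of the form would be a
unit, whereas `b w²` has odd valuation. -/
lemma not_hasOddDegPoint_of_local (m : ℕ) (b : ℤ) (a : Fin (2 * m + 1) → ℤ) (p : ℕ)
    (hp : p.Prime) (hb : (p : ℤ) ∣ b) (hb2 : ¬ (p : ℤ) ^ 2 ∣ b)
    (hloc : ∀ (k : Type) [Field k] (f : ℕ), Odd f → Nat.card k = p ^ f → ∀ u v : k,
      ∑ i : Fin (2 * m + 1), (a i : k) * u ^ (i : ℕ) * v ^ (2 * m - (i : ℕ)) = 0 →
        u = 0 ∧ v = 0) :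
    ¬ HasOddDegPoint (2 * m) b a := by
  rintro ⟨K, hfin, hodd, u, v, w, huv, heq⟩
  have : NumberField K := ⟨⟩
  obtain ⟨P, e, f, he, hf, hval, hcard⟩ := exists_odd_place K hodd p hp
  set V := P.valuation K with hV
  -- scale `u, v` so that they are integral and not both divisible by `P`
  obtain ⟨t, ht0, htu, htv, htm⟩ : ∃ t : K, t ≠ 0 ∧ V (t * u) ≤ 1 ∧ V (t * v) ≤ 1 ∧
      (V (t * u) = 1 ∨ V (t * v) = 1) := by
    rcases le_total (V u) (V v) with h | h
    · have hv : v ≠ 0 := by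
        rintro rfl
        have : V u = 0 := le_antisymm (by simpa using h) zero_le
        exact huv (by simpa using this)
      refine ⟨v⁻¹, inv_ne_zero hv, ?_, by simp [hv], Or.inr (by simp [hv])⟩
      have hV0 : V v ≠ 0 := by simpa using hv
      rw [map_mul, map_inv₀, mul_comm, ← div_eq_mul_inv]
      exact (div_le_one₀ (zero_lt_iff.mpr hV0)).mpr h
    · have hv : u ≠ 0 := by
        rintro rfl
        have : V v = 0 := le_antisymm (by simpa using h) zero_le
        exact huv (by simpa using this)
      refine ⟨u⁻¹, inv_ne_zero hv, by simp [hv], ?_, Or.inl (by simp [hv])⟩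
      have hV0 : V u ≠ 0 := by simpa using hv
      rw [map_mul, map_inv₀, mul_comm, ← div_eq_mul_inv]
      exact (div_le_one₀ (zero_lt_iff.mpr hV0)).mpr h
  obtain ⟨x₁, s₁, h₁⟩ := P.exists_primeCompl_mul_eq_of_integer (t * u) htu
  obtain ⟨x₂, s₂, h₂⟩ := P.exists_primeCompl_mul_eq_of_integer (t * v) htv
  have hVs₁ : V (algebraMap (𝓞 K) K s₁) = 1 :=
    (P.valuation_eq_one_iff_notMem).mpr s₁.2
  have hVs₂ : V (algebraMap (𝓞 K) K s₂) = 1 :=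
    (P.valuation_eq_one_iff_notMem).mpr s₂.2
  set T : K := t * algebraMap (𝓞 K) K s₁ * algebraMap (𝓞 K) K s₂ with hT
  set X : 𝓞 K := x₁ * s₂ with hX
  set Y : 𝓞 K := x₂ * s₁ with hY
  have hXK : algebraMap (𝓞 K) K X = T * u := by
    rw [hX, map_mul, ← h₁, hT]; ring
  have hYK : algebraMap (𝓞 K) K Y = T * v := by
    rw [hY, map_mul, ← h₂, hT]; ring
  have hprim : ¬ (X ∈ P.asIdeal ∧ Y ∈ P.asIdeal) := by
    rintro ⟨hx, hy⟩
    rw [← P.valuation_lt_one_iff_mem (K := K)] at hx hy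
    rcases htm with h | h
    · have : P.valuation K (algebraMap (𝓞 K) K X) = 1 := by
        rw [hX, map_mul, map_mul, ← h₁, map_mul, ← hV, h, hVs₁, hVs₂]; simp
      exact absurd hx (by rw [this]; exact lt_irrefl _)
    · have : P.valuation K (algebraMap (𝓞 K) K Y) = 1 := by
        rw [hY, map_mul, map_mul, ← h₂, map_mul, ← hV, h, hVs₁, hVs₂]; simp
      exact absurd hy (by rw [this]; exact lt_irrefl _)
  set Z : 𝓞 K := ∑ i : Fin (2 * m + 1), (a i : 𝓞 K) * X ^ (i : ℕ) * Y ^ (2 * m - (i : ℕ)) with hZ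
  have hZK : algebraMap (𝓞 K) K Z = (b : K) * (T ^ m * w) ^ 2 := by
    have : (b : K) * (T ^ m * w) ^ 2 = T ^ (2 * m) * ((b : K) * w ^ 2) := by
      rw [mul_pow, ← pow_mul, mul_comm m 2]; ring
    rw [this, ← heq, hZ, map_sum, Finset.mul_sum]
    refine Finset.sum_congr rfl fun i _ => ?_
    have hi : (i : ℕ) + (2 * m - (i : ℕ)) = 2 * m := by have := i.2; omega
    have hTp : T ^ (2 * m) = T ^ (i : ℕ) * T ^ (2 * m - (i : ℕ)) := by rw [← pow_add, hi]
    rw [map_mul, map_mul, map_pow, map_pow, hXK, hYK, map_intCast, hTp, mul_pow T u, mul_pow T v]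
    ring
  by_cases hZP : Z ∈ P.asIdeal
  · apply hprim
    have hmax : P.asIdeal.IsMaximal := P.isMaximal
    let _ : Field (𝓞 K ⧸ P.asIdeal) := Ideal.Quotient.field P.asIdeal
    have := hloc (𝓞 K ⧸ P.asIdeal) f hf hcard (Ideal.Quotient.mk P.asIdeal X)
      (Ideal.Quotient.mk P.asIdeal Y) (by
        have h0 := Ideal.Quotient.eq_zero_iff_mem.mpr hZP
        rw [hZ, map_sum] at h0
        simpa only [map_mul, map_pow, map_intCast] using h0)
    exact ⟨Ideal.Quotient.eq_zero_iff_mem.mp this.1, Ideal.Quotient.eq_zero_iff_mem.mp this.2⟩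
  · -- a unit value is incompatible with the odd valuation of `b`
    have h1 : V (algebraMap (𝓞 K) K Z) = 1 := (P.valuation_eq_one_iff_notMem).mpr hZP
    obtain ⟨b', rfl⟩ := hb
    have hb' : ¬ (p : ℤ) ∣ b' := by
      rintro ⟨c, rfl⟩
      exact hb2 ⟨c, by ring⟩
    have hVb' : V ((b' : ℤ) : K) = 1 := by
      have hcast : ((b' : ℤ) : K) = algebraMap (𝓞 K) K ((b' : ℤ) : 𝓞 K) := by simp
      rw [hcast]
      refine (P.valuation_eq_one_iff_notMem).mpr fun hmem => ?_
      have hpmem : ((p : ℤ) : 𝓞 K) ∈ P.asIdeal := by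
        rw [← P.valuation_lt_one_iff_mem (K := K)]
        have hcp : algebraMap (𝓞 K) K ((p : ℤ) : 𝓞 K) = (p : K) := by simp
        refine lt_of_eq_of_lt (congrArg V hcp) ?_
        rw [hval, ← WithZero.exp_zero, WithZero.exp_lt_exp]
        have := he.pos
        omega
      have hcop : IsCoprime (p : ℤ) b' :=
        (Prime.coprime_iff_not_dvd (Nat.prime_iff_prime_int.mp hp)).mpr hb'
      obtain ⟨r, s, hrs⟩ := hcop
      have h1mem : (1 : 𝓞 K) ∈ P.asIdeal := by
        have : (1 : 𝓞 K) = (r : 𝓞 K) * ((p : ℤ) : 𝓞 K) + (s : 𝓞 K) * ((b' : ℤ) : 𝓞 K) := by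
          exact_mod_cast congrArg (Int.cast : ℤ → 𝓞 K) hrs.symm
        rw [this]
        exact P.asIdeal.add_mem (P.asIdeal.mul_mem_left _ hpmem) (P.asIdeal.mul_mem_left _ hmem)
      exact P.isPrime.ne_top ((Ideal.eq_top_iff_one _).mpr h1mem)
    rw [hZK] at h1
    push_cast at h1
    rw [map_mul, map_mul, map_pow, hVb', hval, mul_one] at h1
    have hne : V (T ^ m * w) ≠ 0 := by
      intro h0
      rw [h0] at h1
      simp at h1
    have hlog := congrArg WithZero.log h1
    rw [WithZero.log_mul (by simp) (pow_ne_zero _ hne), WithZero.log_exp, WithZero.log_pow,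
      WithZero.log_one] at hlog
    obtain ⟨j, rfl⟩ := he
    push_cast at hlog
    simp only [nsmul_eq_mul] at hlog
    push_cast at hlog
    omega

/-! ### Local densities for `m ≥ 2` -/

section

open Polynomial

/-- At least `p^n - n p^(n-1)` elements of `𝔽_{p^n}` have degree `n` over `𝔽_p`, and at most `n` of
them share a minimal polynomial. -/
lemma exists_irreducibles (p : ℕ) [Fact p.Prime] (n : ℕ) (hn : 2 ≤ n) :
    ∃ I : Finset (ZMod p)[X], (∀ g ∈ I, g.Monic ∧ Irreducible g ∧ g.natDegree = n) ∧
      p ^ n ≤ n * I.card + n * p ^ (n - 1) := by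
  classical
  have hp : p.Prime := Fact.out
  let K := GaloisField p n
  let _ : Fintype K := Fintype.ofFinite K
  have hcardK : Fintype.card K = p ^ n := by
    rw [← Nat.card_eq_fintype_card]; exact GaloisField.card p n (by omega)
  have hrank : Module.finrank (ZMod p) K = n := GaloisField.finrank p (by omega)
  have hinteg : ∀ x : K, IsIntegral (ZMod p) x := fun x => Algebra.IsIntegral.isIntegral x
  let S : Finset K := Finset.univ.filter fun x => (minpoly (ZMod p) x).natDegree = n
  let R : Finset K := (Finset.range n).biUnion fun d =>
    if d + 1 < n then ((X ^ p ^ (d + 1) - X : K[X]).roots.toFinset) else ∅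
  have hcover : (Finset.univ : Finset K) ⊆ S ∪ R := by
    intro x _
    by_cases hx : (minpoly (ZMod p) x).natDegree = n
    · exact Finset.mem_union_left _ (by simp [S, hx])
    · apply Finset.mem_union_right
      have hdvd : (minpoly (ZMod p) x).natDegree ∣ n := by
        have := minpoly.degree_dvd (hinteg x)
        rwa [hrank] at this
      have hpos : 0 < (minpoly (ZMod p) x).natDegree := minpoly.natDegree_pos (hinteg x)
      have hle := Nat.le_of_dvd (by omega) hdvd
      obtain ⟨d, hd⟩ : ∃ d, (minpoly (ZMod p) x).natDegree = d + 1 :=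
        ⟨_, (Nat.succ_pred_eq_of_pos hpos).symm⟩
      have hdn : d + 1 < n := by omega
      refine Finset.mem_biUnion.mpr ⟨d, Finset.mem_range.mpr (by omega), ?_⟩
      rw [if_pos hdn, Multiset.mem_toFinset,
        mem_roots (FiniteField.X_pow_card_pow_sub_X_ne_zero K (by omega) hp.one_lt)]
      have hfr : Module.finrank (ZMod p) (IntermediateField.adjoin (ZMod p) {x}) = d + 1 := by
        rw [IntermediateField.adjoin.finrank (hinteg x), hd]
      have hc : Fintype.card (IntermediateField.adjoin (ZMod p) {x}) = p ^ (d + 1) := by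
        rw [Module.card_eq_pow_finrank (K := ZMod p), hfr, ZMod.card]
      have := FiniteField.pow_card (IntermediateField.AdjoinSimple.gen (ZMod p) x)
      rw [hc] at this
      have h2 := congrArg (algebraMap (IntermediateField.adjoin (ZMod p) {x}) K) this
      rw [map_pow, IntermediateField.AdjoinSimple.algebraMap_gen] at h2
      simp [h2]
  have hR : R.card ≤ n * p ^ (n - 1) := by
    refine Finset.card_biUnion_le.trans ?_
    refine (Finset.sum_le_card_nsmul _ _ (p ^ (n - 1)) fun d _ => ?_).trans (by simp)
    split_ifs with h
    · refine (Multiset.toFinset_card_le _).trans ((card_roots' _).trans ?_)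
      rw [FiniteField.X_pow_card_pow_sub_X_natDegree_eq K (by omega) hp.one_lt]
      exact Nat.pow_le_pow_right hp.pos (by omega)
    · simp
  refine ⟨S.image (minpoly (ZMod p)), ?_, ?_⟩
  · intro g hg
    obtain ⟨x, hx, rfl⟩ := Finset.mem_image.mp hg
    exact ⟨minpoly.monic (hinteg x), minpoly.irreducible (hinteg x), (Finset.mem_filter.mp hx).2⟩
  · have h1 : S.card ≤ n * (S.image (minpoly (ZMod p))).card := by
      refine Finset.card_le_mul_card_image _ _ fun g hg => ?_
      obtain ⟨x, hx, rfl⟩ := Finset.mem_image.mp hg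
      have hdeg := (Finset.mem_filter.mp hx).2
      have hne : (minpoly (ZMod p) x).map (algebraMap (ZMod p) K) ≠ 0 :=
        (Polynomial.map_ne_zero_iff (algebraMap (ZMod p) K).injective).mpr (minpoly.ne_zero (hinteg x))
      have hsub : {a ∈ S | minpoly (ZMod p) a = minpoly (ZMod p) x} ⊆
          ((minpoly (ZMod p) x).map (algebraMap (ZMod p) K)).roots.toFinset := by
        intro y hy
        have hy2 := (Finset.mem_filter.mp hy).2
        rw [Multiset.mem_toFinset, mem_roots hne, IsRoot.def, eval_map_algebraMap, ← hy2,
          minpoly.aeval]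
      refine (Finset.card_le_card hsub).trans ((Multiset.toFinset_card_le _).trans
        ((card_roots' _).trans ?_))
      rw [natDegree_map, hdeg]
    have h2 := Finset.card_le_card hcover
    rw [Finset.card_univ, hcardK] at h2
    have h3 := Finset.card_union_le S R
    omega

/-- An irreducible polynomial of even degree has no root in an extension of odd degree. -/
lemma no_root_of_even (p : ℕ) [Fact p.Prime] (k : Type) [Field k] [Algebra (ZMod p) k] [Finite k]
    (hodd : Odd (Module.finrank (ZMod p) k)) (g : (ZMod p)[X]) (hm : g.Monic) (hg : Irreducible g)
    (he : Even g.natDegree) (x : k) : aeval x g ≠ 0 := by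
  intro h0
  have h1 := minpoly.eq_of_irreducible_of_monic hg h0 hm
  have h2 := minpoly.degree_dvd (K := ZMod p) (x := x) (Algebra.IsIntegral.isIntegral x)
  rw [← h1] at h2
  exact (Nat.not_even_iff_odd.mpr hodd) (he.trans_dvd h2)

/-- A form whose dehomogenization is `c g`, with `c ≠ 0` and `g` monic of degree `2m` without roots
in odd-degree extensions of `𝔽_p`, has no nontrivial zero over such extensions. -/
lemma local_of_poly (m : ℕ) (p : ℕ) [Fact p.Prime] (a : Fin (2 * m + 1) → ℤ)
    (c : ZMod p) (hc : c ≠ 0) (g : (ZMod p)[X]) (hgm : g.Monic) (hgd : g.natDegree = 2 * m)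
    (hroot : ∀ (k : Type) [Field k] [Algebra (ZMod p) k] [Finite k],
      Odd (Module.finrank (ZMod p) k) → ∀ x : k, aeval x g ≠ 0)
    (ha : ∀ i : Fin (2 * m + 1), (a i : ZMod p) = (C c * g).coeff i)
    (k : Type) [Field k] (f : ℕ) (hf : Odd f) (hk : Nat.card k = p ^ f) (u v : k)
    (h0 : ∑ i : Fin (2 * m + 1), (a i : k) * u ^ (i : ℕ) * v ^ (2 * m - (i : ℕ)) = 0) :
    u = 0 ∧ v = 0 := by
  have hp : p.Prime := Fact.out
  have hfin : Finite k := Nat.finite_of_card_ne_zero (by rw [hk]; exact pow_ne_zero _ hp.ne_zero)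
  let _ : Fintype k := Fintype.ofFinite k
  have hk' : Fintype.card k = p ^ f := by rw [← Nat.card_eq_fintype_card, hk]
  have hch : CharP k p := charP_of_card_eq_prime_pow hk'
  let _ : Algebra (ZMod p) k := ZMod.algebra k p
  have hfr : Module.finrank (ZMod p) k = f := by
    have := Module.card_eq_pow_finrank (K := ZMod p) (V := k)
    rw [hk', ZMod.card] at this
    exact (Nat.pow_right_injective hp.two_le this).symm
  have hak : ∀ i : Fin (2 * m + 1), (a i : k) = algebraMap (ZMod p) k ((C c * g).coeff i) := by
    intro i; rw [← ha]; simp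
  have hac : algebraMap (ZMod p) k c ≠ 0 := by simpa using hc
  by_cases hv : v = 0
  · refine ⟨?_, hv⟩
    subst hv
    rw [Finset.sum_eq_single (Fin.last (2 * m))] at h0
    · rw [hak] at h0
      have : g.coeff (2 * m) = 1 := by rw [← hgd]; exact hgm
      rw [coeff_C_mul, Fin.val_last, this] at h0
      simp only [mul_one, Nat.sub_self, pow_zero] at h0
      exact eq_zero_of_pow_eq_zero ((mul_eq_zero.mp h0).resolve_left hac)
    · intro i _ hi
      have : (i : ℕ) ≠ 2 * m := fun h => hi (Fin.ext (by simpa using h))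
      have hi2 := i.2
      rw [zero_pow (by omega), mul_zero]
    · simp
  · exfalso
    have key : aeval (u / v) (C c * g) = 0 := by
      have hdeg : (C c * g).natDegree < 2 * m + 1 := by
        rw [natDegree_C_mul hc, hgd]; omega
      rw [aeval_eq_sum_range' hdeg, Finset.sum_range]
      have hv2 : v ^ (2 * m) ≠ 0 := pow_ne_zero _ hv
      apply mul_left_cancel₀ hv2
      rw [mul_zero, ← h0, Finset.mul_sum]
      refine Finset.sum_congr rfl fun i _ => ?_
      have hi2 := i.2
      have hpw : v ^ (2 * m) = v ^ (2 * m - (i : ℕ)) * v ^ (i : ℕ) := by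
        rw [← pow_add, Nat.sub_add_cancel (by omega)]
      rw [hak, Algebra.smul_def, div_pow, hpw]
      field_simp
    rw [map_mul, aeval_C] at key
    exact hroot k (hfr ▸ hf) _ ((mul_eq_zero.mp key).resolve_left hac)

/-- For `m ≥ 2` and `p` large, at most a proportion `1 - 1/(2m)` of forms modulo `p` escape the local
obstruction. Irreducible forms contribute about `1/(2m)` and the products of irreducible factors of
degrees `2` and `2m - 2` a further positive proportion, which absorbs the error terms. -/
lemma local_density (m : ℕ) (hm : 2 ≤ m) : ∃ p₀ : ℕ, ∀ p : ℕ, p.Prime → p₀ ≤ p →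
    ∃ Ω : Finset (Fin (2 * m + 1) → ZMod p),
      ((Ω.card : ℝ) ≤ (1 - 1 / (2 * (m : ℝ))) * (p : ℝ) ^ (2 * m + 1)) ∧
      ∀ a : Fin (2 * m + 1) → ℤ, (fun i => (a i : ZMod p)) ∉ Ω →
        ∀ (k : Type) [Field k] (f : ℕ), Odd f → Nat.card k = p ^ f → ∀ u v : k,
        ∑ i : Fin (2 * m + 1), (a i : k) * u ^ (i : ℕ) * v ^ (2 * m - (i : ℕ)) = 0 →
        u = 0 ∧ v = 0 := by
  classical
  have hm' : (2 : ℝ) ≤ m := by exact_mod_cast hm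
  let h : ℝ → ℝ := fun x => (1 - x) * ((1 - 2 * m * x) / (2 * m) +
    (1 - 2 * x) * (1 - (2 * m - 2) * x) / (4 * (2 * m - 2)))
  have hcont : Continuous h := by fun_prop
  have h0 : 1 / (2 * (m : ℝ)) < h 0 := by
    have : (0 : ℝ) < 1 / (4 * (2 * m - 2)) := by
      apply div_pos one_pos; linarith
    simp only [h]; norm_num at this ⊢; linarith
  have hev : ∀ᶠ x in nhds (0 : ℝ), 1 / (2 * (m : ℝ)) < h x :=
    hcont.continuousAt.eventually (lt_mem_nhds h0)
  obtain ⟨p₀, hp₀⟩ := Filter.eventually_atTop.mp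
    ((tendsto_inv_atTop_nhds_zero_nat (𝕜 := ℝ)).eventually hev)
  refine ⟨max p₀ (2 * m + 2), fun p hp hpp => ?_⟩
  have : Fact p.Prime := ⟨hp⟩
  have hhp := hp₀ p (le_trans (le_max_left _ _) hpp)
  have hpm : 2 * m + 2 ≤ p := le_trans (le_max_right _ _) hpp
  obtain ⟨I, hI, hIc⟩ := exists_irreducibles p (2 * m) (by omega)
  obtain ⟨J, hJ, hJc⟩ := exists_irreducibles p 2 le_rfl
  obtain ⟨L, hL, hLc⟩ := exists_irreducibles p (2 * m - 2) (by omega)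
  let Q : Finset (ZMod p)[X] := (J ×ˢ L).image fun x => x.1 * x.2
  have hassoc : ∀ g h : (ZMod p)[X], g.Monic → h.Monic → Irreducible g → Irreducible h →
      g ∣ h → g = h := fun g h hg hh hgi hhi hd =>
    eq_of_monic_of_associated hg hh (hgi.associated_of_dvd hhi hd)
  have hQc : J.card * L.card ≤ 2 * Q.card := by
    rw [← Finset.card_product]
    refine Finset.card_le_mul_card_image _ _ fun F hF => ?_
    obtain ⟨⟨g, l⟩, hgl, rfl⟩ := Finset.mem_image.mp hF
    rw [Finset.mem_product] at hgl
    have hg := hJ _ hgl.1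
    have hl := hL _ hgl.2
    have hsub : {a ∈ J ×ˢ L | a.1 * a.2 = g * l} ⊆ {(g, l), (l, g)} := by
      rintro ⟨g', l'⟩ hx
      rw [Finset.mem_filter, Finset.mem_product] at hx
      obtain ⟨⟨hx1, hx2⟩, hx3⟩ := hx
      have hg' := hJ _ hx1
      have hl' := hL _ hx2
      simp only at hg' hl' hx3 hg hl
      have hd : g' ∣ g * l := ⟨l', hx3.symm⟩
      rcases (hg'.2.1.prime.dvd_or_dvd hd) with hd | hd
      · have := hassoc _ _ hg'.1 hg.1 hg'.2.1 hg.2.1 hd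
        subst this
        have := mul_left_cancel₀ hg'.1.ne_zero hx3
        simp [this]
      · have := hassoc _ _ hg'.1 hl.1 hg'.2.1 hl.2.1 hd
        subst this
        rw [mul_comm g] at hx3
        have := mul_left_cancel₀ hg'.1.ne_zero hx3
        simp [this]
    exact (Finset.card_le_card hsub).trans Finset.card_le_two
  have hdisj : Disjoint I Q := by
    rw [Finset.disjoint_left]
    intro F hF hFQ
    obtain ⟨⟨g, l⟩, hgl, rfl⟩ := Finset.mem_image.mp hFQ
    rw [Finset.mem_product] at hgl
    rcases (hI _ hF).2.1.isUnit_or_isUnit rfl with hu | hu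
    · exact (hJ _ hgl.1).2.1.not_isUnit hu
    · exact (hL _ hgl.2).2.1.not_isUnit hu
  let G : Finset (ZMod p)[X] := I ∪ Q
  have hG : ∀ g ∈ G, g.Monic ∧ g.natDegree = 2 * m ∧
      ∀ (k : Type) [Field k] [Algebra (ZMod p) k] [Finite k],
      Odd (Module.finrank (ZMod p) k) → ∀ x : k, aeval x g ≠ 0 := by
    intro g hg
    rcases Finset.mem_union.mp hg with hg | hg
    · obtain ⟨h1, h2, h3⟩ := hI g hg
      refine ⟨h1, h3, fun k _ _ _ hodd x => no_root_of_even p k hodd g h1 h2 ?_ x⟩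
      rw [h3]; exact even_two_mul m
    · obtain ⟨⟨g, l⟩, hgl, rfl⟩ := Finset.mem_image.mp hg
      rw [Finset.mem_product] at hgl
      obtain ⟨h1, h2, h3⟩ := hJ _ hgl.1
      obtain ⟨k1, k2, k3⟩ := hL _ hgl.2
      simp only at h1 h2 h3 k1 k2 k3 ⊢
      refine ⟨h1.mul k1, by rw [h1.natDegree_mul k1, h3, k3]; omega, fun k _ _ _ hodd x => ?_⟩
      rw [map_mul]
      refine mul_ne_zero (no_root_of_even p k hodd g h1 h2 (by rw [h3]; exact even_two) x)
        (no_root_of_even p k hodd l k1 k2 (by rw [k3]; exact ⟨m - 1, by omega⟩) x)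
  let U : Finset (ZMod p) := Finset.univ.erase 0
  let coef : ZMod p × (ZMod p)[X] → (Fin (2 * m + 1) → ZMod p) := fun x i => (C x.1 * x.2).coeff i
  let Good := (U ×ˢ G).image coef
  have hinj : Set.InjOn coef (U ×ˢ G : Finset _) := by
    rintro ⟨c, g⟩ h1 ⟨c', g'⟩ h2 heq
    rw [Finset.mem_coe, Finset.mem_product] at h1 h2
    have hc : c ≠ 0 := (Finset.mem_erase.mp h1.1).1
    obtain ⟨hg1, hg2, -⟩ := hG _ h1.2
    obtain ⟨hg1', hg2', -⟩ := hG _ h2.2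
    simp only at hg1 hg2 hg1' hg2'
    have e1 : c = c' := by
      have := congrFun heq (Fin.last _)
      simp only [coef, coeff_C_mul, Fin.val_last] at this
      rw [show g.coeff (2 * m) = 1 by rw [← hg2]; exact hg1,
        show g'.coeff (2 * m) = 1 by rw [← hg2']; exact hg1'] at this
      simpa using this
    subst e1
    have e2 : g = g' := by
      ext i
      by_cases hi : i < 2 * m + 1
      · have := congrFun heq ⟨i, hi⟩
        simp only [coef, coeff_C_mul] at this
        exact mul_left_cancel₀ hc this
      · rw [coeff_eq_zero_of_natDegree_lt (by omega), coeff_eq_zero_of_natDegree_lt (by omega)]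
    rw [e2]
  have hGoodc : Good.card = (p - 1) * (I.card + Q.card) := by
    rw [Finset.card_image_of_injOn hinj, Finset.card_product, Finset.card_union_of_disjoint hdisj,
      Finset.card_erase_of_mem (Finset.mem_univ _), Finset.card_univ, ZMod.card]
  refine ⟨Goodᶜ, ?_, ?_⟩
  · have hcc : (Goodᶜ.card : ℝ) = (p : ℝ) ^ (2 * m + 1) - ((p : ℝ) - 1) * (I.card + Q.card) := by
      rw [Finset.card_compl, Nat.cast_sub (Finset.card_le_univ _), hGoodc]
      rw [Fintype.card_fun, ZMod.card, Fintype.card_fin]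
      push_cast [Nat.cast_sub hp.one_le]
      ring
    rw [hcc]
    have hpR : (0 : ℝ) < p := by exact_mod_cast hp.pos
    have hp1 : (1 : ℝ) ≤ p := by exact_mod_cast hp.one_le
    have hpm' : 2 * (m : ℝ) + 2 ≤ p := by exact_mod_cast hpm
    set x : ℝ := (p : ℝ)⁻¹ with hx
    have hxp : x * p = 1 := inv_mul_cancel₀ hpR.ne'
    have bI : (p : ℝ) ^ (2 * m) * ((1 - 2 * m * x) / (2 * m)) ≤ I.card := by
      have h1 : (p : ℝ) ^ (2 * m) ≤ 2 * m * I.card + 2 * m * (p : ℝ) ^ (2 * m - 1) := by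
        exact_mod_cast hIc
      have h2 : (p : ℝ) ^ (2 * m - 1) = (p : ℝ) ^ (2 * m) * x := by
        rw [← Nat.sub_add_cancel (show 1 ≤ 2 * m by omega), pow_succ, Nat.add_sub_cancel,
          mul_assoc, mul_comm (p : ℝ) x, hxp, mul_one]
      rw [h2] at h1
      rw [← mul_div_assoc, div_le_iff₀ (by linarith)]
      nlinarith
    have bJ : (p : ℝ) ^ 2 * (1 - 2 * x) / 2 ≤ J.card := by
      have h1 : (p : ℝ) ^ 2 ≤ 2 * J.card + 2 * (p : ℝ) ^ (2 - 1) := by exact_mod_cast hJc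
      have h2 : (p : ℝ) ^ (2 - 1) = (p : ℝ) ^ 2 * x := by
        rw [pow_two, mul_assoc, mul_comm (p : ℝ) x, hxp]; simp
      rw [h2] at h1
      linarith
    have bL : (p : ℝ) ^ (2 * m - 2) * (1 - (2 * m - 2) * x) / (2 * m - 2) ≤ L.card := by
      have hcast : ((2 * m - 2 : ℕ) : ℝ) = 2 * m - 2 := by
        rw [Nat.cast_sub (by omega)]; push_cast; ring
      have h1 : (p : ℝ) ^ (2 * m - 2) ≤ (2 * m - 2 : ℕ) * L.card +
        (2 * m - 2 : ℕ) * (p : ℝ) ^ (2 * m - 2 - 1) := by exact_mod_cast hLc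
      have h2 : (p : ℝ) ^ (2 * m - 2 - 1) = (p : ℝ) ^ (2 * m - 2) * x := by
        rw [← Nat.sub_add_cancel (show 1 ≤ 2 * m - 2 by omega), pow_succ, Nat.add_sub_cancel,
          mul_assoc, mul_comm (p : ℝ) x, hxp, mul_one]
      rw [h2, hcast] at h1
      rw [div_le_iff₀ (by linarith)]
      nlinarith
    have bJ0 : 0 ≤ (p : ℝ) ^ 2 * (1 - 2 * x) / 2 := by
      have : 2 * x ≤ 1 := by nlinarith
      have : 0 ≤ 1 - 2 * x := by linarith
      positivity
    have bL0 : 0 ≤ (p : ℝ) ^ (2 * m - 2) * (1 - (2 * m - 2) * x) / (2 * m - 2) := by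
      have h1 : (2 * m - 2) * x ≤ 1 := by
        rw [← hxp, mul_comm x]
        exact mul_le_mul_of_nonneg_right (by linarith) (by positivity)
      have h2 : 0 ≤ 1 - (2 * m - 2) * x := by linarith
      have h3 : (0 : ℝ) ≤ 2 * m - 2 := by linarith
      positivity
    have bQ : (p : ℝ) ^ (2 * m) * ((1 - 2 * x) * (1 - (2 * m - 2) * x) / (4 * (2 * m - 2))) ≤
        Q.card := by
      have h1 : (J.card : ℝ) * L.card ≤ 2 * Q.card := by exact_mod_cast hQc
      have h2 := mul_le_mul bJ bL bL0 (Nat.cast_nonneg _)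
      have h3 : (p : ℝ) ^ (2 * m) = (p : ℝ) ^ 2 * (p : ℝ) ^ (2 * m - 2) := by
        rw [← pow_add]; congr 1; omega
      rw [h3]
      have hne : (2 * (m : ℝ) - 2) ≠ 0 := by
        have : (0 : ℝ) < 2 * m - 2 := by linarith
        exact this.ne'
      calc _ = ((p : ℝ) ^ 2 * (1 - 2 * x) / 2 *
              ((p : ℝ) ^ (2 * m - 2) * (1 - (2 * m - 2) * x) / (2 * m - 2))) / 2 := by
            field_simp; ring
        _ ≤ _ := by linarith
    have hfin : (p : ℝ) ^ (2 * m + 1) * (1 / (2 * m)) ≤ ((p : ℝ) - 1) * (I.card + Q.card) := by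
      have h1 : ((p : ℝ) - 1) = p * (1 - x) := by rw [mul_sub, mul_comm (p : ℝ) x, hxp]; ring
      calc (p : ℝ) ^ (2 * m + 1) * (1 / (2 * m)) ≤ (p : ℝ) ^ (2 * m + 1) * h x := by
            gcongr
        _ = ((p : ℝ) - 1) * ((p : ℝ) ^ (2 * m) * ((1 - 2 * m * x) / (2 * m)) +
              (p : ℝ) ^ (2 * m) * ((1 - 2 * x) * (1 - (2 * m - 2) * x) / (4 * (2 * m - 2)))) := by
            rw [h1, pow_succ]; simp only [h]; ring
        _ ≤ _ := mul_le_mul_of_nonneg_left (add_le_add bI bQ) (by linarith)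
    linarith
  · intro a ha
    rw [Finset.mem_compl, not_not] at ha
    obtain ⟨⟨c, g⟩, hcg, heq⟩ := Finset.mem_image.mp ha
    rw [Finset.mem_product] at hcg
    obtain ⟨h1, h2, h3⟩ := hG _ hcg.2
    intro k _ f hf hk u v h0
    exact local_of_poly m p a c (Finset.mem_erase.mp hcg.1).1 g h1 h2 h3
      (fun i => (congrFun heq i).symm) k f hf hk u v h0

end

/-! ### Counting in boxes and the case `m ≥ 2` -/

lemma abs_card_class_sub_lt (n : ℕ) (r : ℕ) (hr : 0 < r) (c : ℤ) :
    |(((Finset.Icc (-(n : ℤ)) n).filter (fun x => x ≡ c [ZMOD r])).card : ℝ) -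
      (2 * n + 1) / r| < 1 := by
  have hI : Finset.Icc (-(n : ℤ)) n = Finset.Ioc (-(n : ℤ) - 1) n := by
    ext x; simp only [Finset.mem_Icc, Finset.mem_Ioc]; omega
  rw [hI]
  have h := Int.Ioc_filter_modEq_card (-(n : ℤ) - 1) n (r := r) (by exact_mod_cast hr) c
  set x : ℚ := (((n : ℤ) : ℚ) - c) / ((r : ℤ) : ℚ) with hx
  set y : ℚ := (((-(n : ℤ) - 1 : ℤ) : ℚ) - c) / ((r : ℤ) : ℚ) with hy
  have hrq : (0 : ℚ) < ((r : ℤ) : ℚ) := by exact_mod_cast hr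
  have hxy : x - y = (2 * n + 1) / r := by
    rw [hx, hy, ← sub_div]; push_cast; ring
  have hyx : y ≤ x := by
    rw [← sub_nonneg, hxy]; positivity
  have hfl : ⌊y⌋ ≤ ⌊x⌋ := Int.floor_mono hyx
  rw [max_eq_left (by omega)] at h
  have hq : (((Finset.Ioc (-(n : ℤ) - 1) n).filter (fun x => x ≡ c [ZMOD r])).card : ℚ) =
      (⌊x⌋ : ℚ) - ⌊y⌋ := by exact_mod_cast h
  have h1 := Int.floor_le x
  have h2 := Int.lt_floor_add_one x
  have h3 := Int.floor_le y
  have h4 := Int.lt_floor_add_one y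
  have key : |(((Finset.Ioc (-(n : ℤ) - 1) n).filter (fun x => x ≡ c [ZMOD r])).card : ℚ) -
      (2 * n + 1) / r| < 1 := by
    rw [hq, ← hxy, abs_lt]; constructor <;> linarith
  have key' := (Rat.cast_lt (K := ℝ)).mpr key
  push_cast at key'
  exact key'

lemma card_class_le (n M : ℕ) (hM : 0 < M) (c : ℤ) :
    ((Finset.Icc (-(n : ℤ)) n).filter (fun x => x ≡ c [ZMOD M])).card ≤ 2 * n / M + 1 := by
  have h := (abs_lt.mp (abs_card_class_sub_lt n M hM c)).2
  set k := ((Finset.Icc (-(n : ℤ)) n).filter (fun x => x ≡ c [ZMOD M])).card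
  have hMR : (0 : ℝ) < M := by exact_mod_cast hM
  by_contra! hk
  have h1 : (k : ℝ) - 1 < (2 * n + 1) / M := by linarith
  rw [lt_div_iff₀ hMR] at h1
  have h2 : ((2 * n / M + 1 : ℕ) : ℝ) * M ≤ ((k : ℝ) - 1) * M := by
    refine mul_le_mul_of_nonneg_right ?_ hMR.le
    have : ((2 * n / M + 1 + 1 : ℕ) : ℝ) ≤ k := by exact_mod_cast hk
    push_cast at this ⊢; linarith
  have h3 : (2 * n / M + 1) * M < 2 * n + 1 := by exact_mod_cast lt_of_le_of_lt h2 h1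
  have h4 := Nat.lt_div_mul_add (a := 2 * n) hM
  have h5 : (2 * n / M + 1) * M = 2 * n / M * M + M := by ring
  omega

lemma prod_primes_intDvd (T : Finset ℕ) (hT : ∀ p ∈ T, p.Prime) (x : ℤ)
    (h : ∀ p ∈ T, (p : ℤ) ∣ x) : ((∏ p ∈ T, p : ℕ) : ℤ) ∣ x := by
  rw [Int.natCast_dvd]
  refine Finset.prod_primes_dvd _ (fun p hp => (hT p hp).prime) fun p hp => ?_
  exact Int.natCast_dvd.mp (h p hp)

/-- Chinese remainder theorem: a box of side at least `∏ p` meets prescribed residue sets with at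
most about the expected frequency. -/
lemma crt_count (N n : ℕ) (T : Finset ℕ) (hT : ∀ p ∈ T, p.Prime)
    (Ω : ∀ p : ℕ, Finset (Fin N → ZMod p)) (S : Finset (Fin N → ℤ))
    (hS : ∀ a ∈ S, (∀ i, a i ∈ Finset.Icc (-(n : ℤ)) n) ∧
      ∀ p ∈ T, (fun i => (a i : ZMod p)) ∈ Ω p) :
    S.card ≤ (2 * n / (∏ p ∈ T, p) + 1) ^ N * ∏ p ∈ T, (Ω p).card := by
  classical
  have hMpos : 0 < ∏ p ∈ T, p := Finset.prod_pos fun p hp => (hT p hp).pos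
  let F : (Fin N → ℤ) → ((p : T) → Fin N → ZMod p) := fun a p i => (a i : ZMod p)
  have hcard : (Fintype.piFinset (fun p : T => Ω p)).card = ∏ p ∈ T, (Ω p).card := by
    rw [Fintype.card_piFinset]
    exact Finset.prod_coe_sort T (fun p => (Ω p).card)
  rw [← hcard]
  refine Finset.card_le_mul_card_image_of_maps_to (f := F) ?_ _ ?_
  · intro a ha
    rw [Fintype.mem_piFinset]
    exact fun p => (hS a ha).2 p p.2
  · intro b _
    by_cases hne : {a ∈ S | F a = b}.Nonempty
    · obtain ⟨a₀, ha₀⟩ := hne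
      rw [Finset.mem_filter] at ha₀
      have hsub : {a ∈ S | F a = b} ⊆ Fintype.piFinset fun i =>
          (Finset.Icc (-(n : ℤ)) n).filter (fun x => x ≡ a₀ i [ZMOD (∏ p ∈ T, p : ℕ)]) := by
        intro a ha
        rw [Finset.mem_filter] at ha
        rw [Fintype.mem_piFinset]
        intro i
        rw [Finset.mem_filter]
        refine ⟨(hS a ha.1).1 i, ?_⟩
        rw [Int.modEq_iff_dvd]
        refine prod_primes_intDvd T hT _ fun p hp => ?_
        rw [← Int.modEq_iff_dvd, ← ZMod.intCast_eq_intCast_iff]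
        have := ha.2.trans ha₀.2.symm
        exact congrFun (congrFun this ⟨p, hp⟩) i
      refine (Finset.card_le_card hsub).trans ?_
      rw [Fintype.card_piFinset]
      refine (Finset.prod_le_pow_card _ _ (2 * n / (∏ p ∈ T, p) + 1)
        fun i _ => card_class_le n _ hMpos _).trans ?_
      simp
    · rw [Finset.not_nonempty_iff_eq_empty.mp hne]; simp

/-- The primes exactly dividing `d`. -/
def exactPrimes (d : ℤ) : Finset ℕ :=
  d.natAbs.primeFactors.filter fun p => ¬ ((p : ℤ) ^ 2 ∣ d)

lemma mem_exactPrimes {d : ℤ} (hd : d ≠ 0) {p : ℕ} :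
    p ∈ exactPrimes d ↔ p.Prime ∧ (p : ℤ) ∣ d ∧ ¬ ((p : ℤ) ^ 2 ∣ d) := by
  simp [exactPrimes, Nat.mem_primeFactors, hd, Int.natCast_dvd, and_assoc]

lemma ncard_exactPrimes {d : ℤ} (hd : d ≠ 0) :
    ({p : ℕ | p.Prime ∧ (p : ℤ) ∣ d ∧ ¬ ((p : ℤ) ^ 2 ∣ d)}).ncard = (exactPrimes d).card := by
  rw [← Set.ncard_coe_finset]
  congr 1
  ext p
  simp [mem_exactPrimes hd]

lemma prod_exactPrimes_le {d : ℤ} (hd : d ≠ 0) (T : Finset ℕ) (hT : T ⊆ exactPrimes d) :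
    ∏ p ∈ T, p ≤ d.natAbs := by
  refine Nat.le_of_dvd (Int.natAbs_pos.mpr hd) (Finset.prod_primes_dvd _ ?_ ?_)
  · exact fun p hp => ((mem_exactPrimes hd).mp (hT hp)).1.prime
  · exact fun p hp => Int.natCast_dvd.mp ((mem_exactPrimes hd).mp (hT hp)).2.1

/-- Passing from real `B` to the integer box of radius `⌊B⌋`. -/
lemma ncard_le_of_box (N : ℕ) (P : (Fin N → ℤ) → Prop) (B : ℝ) (hB : 0 ≤ B) (X : ℝ)
    (h : ∀ S : Finset (Fin N → ℤ), (∀ a ∈ S, (∀ i, a i ∈ Finset.Icc (-(⌊B⌋₊ : ℤ)) ⌊B⌋₊) ∧ P a) →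
      (S.card : ℝ) ≤ X) :
    (({a : Fin N → ℤ | (∀ i, |(a i : ℝ)| ≤ B) ∧ P a}).ncard : ℝ) ≤ X := by
  classical
  have hbox : ∀ a : Fin N → ℤ, (∀ i, |(a i : ℝ)| ≤ B) →
      ∀ i, a i ∈ Finset.Icc (-(⌊B⌋₊ : ℤ)) ⌊B⌋₊ := by
    intro a ha i
    have h1 : (a i).natAbs ≤ ⌊B⌋₊ := by
      rw [Nat.le_floor_iff hB]
      rw [Nat.cast_natAbs, Int.cast_abs]
      exact ha i
    rw [Finset.mem_Icc]; omega
  have hfin : ({a : Fin N → ℤ | (∀ i, |(a i : ℝ)| ≤ B) ∧ P a}).Finite := by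
    refine (Fintype.piFinset fun _ : Fin N =>
      Finset.Icc (-(⌊B⌋₊ : ℤ)) ⌊B⌋₊).finite_toSet.subset fun a ha => ?_
    rw [Finset.mem_coe, Fintype.mem_piFinset]
    exact hbox a ha.1
  rw [Set.ncard_eq_toFinset_card _ hfin]
  refine h _ fun a ha => ?_
  rw [Set.Finite.mem_toFinset] at ha
  exact ⟨hbox a ha.1, ha.2⟩

lemma main_ge_two (m : ℕ) (hm : 2 ≤ m) :
    ∃ Cm : ℝ, ∀ d : ℤ, d ≠ 0 → ∀ B : ℝ, |(d : ℝ)| ≤ B →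
      (({a : Fin (2 * m + 1) → ℤ | (∀ i, |(a i : ℝ)| ≤ B) ∧
          HasOddDegPoint (2 * m) d a}).ncard : ℝ)
        ≤ Cm * (1 - 1 / (2 * (m : ℝ))) ^ (exactPrimes d).card * B ^ (2 * m + 1) := by
  classical
  obtain ⟨p₀, hp₀⟩ := local_density m hm
  have hm' : (2 : ℝ) ≤ m := by exact_mod_cast hm
  set δ : ℝ := 1 - 1 / (2 * (m : ℝ)) with hδ
  have hδ0 : 0 < δ := by
    rw [hδ, sub_pos, div_lt_one (by linarith)]; linarith
  have hδ1 : δ ≤ 1 := by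
    rw [hδ]; have : 0 ≤ 1 / (2 * (m : ℝ)) := by positivity
    linarith
  choose Ω hΩ using hp₀
  let Ω' : ∀ p : ℕ, Finset (Fin (2 * m + 1) → ZMod p) := fun p =>
    if h : p.Prime ∧ p₀ ≤ p then Ω p h.1 h.2 else ∅
  refine ⟨(δ ^ p₀)⁻¹ * 3 ^ (2 * m + 1), fun d hd B hB => ?_⟩
  have hB0 : 0 ≤ B := (abs_nonneg _).trans hB
  refine ncard_le_of_box _ _ B hB0 _ fun S hS => ?_
  set n := ⌊B⌋₊ with hn
  have hdn : d.natAbs ≤ n := by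
    rw [hn, Nat.le_floor_iff hB0, Nat.cast_natAbs, Int.cast_abs]
    exact hB
  let T := (exactPrimes d).filter fun p => p₀ ≤ p
  have hTs : T ⊆ exactPrimes d := Finset.filter_subset _ _
  have hTp : ∀ p ∈ T, p.Prime := fun p hp => ((mem_exactPrimes hd).mp (hTs hp)).1
  have hcount := crt_count (2 * m + 1) n T hTp Ω' S (by
    intro a ha
    refine ⟨(hS a ha).1, fun p hp => ?_⟩
    have hp' := (mem_exactPrimes hd).mp (hTs hp)
    have hpp : p₀ ≤ p := (Finset.mem_filter.mp hp).2
    by_contra hcon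
    rw [show Ω' p = Ω p hp'.1 hpp from dif_pos ⟨hp'.1, hpp⟩] at hcon
    exact not_hasOddDegPoint_of_local m d a p hp'.1 hp'.2.1 hp'.2.2
      ((hΩ p hp'.1 hpp).2 a hcon) (hS a ha).2)
  set M := ∏ p ∈ T, p with hM
  have hMn : M ≤ n := (prod_exactPrimes_le hd T hTs).trans hdn
  have hMpos : 0 < M := Finset.prod_pos fun p hp => (hTp p hp).pos
  have hMR : (0 : ℝ) < M := by exact_mod_cast hMpos
  have h1 : ((2 * n / M + 1 : ℕ) : ℝ) ≤ 3 * B / M := by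
    have h2 : ((2 * n / M : ℕ) : ℝ) ≤ (2 * n : ℕ) / M := Nat.cast_div_le
    have h3 : (M : ℝ) ≤ n := by exact_mod_cast hMn
    have h4 : (n : ℝ) ≤ B := Nat.floor_le hB0
    push_cast at h2 ⊢
    have h5 : (1 : ℝ) ≤ B / M := by rw [le_div_iff₀ hMR]; linarith
    have h6 : 2 * (n : ℝ) / M ≤ 2 * B / M := by gcongr
    have h7 : 3 * B / M = 2 * B / M + B / M := by ring
    linarith
  have h2 : ((∏ p ∈ T, (Ω' p).card : ℕ) : ℝ) ≤ δ ^ T.card * (M : ℝ) ^ (2 * m + 1) := by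
    rw [hM]; push_cast
    rw [← Finset.prod_pow, ← Finset.prod_const, ← Finset.prod_mul_distrib]
    refine Finset.prod_le_prod (fun _ _ => Nat.cast_nonneg _) fun p hp => ?_
    have hpp : p₀ ≤ p := (Finset.mem_filter.mp hp).2
    rw [show Ω' p = Ω p (hTp p hp) hpp from dif_pos ⟨hTp p hp, hpp⟩]
    exact (hΩ p (hTp p hp) hpp).1
  have h3 : δ ^ T.card ≤ (δ ^ p₀)⁻¹ * δ ^ (exactPrimes d).card := by
    have hc : (exactPrimes d).card ≤ T.card + p₀ := by
      have : exactPrimes d ⊆ T ∪ Finset.range p₀ := by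
        intro p hp
        by_cases h : p₀ ≤ p
        · exact Finset.mem_union_left _ (Finset.mem_filter.mpr ⟨hp, h⟩)
        · exact Finset.mem_union_right _ (Finset.mem_range.mpr (by omega))
      refine (Finset.card_le_card this).trans ((Finset.card_union_le _ _).trans (by simp))
    rw [inv_mul_eq_div, le_div_iff₀ (by positivity), ← pow_add]
    exact pow_le_pow_of_le_one hδ0.le hδ1 hc
  calc (S.card : ℝ) ≤ ((2 * n / M + 1 : ℕ) : ℝ) ^ (2 * m + 1) *
        ((∏ p ∈ T, (Ω' p).card : ℕ) : ℝ) := by exact_mod_cast hcount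
    _ ≤ (3 * B / M) ^ (2 * m + 1) * (δ ^ T.card * (M : ℝ) ^ (2 * m + 1)) :=
        mul_le_mul (pow_le_pow_left₀ (Nat.cast_nonneg _) h1 _) h2 (Nat.cast_nonneg _)
          (pow_nonneg (div_nonneg (mul_nonneg (by norm_num) hB0) hMR.le) _)
    _ = δ ^ T.card * (3 * B) ^ (2 * m + 1) := by
        rw [mul_left_comm, ← mul_pow, div_mul_cancel₀ _ hMR.ne']
    _ ≤ ((δ ^ p₀)⁻¹ * δ ^ (exactPrimes d).card) * (3 * B) ^ (2 * m + 1) :=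
        mul_le_mul_of_nonneg_right h3 (pow_nonneg (mul_nonneg (by norm_num) hB0) _)
    _ = _ := by rw [mul_pow]; ring

/-! ### Conics: conditions on the discriminant -/

/-- A non-square modulo `p` stays a non-square in extensions of odd degree. -/
lemma sq_eq_mul_sq_odd (p : ℕ) [Fact p.Prime] (r : ℤ) (hr : ¬ IsSquare (r : ZMod p))
    (k : Type) [Field k] (f : ℕ) (hf : Odd f) (hk : Nat.card k = p ^ f) (u v : k)
    (h : u ^ 2 = (r : k) * v ^ 2) : u = 0 ∧ v = 0 := by
  open Polynomial in
  have hp : p.Prime := Fact.out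
  have hfin : Finite k := Nat.finite_of_card_ne_zero (by rw [hk]; exact pow_ne_zero _ hp.ne_zero)
  let _ : Fintype k := Fintype.ofFinite k
  have hk' : Fintype.card k = p ^ f := by rw [← Nat.card_eq_fintype_card, hk]
  have hch : CharP k p := charP_of_card_eq_prime_pow hk'
  let _ : Algebra (ZMod p) k := ZMod.algebra k p
  have hfr : Module.finrank (ZMod p) k = f := by
    have := Module.card_eq_pow_finrank (K := ZMod p) (V := k)
    rw [hk', ZMod.card] at this
    exact (Nat.pow_right_injective hp.two_le this).symm
  by_cases hv : v = 0
  · subst hv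
    exact ⟨by simpa using h, rfl⟩
  · exfalso
    have hirr : Irreducible (X ^ 2 - C (r : ZMod p)) :=
      X_pow_sub_C_irreducible_of_prime Nat.prime_two fun b hb => hr ⟨b, by rw [← hb]; ring⟩
    refine no_root_of_even p k (hfr ▸ hf) _ (monic_X_pow_sub_C _ two_ne_zero) hirr
      (by rw [natDegree_X_pow_sub_C]; exact even_two) (u / v) ?_
    simp only [map_sub, map_pow, aeval_X, map_intCast]
    rw [div_pow, h]
    field_simp
    ring

lemma two_mul_one_ne_zero_cast {k : Type} [Field k] {p : ℕ} [Fact p.Prime] {f : ℕ}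
    (hp2 : p ≠ 2) (hk : Nat.card k = p ^ f) (A : ℤ) (hA : ¬ (p : ℤ) ∣ A) :
    (2 * (A : k)) ≠ 0 := by
  have hp : p.Prime := Fact.out
  have hfin : Finite k := Nat.finite_of_card_ne_zero (by rw [hk]; exact pow_ne_zero _ hp.ne_zero)
  let _ : Fintype k := Fintype.ofFinite k
  have hk' : Fintype.card k = p ^ f := by rw [← Nat.card_eq_fintype_card, hk]
  have hch : CharP k p := charP_of_card_eq_prime_pow hk'
  intro h
  have h2 : ((2 * A : ℤ) : k) = 0 := by push_cast; exact h
  rw [CharP.intCast_eq_zero_iff k p] at h2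
  rcases (Nat.prime_iff_prime_int.mp hp).dvd_or_dvd h2 with h3 | h3
  · have : p ∣ 2 := by exact_mod_cast h3
    exact hp2 ((Nat.prime_dvd_prime_iff_eq hp Nat.prime_two).mp this)
  · exact hA h3

/-- Necessary condition at an odd prime exactly dividing `d`: the discriminant is a square. -/
lemma disc_isSquare_of_point (d : ℤ) (a : Fin (2 * 1 + 1) → ℤ) (h : HasOddDegPoint (2 * 1) d a)
    (p : ℕ) (hp : p.Prime) (hp2 : p ≠ 2) (hpd : (p : ℤ) ∣ d) (hpd2 : ¬ (p : ℤ) ^ 2 ∣ d) :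
    IsSquare ((a 1 ^ 2 - 4 * a 2 * a 0 : ℤ) : ZMod p) := by
  have : Fact p.Prime := ⟨hp⟩
  by_contra hns
  refine not_hasOddDegPoint_of_local 1 d a p hp hpd hpd2 ?_ h
  intro k _ f hf hk u v h0
  have hA : ¬ (p : ℤ) ∣ a 2 := by
    intro hA
    rw [← ZMod.intCast_zmod_eq_zero_iff_dvd] at hA
    apply hns
    push_cast
    rw [hA]
    exact ⟨(a 1 : ZMod p), by ring⟩
  have h2A := two_mul_one_ne_zero_cast hp2 hk (a 2) hA
  rw [Fin.sum_univ_three] at h0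
  simp at h0
  obtain ⟨h1, h2⟩ := sq_eq_mul_sq_odd p _ hns k f hf hk (2 * (a 2 : k) * u + (a 1 : k) * v) v (by
    push_cast
    linear_combination (4 * (a 2 : k)) * h0)
  refine ⟨?_, h2⟩
  rw [h2, mul_zero, add_zero] at h1
  exact (mul_eq_zero.mp h1).resolve_left h2A

/-- Obstruction at an odd prime `q` exactly dividing the discriminant `D`: after completing the
square the curve reads `x² - 4 a₂ d w² = D v²`, which is again of the shape covered by
`not_hasOddDegPoint_of_local`. -/
lemma not_point_of_disc (d : ℤ) (a : Fin (2 * 1 + 1) → ℤ) (hA : a 2 ≠ 0)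
    (q : ℕ) (hq : q.Prime) (hq2 : q ≠ 2) (hqD : (q : ℤ) ∣ a 1 ^ 2 - 4 * a 2 * a 0)
    (hqD2 : ¬ (q : ℤ) ^ 2 ∣ a 1 ^ 2 - 4 * a 2 * a 0)
    (hns : ¬ IsSquare ((a 2 * d : ℤ) : ZMod q)) : ¬ HasOddDegPoint (2 * 1) d a := by
  have : Fact q.Prime := ⟨hq⟩
  intro h
  set D : ℤ := a 1 ^ 2 - 4 * a 2 * a 0 with hD
  have h2 : (2 : ZMod q) ≠ 0 := by
    intro h
    have : ((2 : ℕ) : ZMod q) = 0 := by exact_mod_cast h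
    rw [ZMod.natCast_eq_zero_iff] at this
    exact hq2 ((Nat.prime_dvd_prime_iff_eq hq Nat.prime_two).mp this)
  have hns4 : ¬ IsSquare ((4 * (a 2 * d) : ℤ) : ZMod q) := by
    rintro ⟨s, hs⟩
    refine hns ⟨s / 2, ?_⟩
    push_cast at hs ⊢
    field_simp
    linear_combination hs
  refine not_hasOddDegPoint_of_local 1 D ![-(4 * (a 2 * d)), 0, 1] q hq hqD hqD2 ?_ ?_
  · intro k _ f hf hk u v h0
    rw [Fin.sum_univ_three] at h0
    simp at h0
    refine sq_eq_mul_sq_odd q _ hns4 k f hf hk u v ?_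
    push_cast
    linear_combination h0
  · obtain ⟨K, hfin, hodd, u, v, w, huv, heq⟩ := h
    refine ⟨K, hfin, hodd, 2 * (a 2 : K) * u + (a 1 : K) * v, w, v, ?_, ?_⟩
    · intro h0
      rw [Prod.mk.injEq] at h0
      obtain ⟨h1, h2⟩ := h0
      rw [Fin.sum_univ_three] at heq
      simp [h2] at heq
      have hDv : (D : K) * v ^ 2 = 0 := by
        rw [hD]; push_cast
        linear_combination (2 * (a 2 : K) * u + (a 1 : K) * v) * h1 - 4 * (a 2 : K) * heq
      have hD0 : (D : K) ≠ 0 := by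
        intro h
        have : D = 0 := by exact_mod_cast h
        exact hqD2 (this ▸ dvd_zero _)
      have hv : v = 0 := by
        rcases mul_eq_zero.mp hDv with h | h
        · exact absurd h hD0
        · exact pow_eq_zero_iff two_ne_zero |>.mp h
      rw [hv, mul_zero, add_zero] at h1
      have hu : u = 0 := by
        refine (mul_eq_zero.mp h1).resolve_left (mul_ne_zero two_ne_zero ?_)
        exact_mod_cast hA
      exact huv (by rw [hu, hv])
    · rw [Fin.sum_univ_three] at heq ⊢
      simp at heq ⊢
      rw [hD]; push_cast
      linear_combination 4 * (a 2 : K) * heq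

/-! ### Pólya–Vinogradov estimates for products of periodic functions -/

/-- `ψ` is periodic modulo `N` with mean zero, and all its sums twisted by additive characters
modulo `N` are at most `K`. -/
def Tame (N : ℕ) (K : ℝ) (ψ : ℤ → ℝ) : Prop :=
  ∃ _ : NeZero N, ∃ ψ' : ZMod N → ℂ, (∀ x : ℤ, ψ' x = ψ x) ∧ ∑ x, ψ' x = 0 ∧
    ∀ χ : AddChar (ZMod N) ℂ, ‖∑ x, ψ' x * χ x‖ ≤ K

lemma Tame.nonneg {N : ℕ} {K : ℝ} {ψ : ℤ → ℝ} (h : Tame N K ψ) : 0 ≤ K := by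
  obtain ⟨_, ψ', -, -, h⟩ := h
  exact (norm_nonneg _).trans (h 0)

/-- Characters modulo `N₁ N₂` factor, so the bounds multiply. -/
lemma Tame.mul {N₁ N₂ : ℕ} {K₁ K₂ : ℝ} {ψ₁ ψ₂ : ℤ → ℝ} (hN : N₁.Coprime N₂)
    (h₁ : Tame N₁ K₁ ψ₁) (h₂ : Tame N₂ K₂ ψ₂) :
    Tame (N₁ * N₂) (K₁ * K₂) (fun x => ψ₁ x * ψ₂ x) := by
  have hK₁ := h₁.nonneg
  obtain ⟨i₁, f₁, hf₁, hz₁, hb₁⟩ := h₁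
  obtain ⟨i₂, f₂, hf₂, hz₂, hb₂⟩ := h₂
  have i : NeZero (N₁ * N₂) := ⟨mul_ne_zero i₁.out i₂.out⟩
  let e := ZMod.chineseRemainder hN
  have key : ∀ χ : AddChar (ZMod (N₁ * N₂)) ℂ,
      ∑ x, f₁ (e x).1 * f₂ (e x).2 * χ x =
        (∑ x, f₁ x * χ (e.symm (x, 0))) * ∑ y, f₂ y * χ (e.symm (0, y)) := by
    intro χ
    rw [← e.toEquiv.symm.sum_comp, Fintype.sum_prod_type, Finset.sum_mul_sum]
    refine Finset.sum_congr rfl fun x _ => Finset.sum_congr rfl fun y _ => ?_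
    have : e.toEquiv.symm (x, y) = e.symm (x, 0) + e.symm (0, y) := by
      rw [← map_add]; simp
    rw [this, AddChar.map_add_eq_mul, map_add]
    simp only [RingEquiv.apply_symm_apply, Prod.mk_add_mk, add_zero, zero_add]
    ring
  let χ₁ : AddChar (ZMod (N₁ * N₂)) ℂ → AddChar (ZMod N₁) ℂ := fun χ =>
    { toFun := fun x => χ (e.symm (x, 0))
      map_zero_eq_one' := by simp [← Prod.zero_eq_mk]
      map_add_eq_mul' := fun a b => by rw [← AddChar.map_add_eq_mul, ← map_add]; simp }
  let χ₂ : AddChar (ZMod (N₁ * N₂)) ℂ → AddChar (ZMod N₂) ℂ := fun χ =>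
    { toFun := fun x => χ (e.symm (0, x))
      map_zero_eq_one' := by simp [← Prod.zero_eq_mk]
      map_add_eq_mul' := fun a b => by rw [← AddChar.map_add_eq_mul, ← map_add]; simp }
  refine ⟨i, fun x => f₁ (e x).1 * f₂ (e x).2, ?_, ?_, ?_⟩
  · intro x
    have : e (x : ZMod (N₁ * N₂)) = ((x : ZMod N₁), (x : ZMod N₂)) := by
      rw [map_intCast]; rfl
    change f₁ (e (x : ZMod (N₁ * N₂))).1 * f₂ (e (x : ZMod (N₁ * N₂))).2 = _
    rw [this, hf₁, hf₂]; push_cast; ring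
  · have := key 0
    simp only [AddChar.zero_apply, mul_one] at this
    rw [this, hz₁, zero_mul]
  · intro χ
    rw [key χ, norm_mul]
    exact mul_le_mul (hb₁ (χ₁ χ)) (hb₂ (χ₂ χ)) (norm_nonneg _) hK₁

lemma tame_prod (T : Finset ℕ) (hT : T.Nonempty) (hp : ∀ p ∈ T, p.Prime) (K : ℕ → ℝ)
    (ψ : ℕ → ℤ → ℝ) (h : ∀ p ∈ T, Tame p (K p) (ψ p)) :
    Tame (∏ p ∈ T, p) (∏ p ∈ T, K p) (fun x => ∏ p ∈ T, ψ p x) := by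
  induction hT using Finset.Nonempty.cons_induction with
  | singleton a => simpa using h a (by simp)
  | cons a s ha hs ih =>
    simp only [Finset.prod_cons]
    refine Tame.mul ?_ (h a (by simp)) (ih (fun p hps => hp p (Finset.mem_cons_of_mem hps))
      fun p hps => h p (Finset.mem_cons_of_mem hps))
    refine Nat.Coprime.prod_right fun p hps => ?_
    rw [Nat.coprime_primes (hp a (by simp)) (hp p (Finset.mem_cons_of_mem hps))]
    rintro rfl
    exact ha hps

lemma norm_stdAddChar_sub_one_inv_le (N : ℕ) [NeZero N] (v : ℕ) (hv : 0 < v) (hvN : v < N) :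
    2 / ‖ZMod.stdAddChar (N := N) (v : ZMod N) - 1‖ ≤
      (N : ℝ) / 2 * ((v : ℝ)⁻¹ + ((N - v : ℕ) : ℝ)⁻¹) := by
  have hN : (0 : ℝ) < N := by exact_mod_cast hv.trans hvN
  have hvR : (0 : ℝ) < v := by exact_mod_cast hv
  have hwR : (0 : ℝ) < ((N - v : ℕ) : ℝ) := by exact_mod_cast (by omega : 0 < N - v)
  have hw : ((N - v : ℕ) : ℝ) = N - v := by rw [Nat.cast_sub hvN.le]
  have hpi := Real.pi_pos
  set x : ℝ := Real.pi * v / N with hx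
  have hnorm : ‖ZMod.stdAddChar (N := N) (v : ZMod N) - 1‖ = ‖2 * Real.sin x‖ := by
    have h1 := ZMod.stdAddChar_coe (N := N) (v : ℤ)
    rw [Int.cast_natCast] at h1
    rw [h1]
    have h2 := Complex.norm_exp_I_mul_ofReal_sub_one (2 * x)
    rw [mul_div_cancel_left₀ _ two_ne_zero] at h2
    rw [← h2]
    congr 3
    rw [hx]; push_cast; ring
  have hsin : 2 * v / N ≤ Real.sin x ∨ 2 * ((N - v : ℕ) : ℝ) / N ≤ Real.sin x := by
    rcases le_total (2 * v) N with h | h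
    · left
      have hh : 2 * (v : ℝ) ≤ N := by exact_mod_cast h
      have := Real.mul_le_sin (x := x) (by positivity) (by
        rw [hx, div_le_div_iff₀ hN two_pos]; nlinarith)
      refine le_trans (le_of_eq ?_) this
      rw [hx]; field_simp
    · right
      have hh : (N : ℝ) ≤ 2 * v := by exact_mod_cast h
      have hx' : Real.pi - x = Real.pi * (N - v : ℕ) / N := by
        rw [hx, hw]; field_simp
      have := Real.mul_le_sin (x := Real.pi - x) (by rw [hx']; positivity) (by
        rw [hx', hw, div_le_div_iff₀ hN two_pos]; nlinarith)
      rw [Real.sin_pi_sub] at this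
      refine le_trans (le_of_eq ?_) this
      rw [hx']; field_simp
  have hinv : 2 / ‖2 * Real.sin x‖ = (Real.sin x)⁻¹ := by
    have hpos : 0 < Real.sin x := by
      rcases hsin with h | h
      · exact lt_of_lt_of_le (by positivity) h
      · exact lt_of_lt_of_le (by positivity) h
    rw [Real.norm_of_nonneg (by positivity)]; field_simp
  rw [hnorm, hinv]
  have hi1 : 0 < (v : ℝ)⁻¹ := by positivity
  have hi2 : 0 < ((N - v : ℕ) : ℝ)⁻¹ := by positivity
  rcases hsin with h | h
  · refine (inv_anti₀ (by positivity) h).trans ?_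
    rw [inv_div, mul_add]
    have : (N : ℝ) / (2 * v) = N / 2 * (v : ℝ)⁻¹ := by field_simp
    rw [this]
    have : 0 ≤ (N : ℝ) / 2 * ((N - v : ℕ) : ℝ)⁻¹ := by positivity
    linarith
  · refine (inv_anti₀ (by positivity) h).trans ?_
    rw [inv_div, mul_add]
    have : (N : ℝ) / (2 * ((N - v : ℕ) : ℝ)) = N / 2 * ((N - v : ℕ) : ℝ)⁻¹ := by field_simp
    rw [this]
    have : 0 ≤ (N : ℝ) / 2 * (v : ℝ)⁻¹ := by positivity
    linarith

lemma sum_stdAddChar_inv_le (N : ℕ) [NeZero N] :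
    ∑ y : ZMod N, 2 / ‖ZMod.stdAddChar (N := N) y - 1‖ ≤ N * (1 + Real.log N) := by
  have hN : 0 < N := Nat.pos_of_ne_zero (NeZero.ne N)
  have h1 : ∑ y : ZMod N, 2 / ‖ZMod.stdAddChar (N := N) y - 1‖ =
      ∑ v ∈ Finset.range N, 2 / ‖ZMod.stdAddChar (N := N) (v : ZMod N) - 1‖ := by
    refine Finset.sum_nbij' ZMod.val (fun v => (v : ZMod N)) ?_ ?_ ?_ ?_ ?_
    · intro a _; exact Finset.mem_range.mpr (ZMod.val_lt a)
    · intro a _; exact Finset.mem_univ _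
    · intro a _; exact ZMod.natCast_zmod_val a
    · intro a ha; exact ZMod.val_cast_of_lt (Finset.mem_range.mp ha)
    · intro a _; rw [ZMod.natCast_zmod_val]
  obtain ⟨n, rfl⟩ : ∃ n, N = n + 1 := ⟨N - 1, by omega⟩
  rw [h1, Finset.sum_range_succ']
  have h0 : 2 / ‖ZMod.stdAddChar (N := n + 1) ((0 : ℕ) : ZMod (n + 1)) - 1‖ = 0 := by simp
  rw [h0, add_zero]
  calc _ ≤ ∑ i ∈ Finset.range n, (((n + 1 : ℕ) : ℝ) / 2 *
          (((i + 1 : ℕ) : ℝ)⁻¹ + ((n + 1 - (i + 1) : ℕ) : ℝ)⁻¹)) := by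
        refine Finset.sum_le_sum fun i hi => ?_
        have := Finset.mem_range.mp hi
        exact norm_stdAddChar_sub_one_inv_le (n + 1) (i + 1) (by omega) (by omega)
    _ = ((n + 1 : ℕ) : ℝ) / 2 * (∑ i ∈ Finset.range n, ((i + 1 : ℕ) : ℝ)⁻¹ +
          ∑ i ∈ Finset.range n, ((n - 1 - i + 1 : ℕ) : ℝ)⁻¹) := by
        rw [← Finset.mul_sum, Finset.sum_add_distrib]
        congr 2
        refine Finset.sum_congr rfl fun i hi => ?_
        have := Finset.mem_range.mp hi
        congr 2; omega
    _ = ((n + 1 : ℕ) : ℝ) * ((harmonic n : ℚ) : ℝ) := by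
        rw [Finset.sum_range_reflect (fun i => ((i + 1 : ℕ) : ℝ)⁻¹), harmonic]
        push_cast; ring
    _ ≤ _ := by
        refine mul_le_mul_of_nonneg_left ?_ (Nat.cast_nonneg _)
        refine (harmonic_le_one_add_log n).trans ?_
        rcases Nat.eq_zero_or_pos n with rfl | hn
        · simp
        · have : Real.log n ≤ Real.log ((n + 1 : ℕ) : ℝ) :=
            Real.log_le_log (by exact_mod_cast hn) (by push_cast; linarith)
          linarith

/-- Pólya–Vinogradov: completion of incomplete sums along an arithmetic progression. -/
lemma Tame.sum_range_le {N : ℕ} {K : ℝ} {ψ : ℤ → ℝ} (h : Tame N K ψ) (r : ℕ) (hr : r.Coprime N)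
    (c : ℤ) (J : ℕ) :
    |∑ j ∈ Finset.range J, ψ (c + r * j)| ≤ K * (1 + Real.log N) := by
  have hK := h.nonneg
  obtain ⟨inst, f, hf, hz, hb⟩ := h
  have hN : (0 : ℝ) < N := by exact_mod_cast Nat.pos_of_ne_zero inst.out
  let F : ZMod N → ℂ := ZMod.dft f
  have hF0 : F 0 = 0 := by
    simp only [F, ZMod.dft_apply, mul_zero, neg_zero, AddChar.map_zero_eq_one, one_smul, hz]
  have hFK : ∀ k, ‖F k‖ ≤ K := by
    intro k
    refine le_trans (le_of_eq ?_) (hb (AddChar.mulShift ZMod.stdAddChar (-k)))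
    simp only [F, ZMod.dft_apply, AddChar.mulShift_apply, smul_eq_mul]
    congr 1
    refine Finset.sum_congr rfl fun x _ => ?_
    rw [mul_comm (f x)]
    congr 2; ring
  have hinv : ∀ x : ZMod N, f x = (N : ℂ)⁻¹ * ∑ k, ZMod.stdAddChar (k * x) * F k := by
    intro x
    have := congrFun (ZMod.dft.symm_apply_apply f) x
    rw [ZMod.invDFT_apply] at this
    rw [← this]
    simp [F]
  have hterm : ∀ k : ZMod N, ‖∑ j ∈ Finset.range J,
      ZMod.stdAddChar (k * ((c : ZMod N) + (r : ZMod N) * (j : ZMod N))) * F k‖ ≤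
        K * (2 / ‖ZMod.stdAddChar (N := N) (k * r) - 1‖) := by
    intro k
    by_cases hk : k = 0
    · subst hk
      rw [hF0]; simp
    · have hne : ZMod.stdAddChar (N := N) (k * r) ≠ 1 := by
        intro h1
        have h2 : k * (r : ZMod N) = 0 := by
          apply ZMod.injective_stdAddChar (N := N)
          rw [h1, AddChar.map_zero_eq_one]
        have hu : IsUnit (r : ZMod N) := (ZMod.isUnit_iff_coprime r N).mpr hr
        exact hk ((hu.mul_left_eq_zero).mp h2)
      have hexp : ∀ j : ℕ, ZMod.stdAddChar (N := N) (k * ((c : ZMod N) + (r : ZMod N) * (j : ZMod N))) * F k =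
          (ZMod.stdAddChar (N := N) (k * c) * F k) * (ZMod.stdAddChar (N := N) (k * r)) ^ j := by
        intro j
        rw [← AddChar.map_nsmul_eq_pow, mul_add, AddChar.map_add_eq_mul, nsmul_eq_mul,
          show k * ((r : ZMod N) * j) = j * (k * r) by ring]
        ring
      simp only [hexp]
      rw [← Finset.mul_sum, norm_mul, norm_mul, AddChar.norm_apply, one_mul, geom_sum_eq hne,
        norm_div]
      refine mul_le_mul (hFK k) ?_ (by positivity) hK
      gcongr
      refine (norm_sub_le _ _).trans ?_
      rw [norm_pow, AddChar.norm_apply]; norm_num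
  have hcomplex : (((∑ j ∈ Finset.range J, ψ (c + r * j) : ℝ)) : ℂ) =
      (N : ℂ)⁻¹ * ∑ k, ∑ j ∈ Finset.range J,
        ZMod.stdAddChar (k * ((c : ZMod N) + (r : ZMod N) * (j : ZMod N))) * F k := by
    push_cast
    rw [Finset.sum_comm, Finset.mul_sum]
    refine Finset.sum_congr rfl fun j _ => ?_
    rw [← hf, hinv]
    push_cast
    rfl
  rw [← Real.norm_eq_abs, ← Complex.norm_real, hcomplex, norm_mul, norm_inv, Complex.norm_natCast]
  have hsum : ‖∑ k, ∑ j ∈ Finset.range J,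
      ZMod.stdAddChar (k * ((c : ZMod N) + (r : ZMod N) * (j : ZMod N))) * F k‖ ≤ K * (N * (1 + Real.log N)) := by
    refine (norm_sum_le _ _).trans ((Finset.sum_le_sum fun k _ => hterm k).trans ?_)
    rw [← Finset.mul_sum]
    refine mul_le_mul_of_nonneg_left ?_ hK
    let u : (ZMod N)ˣ := ZMod.unitOfCoprime r hr
    have := Equiv.sum_comp (Units.mulRight u) fun y => 2 / ‖ZMod.stdAddChar (N := N) y - 1‖
    simp only [Units.mulRight_apply, u, ZMod.coe_unitOfCoprime] at this
    rw [this]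
    exact sum_stdAddChar_inv_le N
  calc (N : ℝ)⁻¹ * _ ≤ (N : ℝ)⁻¹ * (K * (N * (1 + Real.log N))) := by gcongr
    _ = _ := by field_simp

lemma filter_modEq_eq_image (n : ℕ) (r : ℕ) (hr : 0 < r) (c : ℤ) :
    ∃ c₁ : ℤ, ∃ J : ℕ, (Finset.Icc (-(n : ℤ)) n).filter (fun x => x ≡ c [ZMOD r]) =
      (Finset.range J).image (fun j : ℕ => c₁ + (r : ℤ) * j) := by
  have hr' : (0 : ℤ) < r := by exact_mod_cast hr
  have hm0 := Int.emod_nonneg (c + n) hr'.ne'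
  have hm1 := Int.emod_lt_of_pos (c + n) hr'
  set e := (c + n) % (r : ℤ) with he
  have hde : (r : ℤ) ∣ (c + n) - e := Int.dvd_self_sub_emod
  refine ⟨-n + e, ((n - (-n + e)) / r + 1).toNat, ?_⟩
  ext x
  simp only [Finset.mem_filter, Finset.mem_Icc, Finset.mem_image, Finset.mem_range]
  constructor
  · rintro ⟨⟨h1, h2⟩, h3⟩
    have hd : (r : ℤ) ∣ x - (-n + e) := by
      have := (Int.modEq_iff_dvd.mp h3)
      have h4 : x - (-n + e) = (c + n - e) - (c - x) := by ring
      rw [h4]; exact dvd_sub hde this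
    obtain ⟨j, hj⟩ := hd
    have hj0 : 0 ≤ j := by
      by_contra! hneg
      have : (r : ℤ) * j ≤ r * (-1) := by
        apply mul_le_mul_of_nonneg_left _ hr'.le; omega
      linarith
    lift j to ℕ using hj0
    refine ⟨j, ?_, by linarith⟩
    have : (j : ℤ) ≤ (n - (-n + e)) / r := by
      rw [Int.le_ediv_iff_mul_le hr']; linarith
    omega
  · rintro ⟨j, hj, rfl⟩
    have hj' : (j : ℤ) ≤ (n - (-n + e)) / r := by omega
    rw [Int.le_ediv_iff_mul_le hr'] at hj'
    have : 0 ≤ (r : ℤ) * j := by positivity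
    refine ⟨⟨by linarith, by linarith⟩, ?_⟩
    rw [Int.modEq_iff_dvd]
    have h4 : c - (-n + e + r * j) = (c + n - e) - r * j := by ring
    rw [h4]; exact dvd_sub hde (dvd_mul_right _ _)

lemma Tame.sum_class_le {N : ℕ} {K : ℝ} {ψ : ℤ → ℝ} (h : Tame N K ψ) (r : ℕ) (hr0 : 0 < r)
    (hr : r.Coprime N) (c : ℤ) (n : ℕ) :
    |∑ x ∈ (Finset.Icc (-(n : ℤ)) n).filter (fun x => x ≡ c [ZMOD r]), ψ x| ≤
      K * (1 + Real.log N) := by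
  obtain ⟨c₁, J, hJ⟩ := filter_modEq_eq_image n r hr0 c
  rw [hJ, Finset.sum_image]
  · exact h.sum_range_le r hr c₁ J
  · intro a _ b _ hab
    simpa [hr0.ne'] using hab

/-! ### Squares modulo several primes -/

open Classical in
/-- Twice the indicator function of the squares modulo `p`. -/
def sqInd (p : ℕ) (x : ℤ) : ℝ := if IsSquare (x : ZMod p) then 2 else 0

lemma sqInd_nonneg (p : ℕ) (x : ℤ) : 0 ≤ sqInd p x := by
  unfold sqInd; split_ifs <;> norm_num

open Classical in
lemma sq_indicator_sum_norm_le (p : ℕ) [Fact p.Prime] (hp2 : p ≠ 2) (χ : AddChar (ZMod p) ℂ) :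
    (χ = 0 → ∑ y : ZMod p, ((if IsSquare y then (2 : ℂ) else 0) - (1 + 1 / p)) * χ y = 0) ∧
      ‖∑ y : ZMod p, ((if IsSquare y then (2 : ℂ) else 0) - (1 + 1 / p)) * χ y‖ ≤
        2 * √(p : ℝ) := by
  have hp := Fact.out (p := p.Prime)
  have hpC : (p : ℂ) ≠ 0 := by exact_mod_cast hp.ne_zero
  have hchar : ringChar (ZMod p) ≠ 2 := by rw [ZMod.ringChar_zmod_n]; exact hp2
  let η : MulChar (ZMod p) ℂ := (quadraticChar (ZMod p)).ringHomComp (Int.castRingHom ℂ)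
  have hη : η ≠ 1 := by
    rw [MulChar.ringHomComp_ne_one_iff Int.cast_injective]
    exact quadraticChar_ne_one hchar
  have hq : η.IsQuadratic := (quadraticChar_isQuadratic (ZMod p)).comp _
  have hsplit : ∀ y : ZMod p, ((if IsSquare y then (2 : ℂ) else 0) - (1 + 1 / p)) =
      η y + (if y = 0 then 1 else 0) - 1 / p := by
    intro y
    by_cases hy : y = 0
    · subst hy
      have h0 : η 0 = 0 := MulChar.map_zero η
      rw [h0]; simp; ring
    · by_cases hs : IsSquare y
      · have : quadraticChar (ZMod p) y = 1 := (quadraticChar_one_iff_isSquare hy).mpr hs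
        simp only [η, MulChar.ringHomComp_apply, this, hs, hy, if_true, if_false]
        simp; ring
      · have : quadraticChar (ZMod p) y = -1 := quadraticChar_neg_one_iff_not_isSquare.mpr hs
        simp only [η, MulChar.ringHomComp_apply, this, hs, hy, if_false]
        simp; ring
  have hsum : ∑ y : ZMod p, ((if IsSquare y then (2 : ℂ) else 0) - (1 + 1 / p)) * χ y =
      gaussSum η χ + 1 - 1 / p * ∑ y, χ y := by
    simp only [hsplit, sub_mul, add_mul, Finset.sum_sub_distrib, Finset.sum_add_distrib]
    rw [← Finset.mul_sum]
    simp [gaussSum]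
  have hsqrt : 1 ≤ √(p : ℝ) := by
    rw [Real.one_le_sqrt]; exact_mod_cast hp.one_lt.le
  rw [hsum]
  by_cases h : χ = 0
  · subst h
    have h0 : gaussSum η (0 : AddChar (ZMod p) ℂ) + 1 - 1 / p * ∑ y, (0 : AddChar (ZMod p) ℂ) y
        = 0 := by
      have : gaussSum η (0 : AddChar (ZMod p) ℂ) = 0 := by
        simp only [gaussSum, AddChar.zero_apply, mul_one]
        exact MulChar.sum_eq_zero_of_ne_one hη
      rw [this]
      simp [hpC]
    rw [h0]
    refine ⟨fun _ => rfl, ?_⟩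
    rw [norm_zero]; positivity
  · refine ⟨fun h' => absurd h' h, ?_⟩
    rw [(AddChar.sum_eq_zero_iff_ne_zero (ψ := χ)).mpr h, mul_zero, sub_zero]
    have hprim : χ.IsPrimitive := AddChar.IsPrimitive.of_ne_one h
    have hg := gaussSum_sq hη hq hprim
    have hg' : ‖gaussSum η χ‖ ^ 2 = p := by
      rw [← norm_pow, hg, norm_mul]
      have h1 : ‖η (-1)‖ = 1 := by
        rcases hq (-1) with h | h | h
        · exfalso
          have : IsUnit (-1 : ZMod p) := isUnit_one.neg
          exact (this.map η).ne_zero h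
        · rw [h]; simp
        · rw [h]; simp
      rw [h1, ZMod.card]; simp
    have hg'' : ‖gaussSum η χ‖ = √(p : ℝ) := by
      rw [← hg', Real.sqrt_sq (norm_nonneg _)]
    calc _ ≤ ‖gaussSum η χ‖ + ‖(1 : ℂ)‖ := norm_add_le _ _
      _ ≤ _ := by rw [hg'', norm_one]; linarith

lemma tame_sqInd (p : ℕ) (hp : p.Prime) (hp2 : p ≠ 2) (A b : ℤ) (hA : ¬ (p : ℤ) ∣ A) :
    Tame p (2 * √(p : ℝ)) (fun c => sqInd p (b ^ 2 - 4 * A * c) - (1 + 1 / p)) := by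
  classical
  have := Fact.mk hp
  have hA' : (A : ZMod p) ≠ 0 := by rwa [Ne, ZMod.intCast_zmod_eq_zero_iff_dvd]
  have h2 : (2 : ZMod p) ≠ 0 := by
    intro h
    have : ((2 : ℕ) : ZMod p) = 0 := by exact_mod_cast h
    rw [ZMod.natCast_eq_zero_iff] at this
    exact hp2 ((Nat.prime_dvd_prime_iff_eq hp Nat.prime_two).mp this)
  have h4 : (4 : ZMod p) ≠ 0 := by
    rw [show (4 : ZMod p) = 2 * 2 by norm_num]; exact mul_ne_zero h2 h2
  let e : ZMod p ≃ ZMod p :=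
    { toFun := fun x => (b : ZMod p) ^ 2 - 4 * A * x
      invFun := fun y => ((b : ZMod p) ^ 2 - y) / (4 * A)
      left_inv := fun x => by field_simp; ring
      right_inv := fun y => by field_simp; ring }
  let h : ZMod p → ℂ := fun y => (if IsSquare y then (2 : ℂ) else 0) - (1 + 1 / p)
  have key : ∀ χ : AddChar (ZMod p) ℂ, ∑ x, h (e x) * χ x =
      χ ((b : ZMod p) ^ 2 / (4 * A)) *
        ∑ y, h y * (AddChar.mulShift χ (-(4 * A : ZMod p)⁻¹)) y := by
    intro χ
    rw [← e.symm.sum_comp, Finset.mul_sum]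
    refine Finset.sum_congr rfl fun y _ => ?_
    rw [Equiv.apply_symm_apply, AddChar.mulShift_apply]
    have : e.symm y = (b : ZMod p) ^ 2 / (4 * A) + -(4 * A : ZMod p)⁻¹ * y := by
      change ((b : ZMod p) ^ 2 - y) / (4 * A) = _
      field_simp; ring
    rw [this, AddChar.map_add_eq_mul]; ring
  refine ⟨⟨hp.ne_zero⟩, fun x => h (e x), ?_, ?_, ?_⟩
  · intro x
    simp only [h, e, sqInd, Equiv.coe_fn_mk]
    push_cast
    split_ifs <;> simp
  · have h1 := key 0
    simp only [AddChar.zero_apply, mul_one, one_mul] at h1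
    rw [h1]
    refine (sq_indicator_sum_norm_le p hp2 _).1 ?_
    ext y; simp [AddChar.mulShift_apply]
  · intro χ
    rw [key χ, norm_mul, AddChar.norm_apply, one_mul]
    exact (sq_indicator_sum_norm_le p hp2 _).2

/-- For `A` prime to the primes in `S`, the discriminant `b² - 4Ac` is a square modulo all `p ∈ S`
with the expected frequency, also along residue classes of `c` whose modulus is prime to `S`. -/
lemma sum_prod_sqInd (n : ℕ) (hn : 1 ≤ n) (S : Finset ℕ) (A b : ℤ)
    (hS : ∀ p ∈ S, p.Prime ∧ p ≠ 2 ∧ ¬ (p : ℤ) ∣ A) (hprod : ∏ p ∈ S, p ≤ n)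
    (r : ℕ) (hr0 : 0 < r) (hr : ∀ p ∈ S, r.Coprime p) (c₀ : ℤ) :
    |∑ c ∈ (Finset.Icc (-(n : ℤ)) n).filter (fun x => x ≡ c₀ [ZMOD r]),
        ∏ p ∈ S, sqInd p (b ^ 2 - 4 * A * c) -
      (2 * n + 1) / r * ∏ p ∈ S, (1 + 1 / (p : ℝ))| ≤
      4 ^ S.card * (√(n : ℝ) * (1 + Real.log n)) := by
  classical
  set F := (Finset.Icc (-(n : ℤ)) n).filter (fun x => x ≡ c₀ [ZMOD r]) with hF
  let ψ : ℕ → ℤ → ℝ := fun p c => sqInd p (b ^ 2 - 4 * A * c) - (1 + 1 / p)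
  let M : ℝ := √(n : ℝ) * (1 + Real.log n)
  have hn1 : (1 : ℝ) ≤ n := by exact_mod_cast hn
  have hlog : 0 ≤ Real.log n := Real.log_nonneg hn1
  have hM : 1 ≤ M := by
    have : 1 ≤ √(n : ℝ) := by rwa [Real.one_le_sqrt]
    exact one_le_mul_of_one_le_of_one_le this (by linarith)
  have hone : ∀ p ∈ S, 0 ≤ 1 + 1 / (p : ℝ) ∧ 1 + 1 / (p : ℝ) ≤ 2 := by
    intro p hp
    have : (1 : ℝ) ≤ p := by exact_mod_cast (hS p hp).1.one_lt.le
    have h2 : 1 / (p : ℝ) ≤ 1 := by rw [div_le_one (by linarith)]; exact this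
    exact ⟨by positivity, by linarith⟩
  have hrest : ∀ T ⊆ S, ∏ p ∈ T, (1 + 1 / (p : ℝ)) ≤ 2 ^ T.card := fun T hT =>
    (Finset.prod_le_prod (fun p hp => (hone p (hT hp)).1) fun p hp => (hone p (hT hp)).2).trans_eq
      (by simp)
  have hexp : ∑ c ∈ F, ∏ p ∈ S, sqInd p (b ^ 2 - 4 * A * c) =
      ∑ T ∈ S.powerset, (∑ c ∈ F, ∏ p ∈ T, ψ p c) * ∏ p ∈ S \ T, (1 + 1 / (p : ℝ)) := by
    have : ∀ c, ∏ p ∈ S, sqInd p (b ^ 2 - 4 * A * c) =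
        ∑ T ∈ S.powerset, (∏ p ∈ T, ψ p c) * ∏ p ∈ S \ T, (1 + 1 / (p : ℝ)) := by
      intro c
      rw [← Finset.prod_add]
      exact Finset.prod_congr rfl fun p _ => by simp [ψ]
    simp only [this]
    rw [Finset.sum_comm]
    simp only [Finset.sum_mul]
  have hmain : (2 * n + 1) / r * ∏ p ∈ S, (1 + 1 / (p : ℝ)) =
      ∑ T ∈ S.powerset, if T = ∅ then ((2 * n + 1) / r : ℝ) * ∏ p ∈ S \ T, (1 + 1 / (p : ℝ))
        else 0 := by
    rw [Finset.sum_ite_eq' S.powerset ∅]; simp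
  rw [hexp, hmain, ← Finset.sum_sub_distrib]
  have hterm : ∀ T ∈ S.powerset, |(∑ c ∈ F, ∏ p ∈ T, ψ p c) * ∏ p ∈ S \ T, (1 + 1 / (p : ℝ)) -
      (if T = ∅ then ((2 * n + 1) / r : ℝ) * ∏ p ∈ S \ T, (1 + 1 / (p : ℝ)) else 0)| ≤
        2 ^ S.card * M := by
    intro T hT
    rw [Finset.mem_powerset] at hT
    have hpos : 0 ≤ ∏ p ∈ S \ T, (1 + 1 / (p : ℝ)) :=
      Finset.prod_nonneg fun p hp => (hone p (Finset.sdiff_subset hp)).1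
    by_cases h0 : T = ∅
    · subst h0
      have hc := (abs_card_class_sub_lt n r hr0 c₀).le
      simp only [Finset.prod_empty, Finset.sum_const, nsmul_eq_mul, mul_one, if_true]
      rw [← sub_mul, abs_mul, abs_of_nonneg hpos, mul_comm]
      refine mul_le_mul ?_ (le_trans ?_ hM) (abs_nonneg _) (by positivity)
      · simpa using hrest S subset_rfl
      · exact_mod_cast hc
    · have hTne := Finset.nonempty_iff_ne_empty.mpr h0
      have ht := tame_prod T hTne (fun p hp => (hS p (hT hp)).1) (fun p => 2 * √(p : ℝ)) ψ
        fun p hp => tame_sqInd p (hS p (hT hp)).1 (hS p (hT hp)).2.1 A b (hS p (hT hp)).2.2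
      have hb := ht.sum_class_le r hr0
        (Nat.Coprime.prod_right fun p hp => hr p (hT hp)) c₀ n
      rw [if_neg h0, sub_zero, abs_mul, abs_of_nonneg hpos]
      have hTn : ∏ p ∈ T, p ≤ n := le_trans (Finset.prod_le_prod_of_subset_of_one_le' hT
        fun p hp _ => (hS p hp).1.one_lt.le) hprod
      have hT1 : 1 ≤ ∏ p ∈ T, p :=
        Finset.one_le_prod' fun p hp => (hS p (hT hp)).1.one_lt.le
      have hK : ∏ p ∈ T, (2 * √(p : ℝ)) ≤ 2 ^ T.card * √(n : ℝ) := by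
        rw [Finset.prod_mul_distrib, Finset.prod_const]
        refine mul_le_mul_of_nonneg_left ?_ (by positivity)
        rw [← Real.sqrt_prod]
        · apply Real.sqrt_le_sqrt; rw [← Nat.cast_prod]; exact_mod_cast hTn
        · intros; positivity
      have hL : Real.log ((∏ p ∈ T, p : ℕ) : ℝ) ≤ Real.log n :=
        Real.log_le_log (by exact_mod_cast hT1) (by exact_mod_cast hTn)
      have hL0 : 0 ≤ Real.log ((∏ p ∈ T, p : ℕ) : ℝ) :=
        Real.log_nonneg (by exact_mod_cast hT1)
      have hb2 : |∑ c ∈ F, ∏ p ∈ T, ψ p c| ≤ 2 ^ T.card * M := by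
        refine hb.trans ?_
        have : (2 : ℝ) ^ T.card * M = 2 ^ T.card * √(n : ℝ) * (1 + Real.log n) := by
          simp only [M]; ring
        rw [this]
        exact mul_le_mul hK (by linarith) (by linarith) (by positivity)
      calc _ ≤ (2 ^ T.card * M) * 2 ^ (S \ T).card :=
            mul_le_mul hb2 (hrest _ Finset.sdiff_subset) hpos (by positivity)
        _ = _ := by
            rw [← Finset.card_sdiff_add_card_eq_card hT, pow_add]; ring
  calc _ ≤ ∑ T ∈ S.powerset, 2 ^ S.card * M :=
        (Finset.abs_sum_le_sum_abs _ _).trans (Finset.sum_le_sum hterm)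
    _ = _ := by
        rw [Finset.sum_const, Finset.card_powerset, nsmul_eq_mul,
          show (4 : ℝ) = 2 * 2 by norm_num, mul_pow]
        push_cast; ring

/-! ### Bonferroni inequalities -/

/-- The part of the expansion of `∏ (1 - h q)` coming from fewer than `m` factors `-h q`. -/
def truncProd (m : ℕ) (Q : Finset ℕ) (h : ℕ → ℝ) : ℝ :=
  ∑ T ∈ Q.powerset, if T.card < m then ∏ q ∈ T, (-h q) else 0

lemma truncProd_succ_insert (m : ℕ) (Q : Finset ℕ) (h : ℕ → ℝ) (a : ℕ) (ha : a ∉ Q) :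
    truncProd (m + 1) (insert a Q) h = truncProd (m + 1) Q h - h a * truncProd m Q h := by
  unfold truncProd
  rw [Finset.sum_powerset_insert ha, Finset.mul_sum, sub_eq_add_neg, ← Finset.sum_neg_distrib]
  congr 1
  refine Finset.sum_congr rfl fun T hT => ?_
  have haT : a ∉ T := fun h => ha (Finset.mem_powerset.mp hT h)
  rw [Finset.card_insert_of_notMem haT, Finset.prod_insert haT]
  by_cases hm : T.card < m
  · rw [if_pos (by omega), if_pos hm]; ring
  · rw [if_neg (by omega), if_neg hm]; ring

/-- Bonferroni's inequalities. -/
lemma bonferroni (Q : Finset ℕ) (h : ℕ → ℝ) (h0 : ∀ q ∈ Q, 0 ≤ h q) (h1 : ∀ q ∈ Q, h q ≤ 1)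
    (L : ℕ) : truncProd (2 * L) Q h ≤ ∏ q ∈ Q, (1 - h q) ∧
      ∏ q ∈ Q, (1 - h q) ≤ truncProd (2 * L + 1) Q h := by
  induction Q using Finset.induction_on generalizing L with
  | empty => constructor <;> simp [truncProd]; split_ifs <;> norm_num
  | insert a Q ha ih =>
    have ih' := ih (fun q hq => h0 q (Finset.mem_insert_of_mem hq))
      (fun q hq => h1 q (Finset.mem_insert_of_mem hq))
    have ha0 := h0 a (Finset.mem_insert_self _ _)
    have ha1 := h1 a (Finset.mem_insert_self _ _)
    have hP : 0 ≤ ∏ q ∈ Q, (1 - h q) := Finset.prod_nonneg fun q hq => by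
      linarith [h1 q (Finset.mem_insert_of_mem hq)]
    rw [Finset.prod_insert ha]
    constructor
    · rcases L with _ | L
      · have : truncProd (2 * 0) (insert a Q) h = 0 := by simp [truncProd]
        rw [this]
        exact mul_nonneg (by linarith) hP
      · rw [show 2 * (L + 1) = (2 * L + 1) + 1 by ring, truncProd_succ_insert _ _ _ _ ha]
        have e1 := (ih' (L + 1)).1
        rw [show 2 * (L + 1) = (2 * L + 1) + 1 by ring] at e1
        nlinarith [mul_le_mul_of_nonneg_left (ih' L).2 ha0]
    · rw [truncProd_succ_insert _ _ _ _ ha]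
      nlinarith [mul_le_mul_of_nonneg_left (ih' L).1 ha0, (ih' L).2]

/-- Rankin's trick for the tail of the truncated product. -/
lemma truncProd_le (Q : Finset ℕ) (g : ℕ → ℝ) (h0 : ∀ q ∈ Q, 0 ≤ g q) (h1 : ∀ q ∈ Q, g q ≤ 1)
    (m : ℕ) (hm : 4 * ∑ q ∈ Q, g q ≤ m) :
    truncProd m Q g ≤ 2 * Real.exp (-∑ q ∈ Q, g q) := by
  set s := ∑ q ∈ Q, g q with hs
  have hs0 : 0 ≤ s := Finset.sum_nonneg h0
  have hfull : ∑ T ∈ Q.powerset, ∏ q ∈ T, (-g q) = ∏ q ∈ Q, (1 - g q) := by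
    rw [← Finset.prod_one_add]; simp [sub_eq_add_neg]
  have h2 : ∏ q ∈ Q, (1 - g q) ≤ Real.exp (-s) := by
    rw [hs, ← Finset.sum_neg_distrib, Real.exp_sum]
    refine Finset.prod_le_prod (fun q hq => by linarith [h1 q hq]) fun q _ => ?_
    linarith [Real.add_one_le_exp (-g q)]
  have h3 : truncProd m Q g ≤ ∏ q ∈ Q, (1 - g q) +
      Real.exp (-m) * ∏ q ∈ Q, (1 + Real.exp 1 * g q) := by
    rw [← hfull, Finset.prod_one_add, Finset.mul_sum, ← Finset.sum_add_distrib]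
    refine Finset.sum_le_sum fun T hT => ?_
    have hT' := Finset.mem_powerset.mp hT
    have hg : 0 ≤ ∏ q ∈ T, g q := Finset.prod_nonneg fun q hq => h0 q (hT' hq)
    have hexp : Real.exp (-m) * ∏ q ∈ T, (Real.exp 1 * g q) =
        Real.exp (T.card - m) * ∏ q ∈ T, g q := by
      rw [Finset.prod_mul_distrib, Finset.prod_const, ← Real.exp_nat_mul, ← mul_assoc,
        ← Real.exp_add]
      congr 2; ring
    rw [hexp]
    split_ifs with hc
    · have : 0 ≤ Real.exp (T.card - m) * ∏ q ∈ T, g q := by positivity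
      linarith
    · have hc' : (m : ℝ) ≤ T.card := by exact_mod_cast not_lt.mp hc
      have he : 1 ≤ Real.exp (T.card - m) := Real.one_le_exp (by linarith)
      have habs : |∏ q ∈ T, (-g q)| = ∏ q ∈ T, g q := by
        rw [Finset.abs_prod]
        exact Finset.prod_congr rfl fun q hq => by rw [abs_neg, abs_of_nonneg (h0 q (hT' hq))]
      have := neg_abs_le (∏ q ∈ T, (-g q))
      rw [habs] at this
      nlinarith
  have h4 : ∏ q ∈ Q, (1 + Real.exp 1 * g q) ≤ Real.exp (3 * s) := by
    rw [hs, Finset.mul_sum, Real.exp_sum]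
    refine Finset.prod_le_prod (fun q hq => by have := h0 q hq; positivity) fun q hq => ?_
    have e3 : Real.exp 1 ≤ 3 := by linarith [Real.exp_one_lt_d9]
    have := Real.add_one_le_exp (3 * g q)
    nlinarith [h0 q hq]
  have h5 : Real.exp (-m) * Real.exp (3 * s) ≤ Real.exp (-s) := by
    rw [← Real.exp_add]; apply Real.exp_le_exp.mpr; linarith
  have h6 := mul_le_mul_of_nonneg_left h4 (Real.exp_pos (-(m : ℝ))).le
  linarith

lemma sum_two_pow_card_le (Q : Finset ℕ) (M : ℕ) :
    ∑ T ∈ Q.powerset, (if T.card < M + 1 then (2 : ℝ) ^ T.card else 0) ≤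
      (2 * Q.card + 1) ^ M := by
  rw [Finset.sum_powerset_apply_card (fun j => if j < M + 1 then (2 : ℝ) ^ j else 0)]
  have h1 : ∀ j, Q.card.choose j • (if j < M + 1 then (2 : ℝ) ^ j else 0) ≤
      if j < M + 1 then ((2 * Q.card : ℝ)) ^ j else 0 := by
    intro j
    split_ifs with h
    · rw [nsmul_eq_mul, mul_pow, mul_comm]
      refine mul_le_mul_of_nonneg_left ?_ (by positivity)
      exact_mod_cast Nat.choose_le_pow _ _
    · simp
  calc _ ≤ ∑ j ∈ Finset.range (Q.card + 1), if j < M + 1 then ((2 * Q.card : ℝ)) ^ j else 0 :=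
        Finset.sum_le_sum fun j _ => h1 j
    _ ≤ ∑ j ∈ Finset.range (M + 1), ((2 * Q.card : ℝ)) ^ j := by
        rw [← Finset.sum_filter]
        refine Finset.sum_le_sum_of_subset_of_nonneg ?_ fun _ _ _ => by positivity
        intro j hj
        simpa using (Finset.mem_filter.mp hj).2
    _ ≤ ∑ j ∈ Finset.range (M + 1), ((2 * Q.card : ℝ)) ^ j * 1 ^ (M - j) * (M.choose j) := by
        refine Finset.sum_le_sum fun j hj => ?_
        have : 1 ≤ M.choose j := Nat.choose_pos (by simpa [Nat.lt_succ_iff] using hj)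
        have h' : (1 : ℝ) ≤ M.choose j := by exact_mod_cast this
        rw [one_pow, mul_one]
        exact le_mul_of_one_le_right (by positivity) h'
    _ = _ := by rw [add_pow]

lemma exists_class_of_dvd (r : ℕ) (A b : ℤ) (h : IsCoprime (4 * A) (r : ℤ)) :
    ∃ c₀ : ℤ, ∀ c : ℤ, (r : ℤ) ∣ b ^ 2 - 4 * A * c ↔ c ≡ c₀ [ZMOD r] := by
  obtain ⟨u, v, huv⟩ := h
  refine ⟨u * b ^ 2, fun c => ?_⟩
  rw [Int.modEq_iff_dvd]
  constructor
  · rintro ⟨k, hk⟩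
    refine ⟨u * k - v * c, ?_⟩
    linear_combination u * hk + c * huv
  · rintro ⟨k, hk⟩
    refine ⟨4 * A * k + v * b ^ 2, ?_⟩
    linear_combination 4 * A * hk - b ^ 2 * huv

open Classical in
/-- The indicator function of the integers exactly divisible by `q`. -/
def exInd (q : ℕ) (x : ℤ) : ℝ := if (q : ℤ) ∣ x ∧ ¬ (q : ℤ) ^ 2 ∣ x then 1 else 0

open Classical in
/-- The indicator function of the multiples of `r`. -/
def dvInd (r : ℕ) (x : ℤ) : ℝ := if (r : ℤ) ∣ x then 1 else 0

lemma neg_exInd (q : ℕ) (x : ℤ) : -exInd q x = dvInd (q ^ 2) x + -dvInd q x := by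
  unfold exInd dvInd
  push_cast
  by_cases h : (q : ℤ) ^ 2 ∣ x
  · have : (q : ℤ) ∣ x := (dvd_pow_self _ two_ne_zero).trans h
    simp [h, this]
  · simp [h]

lemma prod_dvInd (T : Finset ℕ) (r : ℕ → ℕ) (h : ∀ p ∈ T, ∀ q ∈ T, p ≠ q → (r p).Coprime (r q))
    (x : ℤ) : ∏ q ∈ T, dvInd (r q) x = dvInd (∏ q ∈ T, r q) x := by
  unfold dvInd
  by_cases hx : ∀ q ∈ T, ((r q : ℕ) : ℤ) ∣ x
  · rw [Finset.prod_eq_one fun q hq => if_pos (hx q hq), if_pos]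
    push_cast
    refine Finset.prod_dvd_of_coprime (fun p hp q hq hpq => ?_) hx
    exact Nat.isCoprime_iff_coprime.mpr (h p hp q hq hpq)
  · rw [if_neg]
    · push Not at hx
      obtain ⟨q, hq, hqx⟩ := hx
      exact Finset.prod_eq_zero hq (if_neg hqx)
    · intro hd
      apply hx
      intro q hq
      refine dvd_trans ?_ hd
      push_cast
      exact Finset.dvd_prod_of_mem (fun q => ((r q : ℕ) : ℤ)) hq

/-! ### Brun's sieve for the discriminant -/

/-- A single term of the inclusion–exclusion over sieving primes: each `-exInd q` is the difference of
two indicators of residue classes, so the product expands into `2^|T|` sums covered by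
`sum_prod_sqInd`. -/
lemma sum_prod_neg_exInd (n : ℕ) (hn : 1 ≤ n) (S : Finset ℕ) (A b : ℤ)
    (hS : ∀ p ∈ S, p.Prime ∧ p ≠ 2 ∧ ¬ (p : ℤ) ∣ A) (hprod : ∏ p ∈ S, p ≤ n)
    (T : Finset ℕ) (hT : ∀ q ∈ T, q.Prime ∧ q ≠ 2 ∧ ¬ (q : ℤ) ∣ A ∧ q ∉ S) :
    |∑ c ∈ Finset.Icc (-(n : ℤ)) n, (∏ p ∈ S, sqInd p (b ^ 2 - 4 * A * c)) *
        ∏ q ∈ T, (-exInd q (b ^ 2 - 4 * A * c)) -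
      (2 * n + 1) * (∏ p ∈ S, (1 + 1 / (p : ℝ))) * ∏ q ∈ T, (-(1 / (q : ℝ) - 1 / (q : ℝ) ^ 2))| ≤
      2 ^ T.card * (4 ^ S.card * (√(n : ℝ) * (1 + Real.log n))) := by
  classical
  set μ := ∏ p ∈ S, (1 + 1 / (p : ℝ))
  set E := 4 ^ S.card * (√(n : ℝ) * (1 + Real.log n)) with hE
  let w : ℤ → ℝ := fun c => ∏ p ∈ S, sqInd p (b ^ 2 - 4 * A * c)
  let R : Finset ℕ → ℕ → ℕ := fun U q => if q ∈ U then q ^ 2 else q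
  have hsplit : ∀ U ⊆ T, ∀ F : ℕ → ℝ, (∏ q ∈ U, F (q ^ 2)) * ∏ q ∈ T \ U, -F q =
      (-1) ^ (T \ U).card * ∏ q ∈ T, F (R U q) := by
    intro U hU F
    have hneg : ∏ q ∈ T \ U, -F q = (-1) ^ (T \ U).card * ∏ q ∈ T \ U, F q := by
      rw [← Finset.prod_const, ← Finset.prod_mul_distrib]; simp
    rw [hneg, ← Finset.prod_sdiff hU]
    have e1 : ∏ q ∈ U, F (R U q) = ∏ q ∈ U, F (q ^ 2) :=
      Finset.prod_congr rfl fun q hq => by simp [R, hq]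
    have e2 : ∏ q ∈ T \ U, F (R U q) = ∏ q ∈ T \ U, F q :=
      Finset.prod_congr rfl fun q hq => by simp [R, (Finset.mem_sdiff.mp hq).2]
    rw [e1, e2]; ring
  have hcop : ∀ U, ∀ p ∈ T, ∀ q ∈ T, p ≠ q → (R U p).Coprime (R U q) := by
    intro U p hp q hq hpq
    have := (Nat.coprime_primes (hT p hp).1 (hT q hq).1).mpr hpq
    simp only [R]
    split_ifs
    · exact this.pow 2 2
    · exact this.pow_left 2
    · exact this.pow_right 2
    · exact this
  have hexp : ∑ c ∈ Finset.Icc (-(n : ℤ)) n, w c * ∏ q ∈ T, (-exInd q (b ^ 2 - 4 * A * c)) =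
      ∑ U ∈ T.powerset, (-1) ^ (T \ U).card * ∑ c ∈ Finset.Icc (-(n : ℤ)) n,
        w c * dvInd (∏ q ∈ T, R U q) (b ^ 2 - 4 * A * c) := by
    have : ∀ c, w c * ∏ q ∈ T, (-exInd q (b ^ 2 - 4 * A * c)) = ∑ U ∈ T.powerset,
        (-1) ^ (T \ U).card * (w c * dvInd (∏ q ∈ T, R U q) (b ^ 2 - 4 * A * c)) := by
      intro c
      simp only [neg_exInd]
      rw [Finset.prod_add, Finset.mul_sum]
      refine Finset.sum_congr rfl fun U hU => ?_
      rw [hsplit U (Finset.mem_powerset.mp hU) (fun r => dvInd r (b ^ 2 - 4 * A * c)),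
        prod_dvInd T (R U) (hcop U)]
      ring
    simp only [this]
    rw [Finset.sum_comm]
    simp only [Finset.mul_sum]
  have hmain : (2 * n + 1) * μ * ∏ q ∈ T, (-(1 / (q : ℝ) - 1 / (q : ℝ) ^ 2)) =
      ∑ U ∈ T.powerset, (-1) ^ (T \ U).card *
        ((2 * n + 1) / ((∏ q ∈ T, R U q : ℕ) : ℝ) * μ) := by
    have : ∏ q ∈ T, (-(1 / (q : ℝ) - 1 / (q : ℝ) ^ 2)) =
        ∏ q ∈ T, (1 / ((q ^ 2 : ℕ) : ℝ) + -(1 / (q : ℝ))) :=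
      Finset.prod_congr rfl fun q _ => by push_cast; ring
    rw [this, Finset.prod_add, Finset.mul_sum]
    refine Finset.sum_congr rfl fun U hU => ?_
    rw [hsplit U (Finset.mem_powerset.mp hU) (fun r => 1 / (r : ℝ)), Finset.prod_div_distrib]
    push_cast
    simp only [Finset.prod_const_one]
    ring
  change |∑ c ∈ Finset.Icc (-(n : ℤ)) n, w c * ∏ q ∈ T, (-exInd q (b ^ 2 - 4 * A * c)) - _| ≤ _
  rw [hexp, hmain, ← Finset.sum_sub_distrib]
  refine (Finset.abs_sum_le_sum_abs _ _).trans ?_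
  have hterm : ∀ U ∈ T.powerset, |(-1) ^ (T \ U).card * ∑ c ∈ Finset.Icc (-(n : ℤ)) n,
        w c * dvInd (∏ q ∈ T, R U q) (b ^ 2 - 4 * A * c) -
      (-1) ^ (T \ U).card * ((2 * n + 1) / ((∏ q ∈ T, R U q : ℕ) : ℝ) * μ)| ≤ E := by
    intro U _
    rw [← mul_sub, abs_mul, abs_pow, abs_neg, abs_one, one_pow, one_mul]
    have hRpos : 0 < ∏ q ∈ T, R U q := Finset.prod_pos fun q hq => by
      have := (hT q hq).1.pos
      simp only [R]; split_ifs <;> positivity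
    have hRq : ∀ q ∈ T, ∀ m : ℤ, IsCoprime m (q : ℤ) → IsCoprime m ((R U q : ℕ) : ℤ) := by
      intro q _ m h
      simp only [R]
      split_ifs
      · push_cast; exact h.pow_right
      · exact h
    have hc4 : IsCoprime (4 * A) ((∏ q ∈ T, R U q : ℕ) : ℤ) := by
      push_cast
      refine IsCoprime.prod_right fun q hq => hRq q hq _ ?_
      obtain ⟨hq1, hq2, hqA, -⟩ := hT q hq
      have hpq : Prime (q : ℤ) := Nat.prime_iff_prime_int.mp hq1
      rw [isCoprime_comm, hpq.coprime_iff_not_dvd]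
      intro hd
      rcases hpq.dvd_or_dvd hd with h | h
      · have h' : q ∣ 2 ^ 2 := by exact_mod_cast h
        exact hq2 ((Nat.prime_dvd_prime_iff_eq hq1 Nat.prime_two).mp (hq1.dvd_of_dvd_pow h'))
      · exact hqA h
    obtain ⟨c₀, hc₀⟩ := exists_class_of_dvd _ A b hc4
    have hl1 := sum_prod_sqInd n hn S A b hS hprod (∏ q ∈ T, R U q) hRpos (by
      intro p hp
      refine Nat.Coprime.prod_left fun q hq => ?_
      have hqp : q.Coprime p := (Nat.coprime_primes (hT q hq).1 (hS p hp).1).mpr (by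
        rintro rfl; exact (hT q hq).2.2.2 hp)
      simp only [R]
      split_ifs
      · exact hqp.pow_left 2
      · exact hqp) c₀
    rw [Finset.sum_filter] at hl1
    refine le_trans (le_of_eq ?_) hl1
    congr 2
    refine Finset.sum_congr rfl fun c _ => ?_
    simp only [dvInd, hc₀ c, w]
    split_ifs <;> simp
  refine (Finset.sum_le_sum hterm).trans ?_
  rw [Finset.sum_const, Finset.card_powerset, nsmul_eq_mul]
  push_cast
  exact le_rfl

/-- Brun's sieve: an upper bound for the number of `c` such that `b² - 4Ac` is a square modulo
all `p ∈ S` and is not exactly divisible by any `q ∈ Q`. -/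
lemma brun_sieve (n : ℕ) (hn : 1 ≤ n) (S : Finset ℕ) (A b : ℤ)
    (hS : ∀ p ∈ S, p.Prime ∧ p ≠ 2 ∧ ¬ (p : ℤ) ∣ A) (hprod : ∏ p ∈ S, p ≤ n)
    (Q : Finset ℕ) (hQ : ∀ q ∈ Q, q.Prime ∧ q ≠ 2 ∧ ¬ (q : ℤ) ∣ A ∧ q ∉ S)
    (L : ℕ) (hL : 4 * ∑ q ∈ Q, (1 / (q : ℝ) - 1 / (q : ℝ) ^ 2) ≤ ((2 * L : ℕ) : ℝ))
    (F : Finset ℤ) (hF : F ⊆ Finset.Icc (-(n : ℤ)) n)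
    (hFS : ∀ c ∈ F, ∀ p ∈ S, IsSquare ((b ^ 2 - 4 * A * c : ℤ) : ZMod p))
    (hFQ : ∀ c ∈ F, ∀ q ∈ Q, (q : ℤ) ∣ b ^ 2 - 4 * A * c → (q : ℤ) ^ 2 ∣ b ^ 2 - 4 * A * c) :
    2 ^ S.card * (F.card : ℝ) ≤
      (2 * n + 1) * (∏ p ∈ S, (1 + 1 / (p : ℝ))) *
        (2 * Real.exp (-∑ q ∈ Q, (1 / (q : ℝ) - 1 / (q : ℝ) ^ 2))) +
      (2 * Q.card + 1) ^ (2 * L) * (4 ^ S.card * (√(n : ℝ) * (1 + Real.log n))) := by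
  set μ := ∏ p ∈ S, (1 + 1 / (p : ℝ))
  set E := 4 ^ S.card * (√(n : ℝ) * (1 + Real.log n)) with hE
  let g : ℕ → ℝ := fun q => 1 / (q : ℝ) - 1 / (q : ℝ) ^ 2
  let w : ℤ → ℝ := fun c => ∏ p ∈ S, sqInd p (b ^ 2 - 4 * A * c)
  have hn1 : (1 : ℝ) ≤ n := by exact_mod_cast hn
  have hE0 : 0 ≤ E := by
    have := Real.log_nonneg hn1
    positivity
  have hμ0 : 0 ≤ μ := Finset.prod_nonneg fun p _ => by positivity
  have hw0 : ∀ c, 0 ≤ w c := fun c => Finset.prod_nonneg fun p _ => sqInd_nonneg _ _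
  have hex0 : ∀ q x, 0 ≤ exInd q x := fun q x => by unfold exInd; split_ifs <;> norm_num
  have hex1 : ∀ q x, exInd q x ≤ 1 := fun q x => by unfold exInd; split_ifs <;> norm_num
  have hg : ∀ q ∈ Q, 0 ≤ g q ∧ g q ≤ 1 := by
    intro q hq
    have h1 : (1 : ℝ) ≤ q := by exact_mod_cast (hQ q hq).1.one_lt.le
    have h2 : (q : ℝ) ≤ (q : ℝ) ^ 2 := by nlinarith
    have h3 : 1 / (q : ℝ) ^ 2 ≤ 1 / q := one_div_le_one_div_of_le (by linarith) h2
    have h4 : 1 / (q : ℝ) ≤ 1 := by rw [div_le_one (by linarith)]; exact h1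
    have h5 : 0 ≤ 1 / (q : ℝ) ^ 2 := by positivity
    exact ⟨by simp only [g]; linarith, by simp only [g]; linarith⟩
  -- pass to the weighted sum
  have h1 : 2 ^ S.card * (F.card : ℝ) ≤ ∑ c ∈ Finset.Icc (-(n : ℤ)) n,
      w c * ∏ q ∈ Q, (1 - exInd q (b ^ 2 - 4 * A * c)) := by
    have e1 : 2 ^ S.card * (F.card : ℝ) =
        ∑ c ∈ F, w c * ∏ q ∈ Q, (1 - exInd q (b ^ 2 - 4 * A * c)) := by
      rw [mul_comm, ← nsmul_eq_mul, ← Finset.sum_const]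
      refine Finset.sum_congr rfl fun c hc => ?_
      have hw : w c = 2 ^ S.card := by
        simp only [w]
        rw [← Finset.prod_const]
        exact Finset.prod_congr rfl fun p hp => if_pos (hFS c hc p hp)
      rw [hw, Finset.prod_eq_one, mul_one]
      intro q hq
      have : exInd q (b ^ 2 - 4 * A * c) = 0 := if_neg fun h => h.2 (hFQ c hc q hq h.1)
      rw [this, sub_zero]
    rw [e1]
    refine Finset.sum_le_sum_of_subset_of_nonneg hF fun c _ _ => mul_nonneg (hw0 c) ?_
    exact Finset.prod_nonneg fun q _ => by linarith [hex1 q (b ^ 2 - 4 * A * c)]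
  have h2 : ∑ c ∈ Finset.Icc (-(n : ℤ)) n, w c * ∏ q ∈ Q, (1 - exInd q (b ^ 2 - 4 * A * c)) ≤
      ∑ c ∈ Finset.Icc (-(n : ℤ)) n, w c *
        truncProd (2 * L + 1) Q (fun q => exInd q (b ^ 2 - 4 * A * c)) :=
    Finset.sum_le_sum fun c _ => mul_le_mul_of_nonneg_left
      (bonferroni Q _ (fun q _ => hex0 q _) (fun q _ => hex1 q _) L).2 (hw0 c)
  have h3 : ∑ c ∈ Finset.Icc (-(n : ℤ)) n, w c *
        truncProd (2 * L + 1) Q (fun q => exInd q (b ^ 2 - 4 * A * c)) =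
      ∑ T ∈ Q.powerset, if T.card < 2 * L + 1 then ∑ c ∈ Finset.Icc (-(n : ℤ)) n,
        w c * ∏ q ∈ T, (-exInd q (b ^ 2 - 4 * A * c)) else 0 := by
    unfold truncProd
    simp only [Finset.mul_sum]
    rw [Finset.sum_comm]
    refine Finset.sum_congr rfl fun T _ => ?_
    split_ifs <;> simp
  have h4 : (∑ T ∈ Q.powerset, if T.card < 2 * L + 1 then ∑ c ∈ Finset.Icc (-(n : ℤ)) n,
        w c * ∏ q ∈ T, (-exInd q (b ^ 2 - 4 * A * c)) else 0) ≤
      (2 * n + 1) * μ * truncProd (2 * L + 1) Q g +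
        (∑ T ∈ Q.powerset, if T.card < 2 * L + 1 then (2 : ℝ) ^ T.card else 0) * E := by
    unfold truncProd
    rw [Finset.mul_sum, Finset.sum_mul, ← Finset.sum_add_distrib]
    refine Finset.sum_le_sum fun T hT => ?_
    split_ifs with hc
    · have := (abs_le.mp (sum_prod_neg_exInd n hn S A b hS hprod T
        fun q hq => hQ q (Finset.mem_powerset.mp hT hq))).2
      simp only [w, g]
      linarith
    · simp
  have h5 := truncProd_le Q g (fun q hq => (hg q hq).1) (fun q hq => (hg q hq).2) (2 * L + 1)
    (by push_cast at hL ⊢; simp only [g]; linarith)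
  have h6 := mul_le_mul_of_nonneg_right (sum_two_pow_card_le Q (2 * L)) hE0
  have h7 : (2 * n + 1) * μ * truncProd (2 * L + 1) Q g ≤
      (2 * n + 1) * μ * (2 * Real.exp (-∑ q ∈ Q, g q)) :=
    mul_le_mul_of_nonneg_left h5 (by positivity)
  linarith

/-! ### Mean values over the leading coefficient -/

lemma tame_jacobi (q : ℕ) (hq : q.Prime) (hq2 : q ≠ 2) (d : ℤ) (hd : ¬ (q : ℤ) ∣ d) :
    Tame q q (fun A => (jacobiSym (A * d) q : ℝ)) := by
  have := Fact.mk hq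
  have hd' : (d : ZMod q) ≠ 0 := by rwa [Ne, ZMod.intCast_zmod_eq_zero_iff_dvd]
  have hb : ∀ x : ZMod q, ‖((quadraticChar (ZMod q) x : ℤ) : ℂ)‖ ≤ 1 := by
    intro x
    rcases quadraticChar_isQuadratic (ZMod q) x with h | h | h <;> rw [h] <;> simp
  refine ⟨⟨hq.ne_zero⟩, fun x => ((quadraticChar (ZMod q) (x * d) : ℤ) : ℂ), ?_, ?_, ?_⟩
  · intro A
    simp only [← jacobiSym.legendreSym.to_jacobiSym, legendreSym]
    push_cast; rfl
  · simp only [map_mul]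
    push_cast
    rw [← Finset.sum_mul]
    have h0 := quadraticChar_sum_zero (F := ZMod q) (by rw [ZMod.ringChar_zmod_n]; exact hq2)
    have : ∑ x : ZMod q, ((quadraticChar (ZMod q) x : ℤ) : ℂ) = 0 := by exact_mod_cast h0
    rw [this, zero_mul]
  · intro χ
    refine (norm_sum_le _ _).trans ?_
    calc _ ≤ ∑ _x : ZMod q, (1 : ℝ) := Finset.sum_le_sum fun x _ => by
          rw [norm_mul, AddChar.norm_apply, mul_one]; exact hb _
      _ = q := by simp

lemma abs_jacobi_le_one (a : ℤ) (q : ℕ) : |(jacobiSym a q : ℝ)| ≤ 1 := by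
  rcases jacobiSym.trichotomy a q with h | h | h <;> rw [h] <;> simp

/-- A large sieve style mean square estimate for sums of Jacobi symbols over small primes. -/
lemma sum_jacobi_sq_le (n : ℕ) (d : ℤ) (l z : ℕ) (hl : 1 ≤ l) (Q : Finset ℕ)
    (hQ : ∀ q ∈ Q, q.Prime ∧ q ≠ 2 ∧ ¬ (q : ℤ) ∣ d ∧ l < q ∧ q ≤ z) (g : ℕ → ℝ)
    (hg : ∀ q ∈ Q, 0 ≤ g q ∧ g q ≤ 1 / q) :
    ∑ A ∈ Finset.Icc (-(n : ℤ)) n, (∑ q ∈ Q, g q * (jacobiSym (A * d) q : ℝ)) ^ 2 ≤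
      (2 * n + 1) / l + (z : ℝ) ^ 4 := by
  classical
  have hexp : ∑ A ∈ Finset.Icc (-(n : ℤ)) n, (∑ q ∈ Q, g q * (jacobiSym (A * d) q : ℝ)) ^ 2 =
      ∑ q ∈ Q, ∑ q' ∈ Q, g q * g q' * ∑ A ∈ Finset.Icc (-(n : ℤ)) n,
        ((jacobiSym (A * d) q : ℝ) * (jacobiSym (A * d) q' : ℝ)) := by
    simp only [pow_two, Finset.sum_mul_sum]
    simp only [Finset.mul_sum]
    rw [Finset.sum_comm]
    refine Finset.sum_congr rfl fun q _ => ?_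
    rw [Finset.sum_comm]
    refine Finset.sum_congr rfl fun q' _ => Finset.sum_congr rfl fun A _ => ?_
    ring
  have hcard : ((Finset.Icc (-(n : ℤ)) n).card : ℝ) = 2 * n + 1 := by
    rw [Int.card_Icc]
    have : ((n : ℤ) + 1 - -(n : ℤ)).toNat = 2 * n + 1 := by omega
    rw [this]; push_cast; ring
  have hterm : ∀ q ∈ Q, ∀ q' ∈ Q, g q * g q' * ∑ A ∈ Finset.Icc (-(n : ℤ)) n,
        ((jacobiSym (A * d) q : ℝ) * (jacobiSym (A * d) q' : ℝ)) ≤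
      (if q = q' then (2 * n + 1) * ((q : ℝ) ^ 2)⁻¹ else 0) + (z : ℝ) ^ 2 := by
    intro q hq q' hq'
    obtain ⟨hp, hp2, hpd, hlq, hqz⟩ := hQ q hq
    obtain ⟨hp', hp2', hpd', hlq', hqz'⟩ := hQ q' hq'
    obtain ⟨hg0, hg1⟩ := hg q hq
    obtain ⟨hg0', hg1'⟩ := hg q' hq'
    have hq0 : (0 : ℝ) < q := by exact_mod_cast hp.pos
    have hq0' : (0 : ℝ) < q' := by exact_mod_cast hp'.pos
    by_cases h : q = q'
    · subst h
      rw [if_pos rfl]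
      have h1 : ∑ A ∈ Finset.Icc (-(n : ℤ)) n,
          ((jacobiSym (A * d) q : ℝ) * (jacobiSym (A * d) q : ℝ)) ≤ 2 * n + 1 := by
        rw [← hcard]
        calc _ ≤ ∑ A ∈ Finset.Icc (-(n : ℤ)) n, (1 : ℝ) := Finset.sum_le_sum fun A _ => by
              rw [← abs_mul_abs_self]
              have := abs_jacobi_le_one (A * d) q
              exact mul_le_one₀ this (abs_nonneg _) this
          _ = _ := by simp
      have h2 : g q * g q ≤ ((q : ℝ) ^ 2)⁻¹ := by
        calc g q * g q ≤ 1 / q * (1 / q) := mul_le_mul hg1 hg1 hg0 (by positivity)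
          _ = _ := by field_simp
      calc _ ≤ ((q : ℝ) ^ 2)⁻¹ * (2 * n + 1) :=
            (mul_le_mul_of_nonneg_left h1 (by positivity)).trans
              (mul_le_mul_of_nonneg_right h2 (by positivity))
        _ ≤ _ := by nlinarith [sq_nonneg (z : ℝ)]
    · rw [if_neg h, zero_add]
      have ht := (tame_jacobi q hp hp2 d hpd).mul ((Nat.coprime_primes hp hp').mpr h)
        (tame_jacobi q' hp' hp2' d hpd')
      have hs := ht.sum_class_le 1 one_pos (Nat.coprime_one_left _) 0 n
      have hfil : (Finset.Icc (-(n : ℤ)) n).filter (fun x => x ≡ 0 [ZMOD (1 : ℕ)]) =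
          Finset.Icc (-(n : ℤ)) n :=
        Finset.filter_true_of_mem fun x _ => by simp [Int.modEq_one]
      rw [hfil] at hs
      have hlog : 1 + Real.log ((q * q' : ℕ) : ℝ) ≤ q * q' := by
        have : (0 : ℝ) < ((q * q' : ℕ) : ℝ) := by push_cast; positivity
        have := Real.log_le_sub_one_of_pos this
        push_cast at this ⊢
        linarith
      have hs' := (le_abs_self _).trans hs
      have h3 : (q : ℝ) * q' * (1 + Real.log ((q * q' : ℕ) : ℝ)) ≤ (q * q') * (q * q') :=
        mul_le_mul_of_nonneg_left hlog (by positivity)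
      have hz1 : (q : ℝ) ≤ z := by exact_mod_cast hqz
      have hz2 : (q' : ℝ) ≤ z := by exact_mod_cast hqz'
      calc _ ≤ g q * g q' * ((q * q') * (q * q')) :=
            mul_le_mul_of_nonneg_left (hs'.trans h3) (by positivity)
        _ ≤ (1 / q * (1 / q')) * ((q * q') * (q * q')) := by
            refine mul_le_mul_of_nonneg_right ?_ (by positivity)
            exact mul_le_mul hg1 hg1' hg0' (by positivity)
        _ = q * q' := by field_simp
        _ ≤ z * z := mul_le_mul hz1 hz2 hq0'.le (by positivity)
        _ = _ := by ring
  have hQz : (Q.card : ℝ) ≤ z := by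
    have : Q ⊆ Finset.Ioc 0 z := fun q hq => by
      have := hQ q hq
      simp only [Finset.mem_Ioc]; omega
    have := Finset.card_le_card this
    rw [Nat.card_Ioc, Nat.sub_zero] at this
    exact_mod_cast this
  rw [hexp]
  calc _ ≤ ∑ q ∈ Q, ∑ q' ∈ Q,
          ((if q = q' then (2 * n + 1) * ((q : ℝ) ^ 2)⁻¹ else 0) + (z : ℝ) ^ 2) :=
        Finset.sum_le_sum fun q hq => Finset.sum_le_sum fun q' hq' => hterm q hq q' hq'
    _ = (2 * n + 1) * ∑ q ∈ Q, ((q : ℝ) ^ 2)⁻¹ + Q.card * Q.card * (z : ℝ) ^ 2 := by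
        simp only [Finset.sum_add_distrib, Finset.sum_const, nsmul_eq_mul, Finset.mul_sum]
        congr 1
        · refine Finset.sum_congr rfl fun q hq => ?_
          rw [Finset.sum_ite_eq Q q, if_pos hq]
        · ring
    _ ≤ (2 * n + 1) * (l : ℝ)⁻¹ + z * z * (z : ℝ) ^ 2 := by
        gcongr
        by_cases hlz : l ≤ z
        · refine (Finset.sum_le_sum_of_subset_of_nonneg (t := Finset.Ioc l z) (fun q hq => ?_)
            fun _ _ _ => by positivity).trans ?_
          · have := hQ q hq
            simp only [Finset.mem_Ioc]; omega
          · have := sum_Ioc_inv_sq_le_sub (α := ℝ) (by omega : l ≠ 0) hlz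
            have h0 : (0 : ℝ) ≤ (z : ℝ)⁻¹ := by positivity
            linarith
        · have : Q = ∅ := Finset.eq_empty_of_forall_notMem fun q hq => by
            have := hQ q hq
            omega
          rw [this, Finset.sum_empty]; positivity
    _ = _ := by ring

/-- The number of elements of `S` dividing `A`. -/
def omegaIn (S : Finset ℕ) (A : ℤ) : ℕ := (S.filter fun p : ℕ => (p : ℤ) ∣ A).card

/-- Write `4^ω = ∑ 3^|T|` over the sets `T` of primes dividing `A`, and count the nonzero multiples
of `∏_{p ∈ T} p` up to `n`. -/
lemma sum_four_pow_omega_le (n : ℕ) (S : Finset ℕ) (hS : ∀ p ∈ S, p.Prime) :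
    ∑ A ∈ (Finset.Icc (-(n : ℤ)) n).erase 0, (4 : ℝ) ^ omegaIn S A ≤
      (2 * n + 1) * (∏ p ∈ S, (1 + 1 / (p : ℝ))) ^ 3 := by
  classical
  have hexp : ∀ A : ℤ, (4 : ℝ) ^ omegaIn S A =
      ∑ T ∈ S.powerset, 3 ^ T.card * dvInd (∏ p ∈ T, p) A := by
    intro A
    have h1 : (4 : ℝ) ^ omegaIn S A = ∏ p ∈ S, (1 + 3 * dvInd p A) := by
      rw [omegaIn, ← Finset.prod_const, Finset.prod_filter]
      refine Finset.prod_congr rfl fun p _ => ?_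
      unfold dvInd
      split_ifs <;> norm_num
    rw [h1, Finset.prod_one_add]
    refine Finset.sum_congr rfl fun T hT => ?_
    rw [Finset.prod_mul_distrib, Finset.prod_const, prod_dvInd T (fun p => p)]
    intro p hp q hq hpq
    have hT' := Finset.mem_powerset.mp hT
    exact (Nat.coprime_primes (hS p (hT' hp)) (hS q (hT' hq))).mpr hpq
  simp only [hexp]
  rw [Finset.sum_comm]
  simp only [← Finset.mul_sum]
  have hcount : ∀ r : ℕ, 0 < r →
      ∑ A ∈ (Finset.Icc (-(n : ℤ)) n).erase 0, dvInd r A ≤ (2 * n + 1) / r := by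
    intro r hr
    have h0 : (0 : ℤ) ∈ Finset.Icc (-(n : ℤ)) n := by simp
    have h1 := Finset.add_sum_erase _ (fun A => dvInd r A) h0
    have h2 : ∑ A ∈ Finset.Icc (-(n : ℤ)) n, dvInd r A =
        (((Finset.Icc (-(n : ℤ)) n).filter (fun x => x ≡ 0 [ZMOD r])).card : ℝ) := by
      rw [Finset.card_filter]
      push_cast
      refine Finset.sum_congr rfl fun A _ => ?_
      unfold dvInd
      simp only [Int.modEq_zero_iff_dvd]
    have h3 := (abs_lt.mp (abs_card_class_sub_lt n r hr 0)).2
    have h4 : dvInd r 0 = 1 := by simp [dvInd]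
    rw [h4] at h1
    linarith
  calc _ ≤ ∑ T ∈ S.powerset, 3 ^ T.card * ((2 * n + 1) / ((∏ p ∈ T, p : ℕ) : ℝ)) := by
        refine Finset.sum_le_sum fun T hT => mul_le_mul_of_nonneg_left (hcount _ ?_)
          (by positivity)
        exact Finset.prod_pos fun p hp => (hS p (Finset.mem_powerset.mp hT hp)).pos
    _ = (2 * n + 1) * ∏ p ∈ S, (1 + 3 / (p : ℝ)) := by
        rw [Finset.prod_one_add, Finset.mul_sum]
        refine Finset.sum_congr rfl fun T _ => ?_
        rw [Finset.prod_div_distrib, Finset.prod_const]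
        push_cast; ring
    _ ≤ _ := by
        refine mul_le_mul_of_nonneg_left ?_ (by positivity)
        rw [← Finset.prod_pow]
        refine Finset.prod_le_prod (fun p _ => by positivity) fun p _ => ?_
        have : 0 ≤ 1 / (p : ℝ) := by positivity
        have e : 3 / (p : ℝ) = 3 * (1 / p) := by ring
        rw [e]
        nlinarith [pow_nonneg this 3, pow_nonneg this 2]

/-! ### Summing the sieve bound over all forms -/

/-- The density `1/q - 1/q²` of the integers exactly divisible by the prime `q`. -/
def exDens (q : ℕ) : ℝ := 1 / (q : ℝ) - 1 / (q : ℝ) ^ 2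

lemma exDens_nonneg (q : ℕ) : 0 ≤ exDens q := by
  unfold exDens
  rcases Nat.eq_zero_or_pos q with rfl | hq
  · simp
  · have h1 : (1 : ℝ) ≤ q := by exact_mod_cast hq
    have : 1 / (q : ℝ) ^ 2 ≤ 1 / q := one_div_le_one_div_of_le (by linarith) (by nlinarith)
    linarith

lemma exDens_le (q : ℕ) : exDens q ≤ 1 / q := by
  unfold exDens
  have : 0 ≤ 1 / (q : ℝ) ^ 2 := by positivity
  linarith

/-- The primes `q ∈ Q` modulo which `A d` is not a square. -/
def sievePrimes (Q : Finset ℕ) (d A : ℤ) : Finset ℕ := Q.filter fun q => jacobiSym (A * d) q = -1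

lemma card_dvd_le_log (n : ℕ) (A : ℤ) (hA : A ≠ 0) (hAn : A ∈ Finset.Icc (-(n : ℤ)) n)
    (T : Finset ℕ) (hT : ∀ q ∈ T, q.Prime ∧ (q : ℤ) ∣ A) : T.card ≤ Nat.log 2 n := by
  have h1 := prod_primes_intDvd T (fun q hq => (hT q hq).1) A fun q hq => (hT q hq).2
  have h2 : ∏ p ∈ T, p ≤ n := by
    have := Int.natCast_dvd.mp h1
    have := Nat.le_of_dvd (Int.natAbs_pos.mpr hA) this
    rw [Finset.mem_Icc] at hAn
    omega
  have h3 : 2 ^ T.card ≤ ∏ p ∈ T, p := Finset.pow_card_le_prod T _ 2 fun q hq => (hT q hq).1.two_le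
  have hpos : 0 < 2 ^ T.card := by positivity
  exact Nat.le_log_of_pow_le one_lt_two (h3.trans h2)

/-- Average over `A` of the main term of the sieve. With `X` the weighted sum of the symbols
`(A d / q)` and `G = ∑ exDens q`, the sieving primes carry weight about `(G - X)/2`; values of `A`
with `X` not small are rare by `sum_jacobi_sq_le`. -/
lemma sum_two_pow_omega_exp_le (n : ℕ) (d : ℤ) (l z : ℕ) (hl : 1 ≤ l) (hln : Nat.log 2 n ≤ l)
    (Q : Finset ℕ) (hQ : ∀ q ∈ Q, q.Prime ∧ q ≠ 2 ∧ ¬ (q : ℤ) ∣ d ∧ l < q ∧ q ≤ z)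
    (S : Finset ℕ) (hS : ∀ p ∈ S, p.Prime) :
    ∑ A ∈ (Finset.Icc (-(n : ℤ)) n).erase 0,
        (2 : ℝ) ^ omegaIn S A * Real.exp (-∑ q ∈ sievePrimes Q d A, exDens q) ≤
      (2 * n + 1) * (∏ p ∈ S, (1 + 1 / (p : ℝ))) ^ 3 *
        (Real.exp (1 - (∑ q ∈ Q, exDens q) / 2) + 1 / √(l : ℝ)) +
      (2 * n + 1) / √(l : ℝ) + √(l : ℝ) * (z : ℝ) ^ 4 := by
  set G := ∑ q ∈ Q, exDens q
  let X : ℤ → ℝ := fun A => ∑ q ∈ Q, exDens q * (jacobiSym (A * d) q : ℝ)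
  have hl0 : (1 : ℝ) ≤ l := by exact_mod_cast hl
  have hsl : 0 < √(l : ℝ) := Real.sqrt_pos.mpr (by linarith)
  have hslsq : √(l : ℝ) * √(l : ℝ) = l := Real.mul_self_sqrt (by linarith)
  have hpt : ∀ A ∈ (Finset.Icc (-(n : ℤ)) n).erase 0,
      (2 : ℝ) ^ omegaIn S A * Real.exp (-∑ q ∈ sievePrimes Q d A, exDens q) ≤
        4 ^ omegaIn S A * (Real.exp (1 - G / 2) + 1 / √(l : ℝ)) + √(l : ℝ) * X A ^ 2 := by
    intro A hA
    rw [Finset.mem_erase] at hA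
    set s := ∑ q ∈ sievePrimes Q d A, exDens q with hs
    have hs0 : 0 ≤ s := Finset.sum_nonneg fun q _ => exDens_nonneg q
    set Z := ∑ q ∈ Q.filter (fun q => jacobiSym (A * d) q = 0), exDens q with hZ
    have hid : 2 * s = G - X A - Z := by
      simp only [hs, hZ, G, X, sievePrimes, Finset.sum_filter, Finset.mul_sum]
      rw [← Finset.sum_sub_distrib, ← Finset.sum_sub_distrib]
      refine Finset.sum_congr rfl fun q _ => ?_
      rcases jacobiSym.trichotomy (A * d) q with h | h | h <;> rw [h] <;> norm_num
      ring
    have hZ1 : Z ≤ 1 := by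
      have hc := card_dvd_le_log n A hA.1 hA.2
        (Q.filter (fun q => jacobiSym (A * d) q = 0)) (by
          intro q hq
          rw [Finset.mem_filter] at hq
          have hq' := hQ q hq.1
          have := Fact.mk hq'.1
          refine ⟨hq'.1, ?_⟩
          have h0 := hq.2
          rw [← jacobiSym.legendreSym.to_jacobiSym, legendreSym.eq_zero_iff,
            ZMod.intCast_zmod_eq_zero_iff_dvd] at h0
          rcases (Nat.prime_iff_prime_int.mp hq'.1).dvd_or_dvd h0 with h | h
          · exact h
          · exact absurd h hq'.2.2.1)
      have hc' : ((Q.filter (fun q => jacobiSym (A * d) q = 0)).card : ℝ) ≤ l := by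
        exact_mod_cast hc.trans hln
      calc Z ≤ ∑ q ∈ Q.filter (fun q => jacobiSym (A * d) q = 0), 1 / (l : ℝ) := by
            refine Finset.sum_le_sum fun q hq => (exDens_le q).trans ?_
            have := (hQ q (Finset.mem_filter.mp hq).1).2.2.2.1
            exact one_div_le_one_div_of_le (by linarith) (by exact_mod_cast this.le)
        _ = (Q.filter (fun q => jacobiSym (A * d) q = 0)).card * (1 / (l : ℝ)) := by simp
        _ ≤ l * (1 / (l : ℝ)) := by gcongr
        _ = 1 := by field_simp
    have h24 : (2 : ℝ) ^ omegaIn S A ≤ 4 ^ omegaIn S A := by gcongr; norm_num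
    have h2sq : (4 : ℝ) ^ omegaIn S A = (2 ^ omegaIn S A) ^ 2 := by
      rw [← pow_mul, mul_comm, pow_mul]; norm_num
    set w := (2 : ℝ) ^ omegaIn S A
    have hw : 0 < w := by positivity
    have he := Real.exp_pos (1 - G / 2)
    by_cases hX : X A ≤ 1
    · have h1 : Real.exp (-s) ≤ Real.exp (1 - G / 2) := Real.exp_le_exp.mpr (by linarith)
      have h2 : w * Real.exp (-s) ≤ 4 ^ omegaIn S A * Real.exp (1 - G / 2) :=
        mul_le_mul h24 h1 (Real.exp_pos _).le (by positivity)
      have h3 : 0 ≤ 4 ^ omegaIn S A * (1 / √(l : ℝ)) := by positivity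
      have h4 : 0 ≤ √(l : ℝ) * X A ^ 2 := by positivity
      linarith
    · push Not at hX
      have h1 : Real.exp (-s) ≤ 1 := Real.exp_le_one_iff.mpr (by linarith)
      have h2 : w * Real.exp (-s) ≤ w * X A := by
        refine mul_le_mul_of_nonneg_left (by linarith) hw.le
      have h3 : w * X A ≤ w ^ 2 * (1 / √(l : ℝ)) + √(l : ℝ) * X A ^ 2 := by
        have e : w ^ 2 * (1 / √(l : ℝ)) + √(l : ℝ) * X A ^ 2 - w * X A =
            (1 / √(l : ℝ)) * (w ^ 2 + (√(l : ℝ) * X A) ^ 2 - w * (√(l : ℝ) * X A)) := by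
          field_simp
        have : 0 ≤ (1 / √(l : ℝ)) * (w ^ 2 + (√(l : ℝ) * X A) ^ 2 - w * (√(l : ℝ) * X A)) := by
          refine mul_nonneg (by positivity) ?_
          nlinarith [sq_nonneg (w - √(l : ℝ) * X A), sq_nonneg w, sq_nonneg (√(l : ℝ) * X A)]
        linarith
      have h4 : 0 ≤ 4 ^ omegaIn S A * Real.exp (1 - G / 2) := by positivity
      rw [← h2sq] at h3
      linarith
  have hX2 : ∑ A ∈ (Finset.Icc (-(n : ℤ)) n).erase 0, X A ^ 2 ≤ (2 * n + 1) / l + (z : ℝ) ^ 4 :=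
    (Finset.sum_le_sum_of_subset_of_nonneg (Finset.erase_subset _ _)
      fun _ _ _ => sq_nonneg _).trans (sum_jacobi_sq_le n d l z hl Q hQ exDens
        fun q _ => ⟨exDens_nonneg q, exDens_le q⟩)
  have h4 := sum_four_pow_omega_le n S hS
  refine (Finset.sum_le_sum hpt).trans ?_
  rw [Finset.sum_add_distrib, ← Finset.sum_mul, ← Finset.mul_sum]
  have h5 := mul_le_mul_of_nonneg_right h4
    (by positivity : 0 ≤ Real.exp (1 - G / 2) + 1 / √(l : ℝ))
  have h6 := mul_le_mul_of_nonneg_left hX2 hsl.le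
  have h7 : √(l : ℝ) * ((2 * n + 1) / l + (z : ℝ) ^ 4) =
      (2 * n + 1) / √(l : ℝ) + √(l : ℝ) * (z : ℝ) ^ 4 := by
    rw [mul_add]
    congr 1
    rw [mul_div_assoc', div_eq_div_iff (by linarith) hsl.ne']
    linear_combination (2 * (n : ℝ) + 1) * hslsq
  linarith

/-- The sieve bound summed over `a₂` and `a₁`, with free parameters `l`, `z`, `Q`, `L`. For fixed
`A = a₂ ≠ 0` the sieve uses the primes of `S` not dividing `A` and the primes of `Q` modulo which
`A d` is a nonsquare; the primes of `S` dividing `A` cost a factor `2^ω`. -/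
lemma card_forms_le (n : ℕ) (hn : 1 ≤ n) (d : ℤ) (hd : d ≠ 0) (hdn : d.natAbs ≤ n)
    (l z : ℕ) (hl : 1 ≤ l) (hln : Nat.log 2 n ≤ l)
    (Q : Finset ℕ) (hQ : ∀ q ∈ Q, q.Prime ∧ q ≠ 2 ∧ ¬ (q : ℤ) ∣ d ∧ l < q ∧ q ≤ z)
    (S : Finset ℕ) (hS : ∀ p ∈ S, p ≠ 2 ∧ p ∈ exactPrimes d)
    (L : ℕ) (hL : 4 * ∑ q ∈ Q, exDens q ≤ ((2 * L : ℕ) : ℝ))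
    (W : Finset (Fin (2 * 1 + 1) → ℤ))
    (hW : ∀ a ∈ W, (∀ i, a i ∈ Finset.Icc (-(n : ℤ)) n) ∧ HasOddDegPoint (2 * 1) d a) :
    2 ^ S.card * (W.card : ℝ) ≤ 2 ^ S.card * (2 * n + 1) ^ 2 +
      2 * (2 * n + 1) ^ 2 * (∏ p ∈ S, (1 + 1 / (p : ℝ))) *
        ((2 * n + 1) * (∏ p ∈ S, (1 + 1 / (p : ℝ))) ^ 3 *
          (Real.exp (1 - (∑ q ∈ Q, exDens q) / 2) + 1 / √(l : ℝ)) +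
          (2 * n + 1) / √(l : ℝ) + √(l : ℝ) * (z : ℝ) ^ 4) +
      (2 * n + 1) ^ 2 * (2 * z + 1) ^ (2 * L) * (8 ^ S.card * (√(n : ℝ) * (1 + Real.log n))) := by
  classical
  set I := Finset.Icc (-(n : ℤ)) n with hI
  set P := ∏ p ∈ S, (1 + 1 / (p : ℝ))
  set M := √(n : ℝ) * (1 + Real.log n) with hM
  have hn1 : (1 : ℝ) ≤ n := by exact_mod_cast hn
  have hM0 : 0 ≤ M := by
    have := Real.log_nonneg hn1
    positivity
  have hP0 : 0 ≤ P := Finset.prod_nonneg fun p _ => by positivity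
  have hSp : ∀ p ∈ S, p.Prime ∧ (p : ℤ) ∣ d ∧ ¬ (p : ℤ) ^ 2 ∣ d := fun p hp =>
    (mem_exactPrimes hd).mp (hS p hp).2
  have hSn : ∀ T ⊆ S, ∏ p ∈ T, p ≤ n := fun T hT =>
    (prod_exactPrimes_le hd T fun p hp => (hS p (hT hp)).2).trans hdn
  have hIcard : (I.card : ℝ) = 2 * n + 1 := by
    rw [hI, Int.card_Icc]
    have : ((n : ℤ) + 1 - -(n : ℤ)).toNat = 2 * n + 1 := by omega
    rw [this]; push_cast; ring
  have hQz : (Q.card : ℝ) ≤ z := by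
    have : Q ⊆ Finset.Ioc 0 z := fun q hq => by
      have := hQ q hq
      simp only [Finset.mem_Ioc]; omega
    have := Finset.card_le_card this
    rw [Nat.card_Ioc, Nat.sub_zero] at this
    exact_mod_cast this
  let F : ℤ × ℤ → Finset ℤ := fun x => (W.filter fun a => (a 2, a 1) = x).image fun a => a 0
  have hFcard : ∀ x, (W.filter fun a => (a 2, a 1) = x).card = (F x).card := by
    intro x
    rw [Finset.card_image_of_injOn]
    intro a ha b hb hab
    have ha' := (Finset.mem_filter.mp ha).2
    have hb' := (Finset.mem_filter.mp hb).2
    rw [← hb', Prod.mk.injEq] at ha'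
    funext i
    fin_cases i
    · exact hab
    · exact ha'.2
    · exact ha'.1
  have hFI : ∀ x, F x ⊆ I := by
    intro x c hc
    obtain ⟨a, ha, rfl⟩ := Finset.mem_image.mp hc
    exact (hW a (Finset.mem_filter.mp ha).1).1 0
  have hFpt : ∀ x, ∀ c ∈ F x, ∃ a, a 2 = x.1 ∧ a 1 = x.2 ∧ a 0 = c ∧
      HasOddDegPoint (2 * 1) d a := by
    intro x c hc
    obtain ⟨a, ha, rfl⟩ := Finset.mem_image.mp hc
    obtain ⟨ha1, rfl⟩ := Finset.mem_filter.mp ha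
    exact ⟨a, rfl, rfl, rfl, (hW a ha1).2⟩
  have hWsum : (W.card : ℝ) = ∑ A ∈ I, ∑ b ∈ I, ((F (A, b)).card : ℝ) := by
    rw [← Finset.sum_product',
      Finset.card_eq_sum_card_fiberwise (f := fun a => (a 2, a 1)) (t := I ×ˢ I)]
    · push_cast
      exact Finset.sum_congr rfl fun x _ => by rw [hFcard]
    · intro a ha
      exact Finset.mem_product.mpr ⟨(hW a ha).1 2, (hW a ha).1 1⟩
  -- the forms with vanishing leading coefficient are counted trivially
  have hzero : 2 ^ S.card * ∑ b ∈ I, ((F (0, b)).card : ℝ) ≤ 2 ^ S.card * (2 * n + 1) ^ 2 := by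
    refine mul_le_mul_of_nonneg_left ?_ (by positivity)
    calc _ ≤ ∑ b ∈ I, (I.card : ℝ) :=
          Finset.sum_le_sum fun b _ => by exact_mod_cast Finset.card_le_card (hFI _)
      _ = _ := by rw [Finset.sum_const, nsmul_eq_mul, hIcard]; ring
  set R := (2 * (z : ℝ) + 1) ^ (2 * L) * (8 ^ S.card * M) with hR
  have hfib : ∀ A ∈ I.erase 0, ∀ b ∈ I, 2 ^ S.card * ((F (A, b)).card : ℝ) ≤
      2 * (2 * n + 1) * P *
        (2 ^ omegaIn S A * Real.exp (-∑ q ∈ sievePrimes Q d A, exDens q)) + R := by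
    intro A hA b _
    have hA0 := (Finset.mem_erase.mp hA).1
    set S' := S.filter fun p : ℕ => ¬ (p : ℤ) ∣ A with hS'
    have hS'S : S' ⊆ S := Finset.filter_subset _ _
    have hcardS : omegaIn S A + S'.card = S.card :=
      Finset.card_filter_add_card_filter_not _
    have hQ' : ∀ q ∈ sievePrimes Q d A, ¬ IsSquare ((A * d : ℤ) : ZMod q) := fun q hq =>
      ZMod.nonsquare_of_jacobiSym_eq_neg_one (Finset.mem_filter.mp hq).2
    have hQQ : ∀ q ∈ sievePrimes Q d A, q ∈ Q := fun q hq => (Finset.mem_filter.mp hq).1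
    have hb := brun_sieve n hn S' A b
      (fun p hp => ⟨(hSp p (hS'S hp)).1, (hS p (hS'S hp)).1, (Finset.mem_filter.mp hp).2⟩)
      (hSn S' hS'S) (sievePrimes Q d A) (by
        intro q hq
        have h1 := hQ q (hQQ q hq)
        refine ⟨h1.1, h1.2.1, ?_, fun hqS => h1.2.2.1 (hSp q (hS'S hqS)).2.1⟩
        intro hqA
        refine hQ' q hq ?_
        rw [(ZMod.intCast_zmod_eq_zero_iff_dvd (A * d) q).mpr (hqA.mul_right d)]
        exact IsSquare.zero) L (by
        refine le_trans ?_ hL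
        gcongr
        exact Finset.sum_le_sum_of_subset_of_nonneg (Finset.filter_subset _ _)
          fun q _ _ => exDens_nonneg q)
      (F (A, b)) (hFI _) (by
        intro c hc p hp
        obtain ⟨a, rfl, rfl, rfl, hpt⟩ := hFpt _ c hc
        exact disc_isSquare_of_point d a hpt p (hSp p (hS'S hp)).1 (hS p (hS'S hp)).1
          (hSp p (hS'S hp)).2.1 (hSp p (hS'S hp)).2.2) (by
        intro c hc q hq hqD
        by_contra hqD2
        obtain ⟨a, ha2, ha1, rfl, hpt⟩ := hFpt _ c hc
        simp only at ha2 ha1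
        subst ha2 ha1
        exact not_point_of_disc d a hA0 q (hQ q (hQQ q hq)).1 (hQ q (hQQ q hq)).2.1 hqD hqD2
          (hQ' q hq) hpt)
    set s := ∑ q ∈ sievePrimes Q d A, exDens q with hs
    have hs' : ∑ q ∈ sievePrimes Q d A, (1 / (q : ℝ) - 1 / (q : ℝ) ^ 2) = s := rfl
    rw [hs'] at hb
    have hμ : ∏ p ∈ S', (1 + 1 / (p : ℝ)) ≤ P := by
      refine Finset.prod_le_prod_of_subset_of_one_le hS'S (fun p _ => by positivity) fun p _ _ => ?_
      have : 0 ≤ 1 / (p : ℝ) := by positivity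
      linarith
    have hcQ : ((sievePrimes Q d A).card : ℝ) ≤ z := by
      refine le_trans ?_ hQz
      exact_mod_cast Finset.card_filter_le _ _
    have h1 : 2 ^ S'.card * ((F (A, b)).card : ℝ) ≤ (2 * n + 1) * P * (2 * Real.exp (-s)) +
        (2 * z + 1) ^ (2 * L) * (4 ^ S'.card * M) := by
      refine hb.trans ?_
      gcongr
    have h2 := mul_le_mul_of_nonneg_left h1 (by positivity : (0 : ℝ) ≤ 2 ^ omegaIn S A)
    have h3 : (2 : ℝ) ^ omegaIn S A * (2 ^ S'.card * ((F (A, b)).card : ℝ)) =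
        2 ^ S.card * ((F (A, b)).card : ℝ) := by
      rw [← hcardS, pow_add]; ring
    have h4 : (2 : ℝ) ^ omegaIn S A * 4 ^ S'.card ≤ 8 ^ S.card := by
      calc (2 : ℝ) ^ omegaIn S A * 4 ^ S'.card ≤ 8 ^ omegaIn S A * 8 ^ S'.card := by
            gcongr <;> norm_num
        _ = _ := by rw [← hcardS, pow_add]
    have h5 : (2 : ℝ) ^ omegaIn S A * ((2 * z + 1) ^ (2 * L) * (4 ^ S'.card * M)) ≤ R := by
      calc _ = (2 * (z : ℝ) + 1) ^ (2 * L) * ((2 ^ omegaIn S A * 4 ^ S'.card) * M) := by ring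
        _ ≤ _ := by rw [hR]; gcongr
    rw [h3, mul_add] at h2
    linarith
  have hsplit : 2 ^ S.card * (W.card : ℝ) = 2 ^ S.card * ∑ b ∈ I, ((F (0, b)).card : ℝ) +
      ∑ A ∈ I.erase 0, ∑ b ∈ I, 2 ^ S.card * ((F (A, b)).card : ℝ) := by
    have h0 : (0 : ℤ) ∈ I := by simp [hI]
    rw [hWsum, ← Finset.add_sum_erase I _ h0, mul_add]
    congr 1
    simp only [Finset.mul_sum]
  have hstar := sum_two_pow_omega_exp_le n d l z hl hln Q hQ S fun p hp => (hSp p hp).1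
  have hR0 : 0 ≤ R := by positivity
  have hrest : ∑ A ∈ I.erase 0, ∑ b ∈ I, 2 ^ S.card * ((F (A, b)).card : ℝ) ≤
      2 * (2 * n + 1) ^ 2 * P * (∑ A ∈ I.erase 0,
        (2 : ℝ) ^ omegaIn S A * Real.exp (-∑ q ∈ sievePrimes Q d A, exDens q)) +
        (2 * n + 1) ^ 2 * R := by
    calc _ ≤ ∑ A ∈ I.erase 0, ∑ b ∈ I, (2 * (2 * n + 1) * P *
          (2 ^ omegaIn S A * Real.exp (-∑ q ∈ sievePrimes Q d A, exDens q)) + R) :=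
          Finset.sum_le_sum fun A hA => Finset.sum_le_sum fun b hb => hfib A hA b hb
      _ = 2 * (2 * n + 1) ^ 2 * P * (∑ A ∈ I.erase 0,
            (2 : ℝ) ^ omegaIn S A * Real.exp (-∑ q ∈ sievePrimes Q d A, exDens q)) +
          (I.erase 0).card * (2 * n + 1) * R := by
          simp only [Finset.sum_const, nsmul_eq_mul, hIcard]
          rw [← Finset.mul_sum, Finset.sum_add_distrib, ← Finset.mul_sum, Finset.sum_const,
            nsmul_eq_mul]
          ring
      _ ≤ _ := by
          have : ((I.erase 0).card : ℝ) ≤ 2 * n + 1 := by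
            rw [← hIcard]; exact_mod_cast Finset.card_le_card (Finset.erase_subset _ _)
          have : ((I.erase 0).card : ℝ) * (2 * n + 1) * R ≤ (2 * n + 1) * (2 * n + 1) * R := by
            gcongr
          linarith
  have h9 := mul_le_mul_of_nonneg_left hstar (by positivity : 0 ≤ 2 * (2 * (n : ℝ) + 1) ^ 2 * P)
  have h10 : (2 * (n : ℝ) + 1) ^ 2 * (2 * z + 1) ^ (2 * L) * (8 ^ S.card * M) =
      (2 * n + 1) ^ 2 * R := by rw [hR]; ring
  rw [hsplit, h10]
  linarith

/-! ### Sums of reciprocals of primes -/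

/-- The sum `∑_{p ≤ x} 1/p` over primes. -/
def primeRecip (x : ℕ) : ℝ := ∑ p ∈ Nat.primesBelow (x + 1), 1 / (p : ℝ)

/-- The primes in `(2^j, 2^(j+1)]`, at most `2^j` in number, contribute at most `1` to the sum of
reciprocals; the primorial bound `∏_{p ≤ x} p ≤ 4^x` improves this to `4/j`. -/
lemma primeRecip_two_pow_succ (j : ℕ) :
    primeRecip (2 ^ (j + 1)) ≤ primeRecip (2 ^ j) + 1 ∧
      j * (primeRecip (2 ^ (j + 1)) - primeRecip (2 ^ j)) ≤ 4 := by
  set T := (Finset.Ioc (2 ^ j) (2 ^ (j + 1))).filter Nat.Prime with hT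
  have hsplit : Nat.primesBelow (2 ^ (j + 1) + 1) = Nat.primesBelow (2 ^ j + 1) ∪ T := by
    ext p
    have : 2 ^ (j + 1) = 2 * 2 ^ j := by ring
    simp only [Nat.primesBelow, hT, Finset.mem_union, Finset.mem_filter, Finset.mem_range,
      Finset.mem_Ioc]
    constructor
    · rintro ⟨h1, h2⟩
      rcases Nat.lt_or_ge p (2 ^ j + 1) with h | h
      · exact Or.inl ⟨h, h2⟩
      · exact Or.inr ⟨⟨by omega, by omega⟩, h2⟩
    · rintro (⟨h1, h2⟩ | ⟨⟨h1, h3⟩, h2⟩)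
      · exact ⟨by omega, h2⟩
      · exact ⟨by omega, h2⟩
  have hdis : Disjoint (Nat.primesBelow (2 ^ j + 1)) T := by
    rw [Finset.disjoint_left]
    intro p hp hp'
    simp only [Nat.primesBelow, hT, Finset.mem_filter, Finset.mem_range, Finset.mem_Ioc] at hp hp'
    omega
  have hsum : primeRecip (2 ^ (j + 1)) - primeRecip (2 ^ j) = ∑ p ∈ T, 1 / (p : ℝ) := by
    rw [primeRecip, primeRecip, hsplit, Finset.sum_union hdis]; ring
  have hle : ∑ p ∈ T, 1 / (p : ℝ) ≤ T.card * (1 / 2 ^ j) := by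
    rw [← nsmul_eq_mul]
    refine Finset.sum_le_card_nsmul _ _ _ fun p hp => ?_
    have hp2 : 2 ^ j < p := (Finset.mem_Ioc.mp (Finset.mem_filter.mp hp).1).1
    refine one_div_le_one_div_of_le (by positivity) ?_
    exact_mod_cast hp2.le
  have hpos : (0 : ℝ) < 2 ^ j := by positivity
  constructor
  · have hc : T.card ≤ 2 ^ j := by
      refine (Finset.card_filter_le _ _).trans ?_
      rw [Nat.card_Ioc, pow_succ]; omega
    have hc' : (T.card : ℝ) ≤ 2 ^ j := by exact_mod_cast hc
    have : (T.card : ℝ) * (1 / 2 ^ j) ≤ 1 := by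
      rw [mul_one_div, div_le_one hpos]; exact hc'
    linarith
  · have h1 : (2 ^ j) ^ T.card ≤ ∏ p ∈ T, p :=
      Finset.pow_card_le_prod _ _ _ fun p hp =>
        (Finset.mem_Ioc.mp (Finset.mem_filter.mp hp).1).1.le
    have h2 : ∏ p ∈ T, p ≤ primorial (2 ^ (j + 1)) := by
      refine Finset.prod_le_prod_of_subset_of_one_le' ?_ fun p hp _ =>
        (Finset.mem_filter.mp hp).2.one_lt.le
      intro p hp
      simp only [hT, Finset.mem_filter, Finset.mem_range, Finset.mem_Ioc] at hp ⊢
      exact ⟨by omega, hp.2⟩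
    have h3 : 2 ^ (j * T.card) ≤ 2 ^ (2 * 2 ^ (j + 1)) := by
      rw [pow_mul, pow_mul]
      exact (h1.trans h2).trans (primorial_le_four_pow _)
    have h4 : j * T.card ≤ 2 * 2 ^ (j + 1) := (Nat.pow_le_pow_iff_right (by norm_num)).mp h3
    have h5 : (j : ℝ) * T.card ≤ 4 * 2 ^ j := by
      have : ((j * T.card : ℕ) : ℝ) ≤ ((2 * 2 ^ (j + 1) : ℕ) : ℝ) := by exact_mod_cast h4
      push_cast at this
      rw [pow_succ] at this; linarith
    rw [hsum]
    calc (j : ℝ) * ∑ p ∈ T, 1 / (p : ℝ) ≤ j * (T.card * (1 / 2 ^ j)) := by gcongr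
      _ = (j * T.card) / 2 ^ j := by ring
      _ ≤ 4 := by rw [div_le_iff₀ hpos]; exact h5

lemma primeRecip_two_pow_le (J : ℕ) : primeRecip (2 ^ J) ≤ J := by
  induction J with
  | zero =>
    have : Nat.primesBelow 2 = ∅ := by decide
    simp [primeRecip, this]
  | succ J ih =>
    have := (primeRecip_two_pow_succ J).1
    push_cast; linarith

/-- `∑_{p ≤ 2^J} 1/p` grows more slowly than any linear function of `J`; slope `1/100` suffices
for the application. -/
lemma primeRecip_two_pow_le' (J : ℕ) : primeRecip (2 ^ J) ≤ 400 + J / 100 := by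
  induction J with
  | zero => have := primeRecip_two_pow_le 0; norm_num at this ⊢; linarith
  | succ J ih =>
    rcases Nat.lt_or_ge J 400 with h | h
    · have := primeRecip_two_pow_le (J + 1)
      have h' : ((J + 1 : ℕ) : ℝ) ≤ 400 := by exact_mod_cast h
      have : (0 : ℝ) ≤ ((J + 1 : ℕ) : ℝ) / 100 := by positivity
      linarith
    · have h1 := (primeRecip_two_pow_succ J).2
      have h' : (400 : ℝ) ≤ J := by exact_mod_cast h
      have : primeRecip (2 ^ (J + 1)) - primeRecip (2 ^ J) ≤ 1 / 100 := by
        by_contra hc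
        push Not at hc
        nlinarith
      push_cast; linarith

/-- The Euler product over primes `p ≤ z` dominates the harmonic sum up to `z`; taking logarithms
gives the lower bound `∑_{p ≤ z} 1/p ≥ log log z - 1`. -/
lemma log_le_exp_primeRecip (z : ℕ) (hz : 1 ≤ z) : Real.log z ≤ Real.exp (primeRecip z + 1) := by
  let f : ℕ →* ℝ :=
    { toFun := fun k => ((k : ℝ))⁻¹
      map_one' := by simp
      map_mul' := fun a b => by simp [mul_comm] }
  have hf : ∀ k, f k = (k : ℝ)⁻¹ := fun _ => rfl
  obtain ⟨-, hs⟩ := EulerProduct.summable_and_hasSum_smoothNumbers_prod_primesBelow_geometric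
    (f := f) (fun {p} hp => by
      rw [hf, norm_inv, Real.norm_natCast]
      exact inv_lt_one_of_one_lt₀ (by exact_mod_cast hp.one_lt)) (z + 1)
  have hlow : (harmonic z : ℝ) ≤ ∏ p ∈ (z + 1).primesBelow, (1 - f p)⁻¹ := by
    have hsub : ∀ k ∈ Finset.Icc 1 z, k ∈ (z + 1).smoothNumbers := fun k hk => by
      rw [Finset.mem_Icc] at hk
      exact Nat.mem_smoothNumbers_of_lt (by omega) (by omega)
    have h1 := sum_le_hasSum ((Finset.Icc 1 z).attach.map
      ⟨fun k => (⟨k.1, hsub k.1 k.2⟩ : (z + 1).smoothNumbers), fun a b hab =>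
        Subtype.ext (Subtype.mk.inj hab)⟩)
      (fun k _ => by rw [hf]; positivity) hs
    rw [Finset.sum_map] at h1
    refine le_trans (le_of_eq ?_) h1
    rw [harmonic_eq_sum_Icc]
    push_cast
    rw [← Finset.sum_attach]
    rfl
  have h2 : Real.log z ≤ harmonic z := by
    refine le_trans (Real.log_le_log (by exact_mod_cast hz) ?_) (log_add_one_le_harmonic z)
    push_cast; linarith
  refine h2.trans (hlow.trans ?_)
  have hfac : ∀ p ∈ (z + 1).primesBelow,
      (1 - f p)⁻¹ ≤ Real.exp (1 / (p : ℝ) + 1 / ((p : ℝ) * (p - 1))) := by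
    intro p hp
    have hp2 : (2 : ℝ) ≤ p := by exact_mod_cast (Nat.prime_of_mem_primesBelow hp).two_le
    have e : (1 - f p)⁻¹ = 1 + (1 / (p : ℝ) + 1 / ((p : ℝ) * (p - 1))) := by
      rw [hf]
      have : (p : ℝ) - 1 ≠ 0 := by linarith
      have : (p : ℝ) ≠ 0 := by linarith
      have : (1 : ℝ) - (p : ℝ)⁻¹ ≠ 0 := by
        rw [sub_ne_zero]
        intro h
        field_simp at h
        linarith
      field_simp
      ring
    rw [e, add_comm]
    exact Real.add_one_le_exp _
  have htel : ∀ N : ℕ, ∑ k ∈ Finset.Icc 2 (N + 1), 1 / ((k : ℝ) * (k - 1)) = 1 - 1 / (N + 1) := by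
    intro N
    induction N with
    | zero => simp
    | succ N ih =>
      rw [Finset.sum_Icc_succ_top (by omega), ih]
      push_cast
      have : (N : ℝ) + 1 ≠ 0 := by positivity
      have : (N : ℝ) + 1 + 1 ≠ 0 := by positivity
      have : (N : ℝ) + 1 + 1 - 1 ≠ 0 := by ring_nf; positivity
      field_simp
      ring
  have hsum1 : ∑ p ∈ (z + 1).primesBelow, 1 / ((p : ℝ) * (p - 1)) ≤ 1 := by
    calc _ ≤ ∑ k ∈ Finset.Icc 2 (z + 1), 1 / ((k : ℝ) * (k - 1)) := by
          refine Finset.sum_le_sum_of_subset_of_nonneg (fun p hp => ?_) fun k hk _ => ?_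
          · have := (Nat.prime_of_mem_primesBelow hp).two_le
            have := Nat.lt_of_mem_primesBelow hp
            rw [Finset.mem_Icc]; omega
          · have : (2 : ℝ) ≤ k := by exact_mod_cast (Finset.mem_Icc.mp hk).1
            have : (0 : ℝ) ≤ k - 1 := by linarith
            positivity
      _ ≤ 1 := by
          rw [htel]
          have : (0 : ℝ) ≤ 1 / (z + 1) := by positivity
          linarith
  calc ∏ p ∈ (z + 1).primesBelow, (1 - f p)⁻¹
      ≤ ∏ p ∈ (z + 1).primesBelow, Real.exp (1 / (p : ℝ) + 1 / ((p : ℝ) * (p - 1))) := by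
        refine Finset.prod_le_prod (fun p hp => ?_) hfac
        have hp2 : (1 : ℝ) ≤ p := by exact_mod_cast (Nat.prime_of_mem_primesBelow hp).one_lt.le
        rw [hf, inv_nonneg, sub_nonneg]
        exact inv_le_one_of_one_le₀ hp2
    _ = Real.exp (primeRecip z + ∑ p ∈ (z + 1).primesBelow, 1 / ((p : ℝ) * (p - 1))) := by
        rw [← Real.exp_sum, Finset.sum_add_distrib]; rfl
    _ ≤ Real.exp (primeRecip z + 1) := by gcongr

lemma le_primeRecip_two_pow_two_pow (i : ℕ) : i * Real.log 2 - 2 ≤ primeRecip (2 ^ 2 ^ i) := by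
  have h := log_le_exp_primeRecip (2 ^ 2 ^ i) Nat.one_le_two_pow
  push_cast at h
  rw [Real.log_pow] at h
  have h2 : Real.exp (i * Real.log 2 - 1) ≤ ((2 ^ i : ℕ) : ℝ) * Real.log 2 := by
    rw [sub_eq_add_neg, Real.exp_add, mul_comm (i : ℝ), Real.exp_mul, Real.exp_log (by norm_num),
      Real.rpow_natCast]
    push_cast
    gcongr
    have h3 : (1 / 2 : ℝ) ≤ Real.log 2 := by have := Real.log_two_gt_d9; linarith
    refine le_trans ?_ h3
    rw [Real.exp_neg, inv_eq_one_div]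
    refine one_div_le_one_div_of_le (by norm_num) ?_
    have := Real.add_one_le_exp (1 : ℝ); linarith
  have := Real.exp_le_exp.mp (h2.trans h)
  linarith

/-! ### Choice of the sieving primes -/

/-- The primes beyond `log₂ n` that divide `d`, where `0 < |d| ≤ n`, have reciprocals summing to at
most `1`, since there are at most `log₂ n` of them. -/
lemma sum_recip_dvd_le (n : ℕ) (d : ℤ) (hd : d ≠ 0) (hdn : d.natAbs ≤ n) (l : ℕ) (hl : 1 ≤ l)
    (hln : Nat.log 2 n ≤ l) (T : Finset ℕ) (hT : ∀ q ∈ T, q.Prime ∧ (q : ℤ) ∣ d ∧ l < q) :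
    ∑ q ∈ T, 1 / (q : ℝ) ≤ 1 := by
  have hc : T.card ≤ l := (card_dvd_le_log n d hd (by rw [Finset.mem_Icc]; omega) T
    fun q hq => ⟨(hT q hq).1, (hT q hq).2.1⟩).trans hln
  have hl0 : (0 : ℝ) < l := by exact_mod_cast hl
  calc ∑ q ∈ T, 1 / (q : ℝ) ≤ T.card • (1 / (l : ℝ)) :=
        Finset.sum_le_card_nsmul _ _ _ fun q hq =>
          one_div_le_one_div_of_le hl0 (by exact_mod_cast (hT q hq).2.2.le)
    _ ≤ 1 := by
        rw [nsmul_eq_mul, mul_one_div, div_le_one hl0]; exact_mod_cast hc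

lemma prod_one_add_recip_le (n : ℕ) (d : ℤ) (hd : d ≠ 0) (hdn : d.natAbs ≤ n) (l : ℕ) (hl : 1 ≤ l)
    (hln : Nat.log 2 n ≤ l) (S : Finset ℕ) (hS : ∀ p ∈ S, p.Prime ∧ (p : ℤ) ∣ d) :
    ∏ p ∈ S, (1 + 1 / (p : ℝ)) ≤ Real.exp (primeRecip l + 1) := by
  calc ∏ p ∈ S, (1 + 1 / (p : ℝ)) ≤ ∏ p ∈ S, Real.exp (1 / (p : ℝ)) :=
        Finset.prod_le_prod (fun p _ => by positivity) fun p _ => by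
          rw [add_comm]; exact Real.add_one_le_exp _
    _ = Real.exp (∑ p ∈ S, 1 / (p : ℝ)) := (Real.exp_sum _ _).symm
    _ ≤ Real.exp (primeRecip l + 1) := by
        refine Real.exp_le_exp.mpr ?_
        rw [← Finset.sum_filter_add_sum_filter_not S (fun p => p ≤ l)]
        refine add_le_add ?_ ?_
        · refine Finset.sum_le_sum_of_subset_of_nonneg (fun p hp => ?_) fun _ _ _ => by positivity
          rw [Finset.mem_filter] at hp
          exact Nat.mem_primesBelow.mpr ⟨by omega, (hS p hp.1).1⟩
        · refine sum_recip_dvd_le n d hd hdn l hl hln _ fun q hq => ?_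
          rw [Finset.mem_filter] at hq
          exact ⟨(hS q hq.1).1, (hS q hq.1).2, by omega⟩

/-- The sieving primes: the primes in `(l, z]` that do not divide `d`. -/
def sieveSet (d : ℤ) (l z : ℕ) : Finset ℕ :=
  (Nat.primesBelow (z + 1)).filter fun q => l < q ∧ ¬ (q : ℤ) ∣ d

lemma sum_exDens_sieveSet_le (d : ℤ) (l z : ℕ) :
    ∑ q ∈ sieveSet d l z, exDens q ≤ primeRecip z :=
  (Finset.sum_le_sum fun q _ => exDens_le q).trans <|
    Finset.sum_le_sum_of_subset_of_nonneg (Finset.filter_subset _ _) fun _ _ _ => by positivity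

lemma le_sum_exDens_sieveSet (n : ℕ) (d : ℤ) (hd : d ≠ 0) (hdn : d.natAbs ≤ n) (l z : ℕ)
    (hl : 1 ≤ l) (hln : Nat.log 2 n ≤ l) :
    primeRecip z - primeRecip l - 2 ≤ ∑ q ∈ sieveSet d l z, exDens q := by
  have h1 : primeRecip z ≤ primeRecip l +
      (∑ q ∈ (Nat.primesBelow (z + 1)).filter (fun q => l < q ∧ (q : ℤ) ∣ d), 1 / (q : ℝ) +
        ∑ q ∈ sieveSet d l z, 1 / (q : ℝ)) := by
    rw [primeRecip, ← Finset.sum_filter_add_sum_filter_not _ (fun p => p ≤ l)]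
    refine add_le_add ?_ (le_of_eq ?_)
    · refine Finset.sum_le_sum_of_subset_of_nonneg (fun p hp => ?_) fun _ _ _ => by positivity
      rw [Finset.mem_filter] at hp
      exact Nat.mem_primesBelow.mpr ⟨by omega, Nat.prime_of_mem_primesBelow hp.1⟩
    · rw [← Finset.sum_filter_add_sum_filter_not (Finset.filter (fun p => ¬ p ≤ l) _)
        (fun p => (p : ℤ) ∣ d)]
      simp only [Finset.filter_filter, not_le, sieveSet]
  have h2 := sum_recip_dvd_le n d hd hdn l hl hln
    ((Nat.primesBelow (z + 1)).filter (fun q => l < q ∧ (q : ℤ) ∣ d)) fun q hq => by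
      rw [Finset.mem_filter] at hq
      exact ⟨Nat.prime_of_mem_primesBelow hq.1, hq.2.2, hq.2.1⟩
  have h3 : ∑ q ∈ sieveSet d l z, 1 / (q : ℝ) ^ 2 ≤ 1 := by
    calc ∑ q ∈ sieveSet d l z, 1 / (q : ℝ) ^ 2
        ≤ ∑ q ∈ Finset.Ioc l (max l z), ((q : ℝ) ^ 2)⁻¹ := by
          simp only [one_div]
          refine Finset.sum_le_sum_of_subset_of_nonneg (fun q hq => ?_) fun _ _ _ => by positivity
          rw [sieveSet, Finset.mem_filter] at hq
          have := Nat.lt_of_mem_primesBelow hq.1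
          rw [Finset.mem_Ioc]
          exact ⟨hq.2.1, le_max_of_le_right (by omega)⟩
      _ ≤ (l : ℝ)⁻¹ - ((max l z : ℕ) : ℝ)⁻¹ := sum_Ioc_inv_sq_le_sub (by omega) (le_max_left _ _)
      _ ≤ 1 := by
          have : (l : ℝ)⁻¹ ≤ 1 := inv_le_one_of_one_le₀ (by exact_mod_cast hl)
          have : (0 : ℝ) ≤ ((max l z : ℕ) : ℝ)⁻¹ := by positivity
          linarith
  have h4 : ∑ q ∈ sieveSet d l z, exDens q =
      ∑ q ∈ sieveSet d l z, 1 / (q : ℝ) - ∑ q ∈ sieveSet d l z, 1 / (q : ℝ) ^ 2 := by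
    simp only [exDens, Finset.sum_sub_distrib]
  linarith

/-- A product of distinct primes outgrows any fixed power of `c` up to a constant, because all but
`c` of the factors exceed `c`. -/
lemma pow_card_le_mul_prod (c : ℕ) (hc : 1 ≤ c) (S : Finset ℕ) (hS : ∀ p ∈ S, 1 ≤ p) :
    c ^ S.card ≤ c ^ c * ∏ p ∈ S, p := by
  rw [← Finset.card_filter_add_card_filter_not (s := S) (fun p => p < c), pow_add,
    ← Finset.prod_filter_mul_prod_filter_not S (fun p => p < c)]
  refine Nat.mul_le_mul (Nat.pow_le_pow_right hc ?_) ?_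
  · calc _ ≤ (Finset.range c).card := Finset.card_le_card fun p hp => by
          rw [Finset.mem_filter] at hp; exact Finset.mem_range.mpr hp.2
      _ = c := Finset.card_range c
  · calc c ^ (S.filter fun p => ¬ p < c).card ≤ ∏ p ∈ S.filter (fun p => ¬ p < c), p :=
          Finset.pow_card_le_prod _ _ _ fun p hp => by
            rw [Finset.mem_filter] at hp; omega
      _ ≤ _ := Nat.le_mul_of_pos_left _ <| Finset.prod_pos fun p hp =>
            hS p (Finset.mem_filter.mp hp).1

/-! ### The case `m = 1` and the theorem -/

lemma one_add_log_le (n i : ℕ) (hn : 1 ≤ n) (hi : Nat.log 2 n < 16 ^ (i + 1)) :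
    1 + Real.log n ≤ 2 ^ (4 * i + 5) := by
  have h1 : n < 2 ^ (Nat.log 2 n + 1) := Nat.lt_pow_succ_log_self (by norm_num) n
  have h2 : Real.log n ≤ (Nat.log 2 n + 1 : ℕ) * Real.log 2 := by
    rw [← Real.log_pow]
    refine Real.log_le_log (by exact_mod_cast hn) ?_
    exact_mod_cast h1.le
  have h3 : ((Nat.log 2 n + 1 : ℕ) : ℝ) ≤ 16 ^ (i + 1) := by exact_mod_cast hi
  have h4 : Real.log 2 ≤ 1 := by have := Real.log_two_lt_d9; linarith
  have h5 : ((Nat.log 2 n + 1 : ℕ) : ℝ) * Real.log 2 ≤ (Nat.log 2 n + 1 : ℕ) * 1 := by gcongr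
  have h6 : (1 : ℝ) ≤ 16 ^ (i + 1) := one_le_pow₀ (by norm_num)
  have h7 : (2 : ℝ) ^ (4 * i + 5) = 2 * 16 ^ (i + 1) := by
    rw [show 4 * i + 5 = 4 * (i + 1) + 1 by ring, pow_succ, pow_mul]; norm_num; ring
  rw [h7]; linarith

lemma exp_le_four_pow (i : ℕ) : Real.exp i ≤ 4 ^ i := by
  rw [← mul_one (i : ℝ), Real.exp_nat_mul]
  refine pow_le_pow_left₀ (Real.exp_nonneg _) ?_ i
  have := Real.exp_one_lt_d9; linarith

/-- The Brun sieve error is `O(√n)`: with `z = 2^(2^i)` and sieve level `2L = 4·2^i`, where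
`16^i ≤ log₂ (2n)`, the fourth power of the left-hand side is `O(n²)`. -/
lemma sieve_error_le : ∃ C : ℝ, 0 ≤ C ∧ ∀ n i : ℕ, 1 ≤ n → Nat.log 2 n < 16 ^ (i + 1) →
    2 ^ 16 ^ i ≤ 2 * n → ∀ S : Finset ℕ, (∀ p ∈ S, 1 ≤ p) → ∏ p ∈ S, p ≤ n →
    (2 * ((2 ^ 2 ^ i : ℕ) : ℝ) + 1) ^ (2 * (2 * 2 ^ i)) * 8 ^ S.card * (1 + Real.log n) ≤
      C * √(n : ℝ) := by
  obtain ⟨c, hc⟩ : ∃ c : ℕ, c = 4096 := ⟨_, rfl⟩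
  obtain ⟨e, he⟩ : ∃ e : ℕ, e = 1044 := ⟨_, rfl⟩
  have hc1 : 1 ≤ c := by omega
  have hC1 : (1 : ℝ) ≤ 2 ^ (e + 1) * (c : ℝ) ^ c :=
    one_le_mul_of_one_le_of_one_le (one_le_pow₀ (by norm_num))
      (one_le_pow₀ (by exact_mod_cast hc1))
  set C : ℝ := 2 ^ (e + 1) * (c : ℝ) ^ c with hC
  refine ⟨C, by linarith, fun n i hn hi hin S hS hSn => ?_⟩
  have hn1 : (1 : ℝ) ≤ n := by exact_mod_cast hn
  have hlog : 0 ≤ Real.log n := Real.log_nonneg hn1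
  set y := 2 ^ i with hy
  have hy1 : 1 ≤ y := Nat.one_le_two_pow
  have hiy : i ≤ y := Nat.lt_two_pow_self.le
  have hy4 : 16 ^ i = y ^ 4 := by rw [hy, ← pow_mul, mul_comm, pow_mul]; norm_num
  rw [hy4] at hin
  have a1 : (2 * ((2 ^ y : ℕ) : ℝ) + 1) ≤ 2 ^ (y + 2) := by
    have : (1 : ℝ) ≤ 2 ^ y := one_le_pow₀ (by norm_num)
    push_cast
    rw [pow_add]; linarith
  have a2 : ((2 * ((2 ^ y : ℕ) : ℝ) + 1) ^ (2 * (2 * y))) ^ 4 ≤ 2 ^ (48 * y ^ 2) := by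
    calc _ ≤ (((2 : ℝ) ^ (y + 2)) ^ (2 * (2 * y))) ^ 4 := by gcongr
      _ = 2 ^ ((y + 2) * (2 * (2 * y)) * 4) := by rw [← pow_mul, ← pow_mul]; ring
      _ ≤ 2 ^ (48 * y ^ 2) := by
        refine pow_le_pow_right₀ (by norm_num) ?_
        nlinarith
  have a3 : (1 + Real.log n) ^ 4 ≤ 2 ^ (16 * y ^ 2 + 20) := by
    calc _ ≤ ((2 : ℝ) ^ (4 * i + 5)) ^ 4 := by gcongr; exact one_add_log_le n i hn hi
      _ = 2 ^ ((4 * i + 5) * 4) := by rw [← pow_mul]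
      _ ≤ _ := by
        refine pow_le_pow_right₀ (by norm_num) ?_
        nlinarith
  have a4 : ((8 : ℝ) ^ S.card) ^ 4 ≤ (c : ℝ) ^ c * n := by
    have h := (pow_card_le_mul_prod c hc1 S hS).trans (Nat.mul_le_mul_left _ hSn)
    have h' : ((c : ℝ)) ^ S.card ≤ (c : ℝ) ^ c * n := by exact_mod_cast h
    rw [← pow_mul, mul_comm, pow_mul]
    refine le_trans (le_of_eq ?_) h'
    rw [hc]; norm_num
  have a5 : (2 : ℝ) ^ (48 * y ^ 2) * 2 ^ (16 * y ^ 2 + 20) ≤ 2 ^ (e + 1) * n := by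
    have hx : 48 * y ^ 2 + (16 * y ^ 2 + 20) ≤ e + y ^ 4 := by
      rw [he]
      zify
      nlinarith [sq_nonneg ((y : ℤ) ^ 2 - 32)]
    have hin' : (2 : ℝ) ^ (y ^ 4) ≤ 2 * n := by exact_mod_cast hin
    calc (2 : ℝ) ^ (48 * y ^ 2) * 2 ^ (16 * y ^ 2 + 20)
        = 2 ^ (48 * y ^ 2 + (16 * y ^ 2 + 20)) := (pow_add _ _ _).symm
      _ ≤ 2 ^ (e + y ^ 4) := pow_le_pow_right₀ (by norm_num) hx
      _ = 2 ^ e * 2 ^ (y ^ 4) := pow_add _ _ _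
      _ ≤ 2 ^ e * (2 * n) := by gcongr
      _ = 2 ^ (e + 1) * n := by ring
  refine le_of_pow_le_pow_left₀ (n := 4) (by norm_num) (by positivity) ?_
  have hs4 : √(n : ℝ) ^ 4 = n * n := by
    rw [show 4 = 2 * 2 by norm_num, pow_mul, Real.sq_sqrt (by linarith)]; ring
  rw [mul_pow, mul_pow, mul_pow C, hs4]
  calc ((2 * ((2 ^ y : ℕ) : ℝ) + 1) ^ (2 * (2 * y))) ^ 4 * (8 ^ S.card) ^ 4 *
        (1 + Real.log n) ^ 4
      ≤ 2 ^ (48 * y ^ 2) * ((c : ℝ) ^ c * n) * 2 ^ (16 * y ^ 2 + 20) := by gcongr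
    _ = (2 ^ (48 * y ^ 2) * 2 ^ (16 * y ^ 2 + 20)) * ((c : ℝ) ^ c * n) := by ring
    _ ≤ (2 ^ (e + 1) * n) * ((c : ℝ) ^ c * n) := by gcongr
    _ = C * (n * n) := by rw [hC]; ring
    _ ≤ C ^ 4 * (n * n) := by
        gcongr
        exact le_self_pow₀ hC1 (by norm_num)

/-- Assembly of the three terms of `card_forms_le`. Here `k` stands for `2^|S|`, `x` for the
exponential factor, `s` for `√l` and `U`, `V`, `w` for the factors of the sieve error. -/
lemma conic_terms_le {n k P x s z E C U V w : ℝ} (hn : 1 ≤ n) (hP : 0 ≤ P)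
    (hC : 0 ≤ C) (hx : 0 ≤ x) (hs : 0 ≤ s) (t8 : k ≤ n)
    (t1 : P ^ 4 * x ≤ E) (t4 : P ^ 4 * (1 / s) ≤ E) (t5 : P * (1 / s) ≤ E)
    (t6 : P * (s * z ^ 4) ≤ E * 2 ^ 13 * n) (t7 : U * V * w ≤ C * √n) :
    k * (2 * n + 1) ^ 2 + 2 * (2 * n + 1) ^ 2 * P * ((2 * n + 1) * P ^ 3 * (x + 1 / s) +
      (2 * n + 1) / s + s * z ^ 4) + (2 * n + 1) ^ 2 * U * (V * (√n * w)) ≤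
    (9 + 18 * (3 * (E + E) + 3 * E + E * 2 ^ 13) + 9 * C) * n ^ 3 := by
  have h3n : 2 * n + 1 ≤ 3 * n := by linarith
  have s1 : k * (2 * n + 1) ^ 2 ≤ 9 * n ^ 3 := by
    calc k * (2 * n + 1) ^ 2 ≤ n * (3 * n) ^ 2 := by gcongr
      _ = 9 * n ^ 3 := by ring
  have s2 : 2 * (2 * n + 1) ^ 2 * P * ((2 * n + 1) * P ^ 3 * (x + 1 / s) +
      (2 * n + 1) / s + s * z ^ 4) ≤ 18 * (3 * (E + E) + 3 * E + E * 2 ^ 13) * n ^ 3 := by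
    calc _ = 2 * (2 * n + 1) ^ 2 * ((2 * n + 1) * (P ^ 4 * x + P ^ 4 * (1 / s)) +
              (2 * n + 1) * (P * (1 / s)) + P * (s * z ^ 4)) := by ring
      _ ≤ 2 * (3 * n) ^ 2 * ((3 * n) * (E + E) + (3 * n) * E + E * 2 ^ 13 * n) := by gcongr
      _ = _ := by ring
  have s3 : (2 * n + 1) ^ 2 * U * (V * (√n * w)) ≤ 9 * C * n ^ 3 := by
    calc _ = (2 * n + 1) ^ 2 * √n * (U * V * w) := by ring
      _ ≤ (2 * n + 1) ^ 2 * √n * (C * √n) := by gcongr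
      _ ≤ (3 * n) ^ 2 * √n * (C * √n) := by gcongr
      _ = 9 * C * n ^ 2 * (√n * √n) := by ring
      _ = 9 * C * n ^ 3 := by rw [Real.mul_self_sqrt (by linarith)]; ring
  linarith

/-- For `m = 1`: the conics `d z² = f(x,y)` with a point of odd degree number
`O(2^(-|S|) n³)`, where `S` is the set of odd primes exactly dividing `d`. This is `card_forms_le`
with `l = 16^(i+1)`, `z = 2^(2^i)` and `16^i ≈ log₂ n`. -/
lemma card_conics_le : ∃ C : ℝ, 0 ≤ C ∧ ∀ n : ℕ, 1 ≤ n → ∀ d : ℤ, d ≠ 0 → d.natAbs ≤ n →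
    ∀ W : Finset (Fin (2 * 1 + 1) → ℤ),
    (∀ a ∈ W, (∀ i, a i ∈ Finset.Icc (-(n : ℤ)) n) ∧ HasOddDegPoint (2 * 1) d a) →
    2 ^ ((exactPrimes d).erase 2).card * (W.card : ℝ) ≤ C * n ^ 3 := by
  obtain ⟨C₃, hC₃0, hC₃⟩ := sieve_error_le
  obtain ⟨E, hE⟩ : ∃ E : ℝ, E = Real.exp 2000 := ⟨_, rfl⟩
  have hE0 : 0 < E := hE ▸ Real.exp_pos _
  refine ⟨9 + 18 * (3 * (E + E) + 3 * E + E * 2 ^ 13) + 9 * C₃, by positivity, ?_⟩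
  intro n hn d hd hdn W hW
  set i := Nat.log 16 (Nat.log 2 n) with hi
  have hlt : Nat.log 2 n < 16 ^ (i + 1) := Nat.lt_pow_succ_log_self (by norm_num) _
  have hin : 2 ^ 16 ^ i ≤ 2 * n := by
    rcases Nat.eq_zero_or_pos (Nat.log 2 n) with h0 | h0
    · have : i = 0 := by rw [hi, h0, Nat.log_zero_right]
      rw [this]; norm_num; omega
    · have h1 : 16 ^ i ≤ Nat.log 2 n := Nat.pow_log_le_self 16 (by omega)
      have h2 : 2 ^ Nat.log 2 n ≤ n := Nat.pow_log_le_self 2 (by omega)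
      have h3 : 2 ^ 16 ^ i ≤ 2 ^ Nat.log 2 n := Nat.pow_le_pow_right (by norm_num) h1
      omega
  set S := (exactPrimes d).erase 2 with hS
  have hSmem : ∀ p ∈ S, p ≠ 2 ∧ p ∈ exactPrimes d := fun p hp => Finset.mem_erase.mp hp
  have hSp : ∀ p ∈ S, p.Prime ∧ (p : ℤ) ∣ d := fun p hp =>
    ⟨((mem_exactPrimes hd).mp (hSmem p hp).2).1, ((mem_exactPrimes hd).mp (hSmem p hp).2).2.1⟩
  have hSn : ∏ p ∈ S, p ≤ n :=
    (prod_exactPrimes_le hd S fun p hp => (hSmem p hp).2).trans hdn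
  have hl16 : (16 : ℕ) ^ (i + 1) = 2 ^ (4 * i + 4) := by
    rw [show 4 * i + 4 = 4 * (i + 1) by ring, pow_mul]; norm_num
  set l := 16 ^ (i + 1) with hl
  have hl1 : 16 ≤ l := by
    rw [hl, pow_succ]; have : 1 ≤ 16 ^ i := Nat.one_le_pow _ _ (by norm_num)
    omega
  have hsl : √(l : ℝ) = 4 ^ (i + 1) := by
    rw [hl]; push_cast
    rw [show (16 : ℝ) = 4 ^ 2 by norm_num, ← pow_mul, mul_comm, pow_mul]
    exact Real.sqrt_sq (by positivity)
  set z := 2 ^ 2 ^ i with hz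
  set Q := sieveSet d l z with hQ
  have hR := primeRecip_two_pow_le' (4 * i + 4)
  rw [← hl16] at hR
  push_cast at hR
  have hG := le_sum_exDens_sieveSet n d hd hdn l z (by omega) hlt.le
  have hz' := le_primeRecip_two_pow_two_pow i
  rw [← hz] at hz'
  have hzle := primeRecip_two_pow_le (2 ^ i)
  rw [← hz] at hzle
  have hP := prod_one_add_recip_le n d hd hdn l (by omega) hlt.le S hSp
  have key := card_forms_le n hn d hd hdn l z (by omega) hlt.le Q
    (fun q hq => by
      rw [hQ, sieveSet, Finset.mem_filter] at hq
      have := Nat.lt_of_mem_primesBelow hq.1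
      exact ⟨Nat.prime_of_mem_primesBelow hq.1, by omega, hq.2.2, hq.2.1, by omega⟩)
    S hSmem (2 * 2 ^ i)
    (by
      have := sum_exDens_sieveSet_le d l z
      push_cast at hzle ⊢
      linarith) W hW
  set P := ∏ p ∈ S, (1 + 1 / (p : ℝ)) with hPdef
  set G := ∑ q ∈ Q, exDens q with hGdef
  have hP1 : 1 ≤ P := by
    rw [hPdef]
    refine Finset.one_le_prod (fun p _ => ?_)
    have : (0 : ℝ) ≤ 1 / p := by positivity
    linarith
  have hn1 : (1 : ℝ) ≤ n := by exact_mod_cast hn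
  have hi0 : (0 : ℝ) ≤ i := by positivity
  have hlog2 : (0.69 : ℝ) ≤ Real.log 2 := by have := Real.log_two_gt_d9; linarith
  have hP4 : P ^ 4 ≤ Real.exp (4 * (primeRecip l + 1)) := by
    have := Real.exp_nat_mul (primeRecip l + 1) 4
    push_cast at this
    rw [this]
    gcongr
  have t1 : P ^ 4 * Real.exp (1 - G / 2) ≤ E := by
    calc P ^ 4 * Real.exp (1 - G / 2)
        ≤ Real.exp (4 * (primeRecip l + 1)) * Real.exp (1 - G / 2) := by gcongr
      _ = Real.exp (4 * (primeRecip l + 1) + (1 - G / 2)) := (Real.exp_add _ _).symm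
      _ ≤ E := by
          rw [hE]
          refine Real.exp_le_exp.mpr ?_
          have : (i : ℝ) * 0.69 ≤ i * Real.log 2 := by gcongr
          linarith
  have t2 : P ^ 4 ≤ E * 4 ^ i := by
    refine hP4.trans (le_trans ?_ (mul_le_mul_of_nonneg_left (exp_le_four_pow i) hE0.le))
    rw [hE, ← Real.exp_add]
    refine Real.exp_le_exp.mpr ?_
    linarith
  have t3 : P ≤ P ^ 4 := le_self_pow₀ hP1 (by norm_num)
  have h4i : (0 : ℝ) < 4 ^ i := by positivity
  have t4 : P ^ 4 * (1 / √(l : ℝ)) ≤ E := by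
    rw [hsl, mul_one_div, div_le_iff₀ (by positivity)]
    refine t2.trans (mul_le_mul_of_nonneg_left ?_ hE0.le)
    exact pow_le_pow_right₀ (by norm_num) (Nat.le_succ i)
  have t5 : P * (1 / √(l : ℝ)) ≤ E := le_trans (by gcongr) t4
  have t6 : P * (√(l : ℝ) * (z : ℝ) ^ 4) ≤ E * 2 ^ 13 * n := by
    set y := 2 ^ i with hy
    have hy1 : 1 ≤ y := Nat.one_le_two_pow
    have hiy : i ≤ y := Nat.lt_two_pow_self.le
    have hy4 : 16 ^ i = y ^ 4 := by rw [hy, ← pow_mul, mul_comm, pow_mul]; norm_num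
    have hx : 4 * i + 2 + 4 * y ≤ 12 + y ^ 4 := by
      rcases Nat.lt_or_ge y 2 with h | h
      · have : y = 1 := by omega
        rw [this]; omega
      · have : 8 * y ≤ y ^ 4 := by nlinarith [Nat.pow_le_pow_left h 3]
        omega
    have hin' : (2 : ℝ) ^ (16 ^ i) ≤ 2 * n := by exact_mod_cast hin
    calc P * (√(l : ℝ) * (z : ℝ) ^ 4) ≤ (E * 4 ^ i) * (4 ^ (i + 1) * (z : ℝ) ^ 4) := by
          rw [hsl]; gcongr; exact t3.trans t2
      _ = E * 2 ^ (4 * i + 2 + 4 * y) := by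
          rw [hz]; push_cast
          rw [show (4 : ℝ) = 2 ^ 2 by norm_num, ← pow_mul, ← pow_mul, ← pow_mul, mul_assoc,
            ← pow_add, ← pow_add]
          congr 2
          ring
      _ ≤ E * 2 ^ (12 + y ^ 4) := by gcongr; norm_num
      _ = E * 2 ^ 12 * 2 ^ (16 ^ i) := by rw [hy4, pow_add]; ring
      _ ≤ E * 2 ^ 12 * (2 * n) := by gcongr
      _ = E * 2 ^ 13 * n := by ring
  have t7 := hC₃ n i hn hlt hin S (fun p hp => (hSp p hp).1.one_lt.le) hSn
  have t8 : (2 : ℝ) ^ S.card ≤ n := by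
    have h : 2 ^ S.card ≤ ∏ p ∈ S, p :=
      Finset.pow_card_le_prod _ _ _ fun p hp => (hSp p hp).1.two_le
    exact_mod_cast h.trans hSn
  exact key.trans (conic_terms_le hn1 (by linarith) hC₃0 (Real.exp_nonneg _)
    (Real.sqrt_nonneg _) t8 t1 t4 t5 t6 t7)

lemma main_one :
    ∃ Cm : ℝ, ∀ d : ℤ, d ≠ 0 → ∀ B : ℝ, |(d : ℝ)| ≤ B →
      (({a : Fin (2 * 1 + 1) → ℤ | (∀ i, |(a i : ℝ)| ≤ B) ∧
          HasOddDegPoint (2 * 1) d a}).ncard : ℝ)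
        ≤ Cm * (1 / 2) ^ (exactPrimes d).card * B ^ (2 * 1 + 1) := by
  obtain ⟨C, hC0, hC⟩ := card_conics_le
  refine ⟨2 * C, fun d hd B hB => ?_⟩
  have hd1 : 1 ≤ d.natAbs := Int.natAbs_pos.mpr hd
  have hdB : ((d.natAbs : ℕ) : ℝ) ≤ B := by rwa [Nat.cast_natAbs, Int.cast_abs]
  have hdn : d.natAbs ≤ ⌊B⌋₊ := Nat.le_floor hdB
  have hB0 : 0 ≤ B := le_trans (by positivity) hdB
  refine ncard_le_of_box _ _ B hB0 _ fun W hW => ?_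
  have h := hC ⌊B⌋₊ (by omega) d hd hdn W hW
  have hcard : (exactPrimes d).card ≤ ((exactPrimes d).erase 2).card + 1 :=
    Nat.sub_le_iff_le_add.mp Finset.pred_card_le_card_erase
  have h2 : (2 : ℝ) ^ (exactPrimes d).card ≤ 2 ^ ((exactPrimes d).erase 2).card * 2 := by
    rw [← pow_succ]; exact pow_le_pow_right₀ (by norm_num) hcard
  have h3 : (⌊B⌋₊ : ℝ) ^ 3 ≤ B ^ 3 := by
    have := Nat.floor_le hB0
    gcongr
  have h4 : (2 : ℝ) ^ (exactPrimes d).card * W.card ≤ 2 * C * B ^ 3 := by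
    calc (2 : ℝ) ^ (exactPrimes d).card * W.card
        ≤ (2 ^ ((exactPrimes d).erase 2).card * 2) * W.card := by gcongr
      _ = 2 * (2 ^ ((exactPrimes d).erase 2).card * W.card) := by ring
      _ ≤ 2 * (C * ⌊B⌋₊ ^ 3) := by gcongr
      _ ≤ 2 * (C * B ^ 3) := by gcongr
      _ = _ := by ring
  have hp : (0 : ℝ) < 2 ^ (exactPrimes d).card := by positivity
  calc (W.card : ℝ) = (2 ^ (exactPrimes d).card * W.card) * (1 / 2) ^ (exactPrimes d).card := by
        rw [one_div, inv_pow]; field_simp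
    _ ≤ (2 * C * B ^ 3) * (1 / 2) ^ (exactPrimes d).card := by gcongr
    _ = _ := by ring

/-- **Corollary `cor: aa no odd points` (second version).** The number of binary forms of
degree `2m` with coefficients bounded by `B` for which `d z² = f(x,y)` has a point of odd
degree is `≤ C_m (1 − 1/(2m))^{|S_d|} B^{2m+1}`, where `S_d` is the set of primes exactly
dividing `d`. -/
theorem stmt12 (m : ℕ) (hm : 1 ≤ m) :
    ∃ Cm : ℝ, ∀ d : ℤ, d ≠ 0 → ∀ B : ℝ, |(d : ℝ)| ≤ B →
      (({a : Fin (2 * m + 1) → ℤ | (∀ i, |(a i : ℝ)| ≤ B) ∧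
          HasOddDegPoint (2 * m) d a}).ncard : ℝ)
        ≤ Cm * (1 - 1 / (2 * (m : ℝ))) ^
            (({p : ℕ | p.Prime ∧ (p : ℤ) ∣ d ∧ ¬ ((p : ℤ) ^ 2 ∣ d)}).ncard)
          * B ^ (2 * m + 1) := by
  rcases hm.eq_or_lt with rfl | hm2
  · obtain ⟨C, hC⟩ := main_one
    refine ⟨C, fun d hd B hB => ?_⟩
    rw [ncard_exactPrimes hd, show (1 : ℝ) - 1 / (2 * ((1 : ℕ) : ℝ)) = 1 / 2 by norm_num]
    exact hC d hd B hB
  · obtain ⟨C, hC⟩ := main_ge_two m hm2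
    refine ⟨C, fun d hd B hB => ?_⟩
    rw [ncard_exactPrimes hd]
    exact hC d hd B hB
end
end

section
/- Let i_1, i_2 be coprime positive integers and r_1, r_2 > 0 real numbers. Then for all sufficiently large positive integers D there exist coprime positive integers d_1, d_2 with D = i_1 d_1 + i_2 d_2, |d_1 − r_1 D/(i_1 r_1 + i_2 r_2)| ≤ i_2 · J(D), and |d_2 − r_2 D/(i_1 r_1 + i_2 r_2)| ≤ i_1 · J(D). -/
/-!
Pick `u, v` with `i1 * u + i2 * v = 1`. The integer solutions of `D = i1 * x + i2 * y` are
`x = u * D + i2 * t`, `y = v * D - i1 * t`, and this substitution is unimodular, so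
`x, y` are coprime exactly when `t, D` are. Moving `t` moves `x` in steps of `i2` and `y` in steps
of `i1`, and the target `(r1 D / S, r2 D / S)`, `S = i1 r1 + i2 r2`, corresponds to a real
parameter `t₀`; among the `J(D)` integers starting at `⌈t₀⌉` there is a `t` coprime to `D`, which
gives both inequalities.

Positivity of `d1, d2` for large `D` needs `J(D) = o(D)`. This follows from Kanold's bound
`J(D) ≤ 2 ^ ω(D)` (`exists_coprime_window`) and `4 ^ ω(D) ≤ 16 D`. For Kanold's bound, let `ζ_p` be a
primitive `p`-th root of unity; `f n = ∏_{p ∣ D} (1 - ζ_p ^ n)` vanishes exactly when `n` is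
not coprime to `D`. Expanding the product, `f` is a sum of `2 ^ ω(D)` exponentials in `n`, so it
satisfies a linear recurrence of that order. If it vanished at `2 ^ ω(D)` consecutive integers it
would vanish ever after, but it is nonzero at every `n ≡ 1 mod D`.
-/

noncomputable section

/-- Jacobsthal's function: the least positive `J` such that every `J` consecutive integers
contain at least one integer coprime to `D`. -/
def jacobsthal (D : ℕ) : ℕ :=
  sInf {J : ℕ | 0 < J ∧ ∀ a : ℤ, ∃ k : ℤ, a ≤ k ∧ k < a + J ∧ IsCoprime k (D : ℤ)}

open Polynomial in
/-- An exponential sum with `#s` terms that vanishes at `#s` consecutive integers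
vanishes at all later ones. -/
lemma expSum_eq_zero {ι : Type*} (s : Finset ι) (c w : ι → ℂ) (a : ℕ)
    (h : ∀ j < s.card, ∑ i ∈ s, c i * w i ^ (a + j) = 0) (n : ℕ) :
    ∑ i ∈ s, c i * w i ^ (a + n) = 0 := by
  rcases s.eq_empty_or_nonempty with rfl | hs
  · simp
  set P : ℂ[X] := ∏ i ∈ s, (X - C (w i)) with hP
  have hmon : P.Monic := monic_prod_of_monic _ _ fun i _ => monic_X_sub_C _
  have hdeg : P.natDegree = s.card := by
    rw [hP, natDegree_prod_of_monic _ _ fun i _ => monic_X_sub_C _]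
    simp
  have hP1 : P ≠ 1 := by
    intro h1
    rw [h1, natDegree_one] at hdeg
    exact hs.card_pos.ne hdeg
  -- On the nodes `w i`, the monomial `X ^ n` agrees with its remainder `q` modulo `P`.
  set q : ℂ[X] := X ^ n %ₘ P with hq
  have hqdeg : q.natDegree < s.card := hdeg ▸ natDegree_modByMonic_lt _ hmon hP1
  have heval : ∀ i ∈ s, w i ^ n = ∑ j ∈ Finset.range s.card, q.coeff j * w i ^ j := by
    intro i hi
    have hroot : P.eval (w i) = 0 := by
      rw [hP, eval_prod]
      exact Finset.prod_eq_zero hi (by simp)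
    rw [← eval_eq_sum_range' hqdeg, hq, modByMonic_eq_sub_mul_div]
    simp [hroot]
  calc ∑ i ∈ s, c i * w i ^ (a + n)
      = ∑ i ∈ s, ∑ j ∈ Finset.range s.card, q.coeff j * (c i * w i ^ (a + j)) := by
        refine Finset.sum_congr rfl fun i hi => ?_
        rw [pow_add, heval i hi, Finset.mul_sum, Finset.mul_sum]
        exact Finset.sum_congr rfl fun j _ => by ring
    _ = 0 := by
        rw [Finset.sum_comm]
        refine Finset.sum_eq_zero fun j hj => ?_
        rw [← Finset.mul_sum, h j (Finset.mem_range.1 hj), mul_zero]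

/-- Kanold's bound over the natural numbers. -/
lemma exists_coprime_window_nat (D : ℕ) (hD : 0 < D) (a : ℕ) :
    ∃ j < 2 ^ D.primeFactors.card, Nat.Coprime (a + j) D := by
  by_contra! hcon
  let ζ : ℕ → ℂ := fun p => Complex.exp (2 * Real.pi * Complex.I / p)
  have hζ : ∀ p ∈ D.primeFactors, IsPrimitiveRoot (ζ p) p := fun p hp =>
    Complex.isPrimitiveRoot_exp p (Nat.prime_of_mem_primeFactors hp).ne_zero
  have hexp : ∀ n : ℕ, ∏ p ∈ D.primeFactors, (1 - ζ p ^ n) =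
      ∑ T ∈ D.primeFactors.powerset, (∏ _p ∈ T, (-1 : ℂ)) * (∏ p ∈ T, ζ p) ^ n := by
    intro n
    simp_rw [sub_eq_add_neg, Finset.prod_one_add]
    refine Finset.sum_congr rfl fun T _ => ?_
    rw [← Finset.prod_pow, ← Finset.prod_mul_distrib]
    simp
  have hzero : ∀ n : ℕ, ∏ p ∈ D.primeFactors, (1 - ζ p ^ (a + n)) = 0 := by
    intro n
    rw [hexp]
    refine expSum_eq_zero _ _ _ a (fun j hj => ?_) n
    rw [Finset.card_powerset] at hj
    rw [← hexp]
    obtain ⟨p, hp, h1, h2⟩ := Nat.Prime.not_coprime_iff_dvd.1 (hcon j hj)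
    have hpm : p ∈ D.primeFactors := Nat.mem_primeFactors.2 ⟨hp, h2, hD.ne'⟩
    exact Finset.prod_eq_zero hpm (by rw [((hζ p hpm).pow_eq_one_iff_dvd _).2 h1, sub_self])
  -- An integer at least `a` that is `1` modulo `D`.
  have hle : a ≤ a * D + 1 := by nlinarith
  have h := hzero (a * D + 1 - a)
  rw [Nat.add_sub_cancel' hle, Finset.prod_eq_zero_iff] at h
  obtain ⟨p, hp, h⟩ := h
  have hpd : p ∣ a * D + 1 :=
    ((hζ p hp).pow_eq_one_iff_dvd _).1 (sub_eq_zero.1 h).symm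
  have h1 : p ∣ 1 :=
    (Nat.dvd_add_right ((Nat.dvd_of_mem_primeFactors hp).mul_left a)).1 hpd
  exact (Nat.prime_of_mem_primeFactors hp).one_lt.ne' (Nat.dvd_one.1 h1)

/-- Kanold's bound: any `2 ^ ω(D)` consecutive integers contain one coprime to `D`. -/
lemma exists_coprime_window (D : ℕ) (hD : 0 < D) (a : ℤ) :
    ∃ k : ℤ, a ≤ k ∧ k < a + (2 ^ D.primeFactors.card : ℕ) ∧ IsCoprime k (D : ℤ) := by
  -- Translation by a multiple of `D` makes the window nonnegative.
  have hnn : 0 ≤ a + |a| * D := by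
    have : (1 : ℤ) ≤ D := by exact_mod_cast hD
    nlinarith [neg_abs_le a, abs_nonneg a]
  obtain ⟨b, hb⟩ := Int.eq_ofNat_of_zero_le hnn
  obtain ⟨j, hj, hc⟩ := exists_coprime_window_nat D hD b
  refine ⟨a + j, by omega, by omega, ?_⟩
  have hc' : IsCoprime ((b + j : ℕ) : ℤ) (D : ℤ) := Nat.isCoprime_iff_coprime.2 hc
  have he : ((b + j : ℕ) : ℤ) = (a + j) + |a| * D := by push_cast; linarith
  rw [he] at hc'
  exact (IsCoprime.add_mul_right_left_iff).1 hc'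

lemma jacobsthal_spec (D : ℕ) (hD : 0 < D) (a : ℤ) :
    ∃ k : ℤ, a ≤ k ∧ k < a + jacobsthal D ∧ IsCoprime k (D : ℤ) :=
  (Nat.sInf_mem (s := {J : ℕ | 0 < J ∧ ∀ a : ℤ, ∃ k : ℤ, a ≤ k ∧ k < a + J ∧
    IsCoprime k (D : ℤ)}) ⟨_, by positivity, exists_coprime_window D hD⟩).2 a

lemma jacobsthal_le (D : ℕ) (hD : 0 < D) : jacobsthal D ≤ 2 ^ D.primeFactors.card :=
  Nat.sInf_le ⟨by positivity, exists_coprime_window D hD⟩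

/-- Each prime factor `p ≥ 4` of `D` absorbs a factor `4`; the primes `2, 3` cost at most `4 ^ 2`. -/
lemma four_pow_card_primeFactors_le (D : ℕ) (hD : 0 < D) :
    4 ^ D.primeFactors.card ≤ 16 * D := by
  have hsmall : (D.primeFactors.filter (· < 4)).card ≤ 2 := by
    have : D.primeFactors.filter (· < 4) ⊆ {2, 3} := by
      intro p hp
      rw [Finset.mem_filter] at hp
      have := (Nat.prime_of_mem_primeFactors hp.1).two_le
      simp only [Finset.mem_insert, Finset.mem_singleton]
      omega
    exact (Finset.card_le_card this).trans (by simp)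
  have hlarge : 4 ^ (D.primeFactors.filter (¬ · < 4)).card ≤ D :=
    calc 4 ^ (D.primeFactors.filter (¬ · < 4)).card
        ≤ ∏ p ∈ D.primeFactors.filter (¬ · < 4), p := by
          refine Finset.pow_card_le_prod _ _ _ fun p hp => ?_
          have := (Finset.mem_filter.1 hp).2
          omega
      _ ≤ ∏ p ∈ D.primeFactors, p :=
          Finset.prod_le_prod_of_subset_of_one_le' (Finset.filter_subset _ _)
            fun p hp _ => (Nat.prime_of_mem_primeFactors hp).one_le
      _ ≤ D := Nat.le_of_dvd hD (Nat.prod_primeFactors_dvd D)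
  rw [← Finset.card_filter_add_card_filter_not (s := D.primeFactors) (· < 4), pow_add]
  exact Nat.mul_le_mul ((Nat.pow_le_pow_right (by norm_num) hsmall).trans (by norm_num)) hlarge

lemma jacobsthal_sq_le (D : ℕ) (hD : 0 < D) : jacobsthal D ^ 2 ≤ 16 * D :=
  calc jacobsthal D ^ 2 ≤ (2 ^ D.primeFactors.card) ^ 2 :=
        Nat.pow_le_pow_left (jacobsthal_le D hD) 2
    _ = 4 ^ D.primeFactors.card := by rw [← pow_mul, mul_comm, pow_mul]; norm_num
    _ ≤ 16 * D := four_pow_card_primeFactors_le D hD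

/-- `J(D) = o(D)`. -/
lemma exists_mul_jacobsthal_lt (K c : ℝ) (hc : 0 < c) :
    ∃ D0 : ℕ, ∀ D : ℕ, D0 ≤ D → 0 < D → K * jacobsthal D < c * D := by
  obtain ⟨N, hN⟩ := exists_nat_gt (16 * K ^ 2 / c ^ 2)
  refine ⟨N, fun D hND hD => ?_⟩
  have hJ : (jacobsthal D : ℝ) ^ 2 ≤ 16 * D := by exact_mod_cast jacobsthal_sq_le D hD
  have hDr : (0 : ℝ) < D := by exact_mod_cast hD
  have hlt : 16 * K ^ 2 < D * c ^ 2 := by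
    rw [← div_lt_iff₀ (by positivity)]
    exact hN.trans_le (by exact_mod_cast hND)
  refine lt_of_pow_lt_pow_left₀ 2 (by positivity) ?_
  calc (K * jacobsthal D) ^ 2 = K ^ 2 * (jacobsthal D : ℝ) ^ 2 := by ring
    _ ≤ K ^ 2 * (16 * D) := by gcongr
    _ = 16 * K ^ 2 * D := by ring
    _ < D * c ^ 2 * D := by gcongr
    _ = (c * D) ^ 2 := by ring

/-- **Lemma `lem: euclid2`.** -/
theorem stmt14 (i1 i2 : ℕ) (h1 : 0 < i1) (h2 : 0 < i2) (hco : Nat.Coprime i1 i2)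
    (r1 r2 : ℝ) (hr1 : 0 < r1) (hr2 : 0 < r2) :
    ∃ D0 : ℕ, ∀ D : ℕ, D0 ≤ D →
      ∃ d1 d2 : ℕ, 0 < d1 ∧ 0 < d2 ∧ Nat.Coprime d1 d2 ∧ D = i1 * d1 + i2 * d2 ∧
        |(d1 : ℝ) - r1 * D / (i1 * r1 + i2 * r2)| ≤ i2 * jacobsthal D ∧
        |(d2 : ℝ) - r2 * D / (i1 * r1 + i2 * r2)| ≤ i1 * jacobsthal D := by
  have h1r : (0 : ℝ) < i1 := by exact_mod_cast h1
  have h2r : (0 : ℝ) < i2 := by exact_mod_cast h2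
  set S : ℝ := i1 * r1 + i2 * r2 with hS
  have hSpos : 0 < S := by positivity
  obtain ⟨N1, hN1⟩ := exists_mul_jacobsthal_lt i2 (r1 / S) (by positivity)
  obtain ⟨N2, hN2⟩ := exists_mul_jacobsthal_lt i1 (r2 / S) (by positivity)
  refine ⟨N1 + N2 + 1, fun D hD => ?_⟩
  have hDpos : 0 < D := by omega
  have hp1 := hN1 D (by omega) hDpos
  have hp2 := hN2 D (by omega) hDpos
  obtain ⟨u, v, huv⟩ : IsCoprime (i1 : ℤ) (i2 : ℤ) := Nat.isCoprime_iff_coprime.2 hco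
  have huvr : (u : ℝ) * i1 + v * i2 = 1 := by exact_mod_cast huv
  set t₀ : ℝ := (r1 * D / S - u * D) / i2 with ht₀
  obtain ⟨t, hta, htb, htc⟩ := jacobsthal_spec D hDpos ⌈t₀⌉
  have hlo : t₀ ≤ t := (Int.le_ceil t₀).trans (by exact_mod_cast hta)
  have hhi : (t : ℝ) ≤ t₀ + jacobsthal D := by
    have h3 : (t : ℝ) + 1 ≤ ⌈t₀⌉ + jacobsthal D := by exact_mod_cast htb
    linarith [Int.ceil_lt_add_one t₀]
  have ht₀mul : i2 * t₀ = r1 * D / S - u * D := by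
    rw [ht₀]; field_simp
  have hx : (u * D + i2 * t : ℝ) - r1 * D / S = i2 * (t - t₀) := by
    linear_combination ht₀mul
  have hsum : i1 * (r1 * D / S) + i2 * (r2 * D / S) = (D : ℝ) := by
    rw [hS] at hSpos ⊢; field_simp
  have hy : (v * D - i1 * t : ℝ) - r2 * D / S = - (i1 * (t - t₀)) := by
    refine mul_left_cancel₀ h2r.ne' ?_
    linear_combination D * huvr - hsum - i1 * ht₀mul
  have hxa : |(u * D + i2 * t : ℝ) - r1 * D / S| ≤ i2 * jacobsthal D := by
    rw [hx, abs_of_nonneg (mul_nonneg h2r.le (by linarith))]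
    gcongr
    linarith
  have hya : |(v * D - i1 * t : ℝ) - r2 * D / S| ≤ i1 * jacobsthal D := by
    rw [hy, abs_neg, abs_of_nonneg (mul_nonneg h1r.le (by linarith))]
    gcongr
    linarith
  have hxpos : 0 < u * D + i2 * t := by
    have : (0 : ℝ) < u * D + i2 * t := by
      have := (abs_le.1 hxa).1
      rw [div_mul_eq_mul_div] at hp1
      linarith
    exact_mod_cast this
  have hypos : 0 < v * D - i1 * t := by
    have : (0 : ℝ) < v * D - i1 * t := by
      have := (abs_le.1 hya).1
      rw [div_mul_eq_mul_div] at hp2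
      linarith
    exact_mod_cast this
  -- Inverting the unimodular substitution: `D = i1 x + i2 y` and `t = v x - u y`.
  have hcop : IsCoprime (u * D + i2 * t) (v * D - i1 * t) := by
    obtain ⟨α, β, hαβ⟩ := htc
    refine ⟨α * v + β * i1, β * i2 - α * u, ?_⟩
    linear_combination hαβ + (α * t + β * D) * huv
  obtain ⟨d1, hd1⟩ := Int.eq_ofNat_of_zero_le hxpos.le
  obtain ⟨d2, hd2⟩ := Int.eq_ofNat_of_zero_le hypos.le
  have hd1r : (u * D + i2 * t : ℝ) = d1 := by exact_mod_cast hd1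
  have hd2r : (v * D - i1 * t : ℝ) = d2 := by exact_mod_cast hd2
  rw [hd1] at hxpos
  rw [hd2] at hypos
  rw [hd1, hd2] at hcop
  rw [hd1r] at hxa
  rw [hd2r] at hya
  refine ⟨d1, d2, by exact_mod_cast hxpos, by exact_mod_cast hypos,
    Nat.isCoprime_iff_coprime.1 hcop, ?_, hxa, hya⟩
  have : (D : ℤ) = i1 * d1 + i2 * d2 := by
    linear_combination (-D : ℤ) * huv + i1 * hd1 + i2 * hd2
  exact_mod_cast this
end
end
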